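/- arXiv:1807.08672 — 3 statements merged into one kernel-verified Lean document; each statement's English description precedes it below -/
import Mathlib

section
/- For all z ∈ ℝ, |P(W ≤ z) − Φ(z)| ≤ 2 Σᵢ₌₁ⁿ P(|ξᵢ| > (1 ∨ |z|)/4) + C₂ (1 + |z|)^{−2} (β₂ + β₃), where one may take C₂ = 15 if β₂ + β₃ ≥ 1; C₂ = 37 if β₂ + β₃ < 1 and |z| ≤ 2; and C₂ = 25431 if β₂ + β₃ < 1 and |z| > 2. -/
open MeasureTheory ProbabilityTheory Real

/-- The standard normal cumulative distribution function. -/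
noncomputable def Phi (z : ℝ) : ℝ :=
  (Real.sqrt (2 * Real.pi))⁻¹ * ∫ u in Set.Iic z, Real.exp (-u ^ 2 / 2)

/-- The bounded solution `f_z` of the Stein equation
`f'(w) - w f(w) = 1{w ≤ z} - Φ(z)`. -/
noncomputable def fz (z w : ℝ) : ℝ :=
  if w ≤ z then Real.sqrt (2 * Real.pi) * Real.exp (w ^ 2 / 2) * Phi w * (1 - Phi z)
  else Real.sqrt (2 * Real.pi) * Real.exp (w ^ 2 / 2) * Phi z * (1 - Phi w)

/-- The derivative `f_z'`, expressed via the Stein equation. -/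
noncomputable def fz' (z w : ℝ) : ℝ :=
  w * fz z w + (if w ≤ z then 1 else 0) - Phi z

/-- The truncation `x̄ᵢ = ξᵢ 1{ξᵢ ≤ 1}`. -/
noncomputable def xbar {Ω : Type*} {n : ℕ} (ξ : Fin n → Ω → ℝ) (i : Fin n) (ω : Ω) : ℝ :=
  if ξ i ω ≤ 1 then ξ i ω else 0

/-- `W̄ = ∑ᵢ x̄ᵢ`. -/
noncomputable def Wbar {Ω : Type*} {n : ℕ} (ξ : Fin n → Ω → ℝ) (ω : Ω) : ℝ :=
  ∑ i, xbar ξ i ω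

/-- `W̄⁽ⁱ⁾ = W̄ - x̄ᵢ`. -/
noncomputable def Wbari {Ω : Type*} {n : ℕ} (ξ : Fin n → Ω → ℝ) (i : Fin n) (ω : Ω) : ℝ :=
  Wbar ξ ω - xbar ξ i ω

/-- `K̄ᵢ(t) = E[x̄ᵢ (1{0 ≤ t ≤ x̄ᵢ} - 1{x̄ᵢ ≤ t < 0})]`. -/
noncomputable def Kbar {Ω : Type*} [MeasureSpace Ω] {n : ℕ} (ξ : Fin n → Ω → ℝ)
    (i : Fin n) (t : ℝ) : ℝ :=
  ∫ ω, xbar ξ i ω * ((if 0 ≤ t ∧ t ≤ xbar ξ i ω then (1 : ℝ) else 0)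
    - (if xbar ξ i ω ≤ t ∧ t < 0 then (1 : ℝ) else 0))

/-- `β₂ = ∑ᵢ E[ξᵢ² 1{|ξᵢ| > 1}]`. -/
noncomputable def beta2 {Ω : Type*} [MeasureSpace Ω] {n : ℕ} (ξ : Fin n → Ω → ℝ) : ℝ :=
  ∑ i, ∫ ω, (if 1 < |ξ i ω| then (ξ i ω) ^ 2 else 0)

/-- `β₃ = ∑ᵢ E[|ξᵢ|³ 1{|ξᵢ| ≤ 1}]`. -/
noncomputable def beta3 {Ω : Type*} [MeasureSpace Ω] {n : ℕ} (ξ : Fin n → Ω → ℝ) : ℝ :=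
  ∑ i, ∫ ω, (if |ξ i ω| ≤ 1 then |ξ i ω| ^ 3 else 0)


open MeasureTheory ProbabilityTheory Real

/-! ### Gaussian integrals and Mills ratio bounds -/

noncomputable def gam (u : ℝ) : ℝ := Real.exp (-u ^ 2 / 2)

lemma gam_pos (u : ℝ) : 0 < gam u := Real.exp_pos _

lemma gam_le_one (u : ℝ) : gam u ≤ 1 := by
  unfold gam; apply Real.exp_le_one_iff.2; nlinarith [sq_nonneg u]

lemma gam_neg (u : ℝ) : gam (-u) = gam u := by simp [gam]

lemma gam_cont : Continuous gam := by unfold gam; fun_prop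

lemma gam_eq : gam = fun u : ℝ => Real.exp (-(1/2) * u ^ 2) := by
  funext u; unfold gam; congr 1; ring

lemma gam_int : Integrable gam := by
  rw [gam_eq]; exact integrable_exp_neg_mul_sq (by norm_num)

lemma gam_integral : ∫ u, gam u = √(2 * π) := by
  rw [gam_eq, integral_gaussian]; congr 1; field_simp

lemma gam_deriv (u : ℝ) : HasDerivAt gam (-u * gam u) u := by
  have h : HasDerivAt (fun u : ℝ => -u ^ 2 / 2) (-u) u := by
    have := ((hasDerivAt_pow 2 u).neg).div_const 2
    exact this.congr_deriv (by push_cast; ring)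
  have := h.exp
  unfold gam
  convert this using 1; ring

lemma exp_mul_gam (w : ℝ) : Real.exp (w ^ 2 / 2) * gam w = 1 := by
  unfold gam; rw [← Real.exp_add]; simp; ring

lemma sqrt2pi_pos : 0 < √(2 * π) := by positivity

lemma sqrt2pi_lo : (2.5065 : ℝ) ≤ √(2 * π) := by
  apply Real.le_sqrt_of_sq_le
  nlinarith [Real.pi_gt_d4]

lemma sqrt2pi_hi : √(2 * π) ≤ 2.51 := by
  rw [Real.sqrt_le_left (by norm_num)]
  nlinarith [Real.pi_lt_d4]

lemma mills_super (w : ℝ) (q q' : ℝ → ℝ) (hq : ∀ u, w ≤ u → HasDerivAt q (q' u) u)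
    (hq0 : ∀ u, w ≤ u → 0 ≤ q u) (hq1 : ∀ u, w ≤ u → 1 ≤ u * q u - q' u) :
    ∫ u in Set.Ioi w, gam u ≤ q w * gam w := by
  have hd : ∀ u, w ≤ u → HasDerivAt (fun R => q R * gam R + ∫ v in w..R, gam v)
      (q' u * gam u + q u * (-u * gam u) + gam u) u := by
    intro u hu
    exact ((hq u hu).mul (gam_deriv u)).add
      (gam_cont.integral_hasStrictDerivAt w u).hasDerivAt
  have hanti : AntitoneOn (fun R => q R * gam R + ∫ v in w..R, gam v) (Set.Ici w) := by
    apply antitoneOn_of_deriv_nonpos (convex_Ici w)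
    · intro u hu; exact (hd u hu).continuousAt.continuousWithinAt
    · intro u hu
      rw [interior_Ici] at hu
      exact (hd u (le_of_lt hu)).differentiableAt.differentiableWithinAt
    · intro u hu
      rw [interior_Ici] at hu
      rw [(hd u (le_of_lt hu)).deriv]
      have := hq1 u (le_of_lt hu)
      have := gam_pos u
      nlinarith
  have ht := intervalIntegral_tendsto_integral_Ioi w (gam_int.integrableOn) Filter.tendsto_id
  apply le_of_tendsto ht
  filter_upwards [Filter.eventually_ge_atTop w] with R hR
  have h1 := hanti (Set.mem_Ici.2 le_rfl) (Set.mem_Ici.2 hR) hR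
  simp only [intervalIntegral.integral_same, add_zero] at h1
  have := mul_nonneg (hq0 R hR) (gam_pos R).le
  simp only [id]
  linarith

/-- Mills ratio -/
noncomputable def mil (w : ℝ) : ℝ := Real.exp (w ^ 2 / 2) * ∫ u in Set.Ioi w, gam u

lemma mil_nonneg (w : ℝ) : 0 ≤ mil w := by
  unfold mil
  exact mul_nonneg (Real.exp_pos _).le (setIntegral_nonneg measurableSet_Ioi fun u _ => (gam_pos u).le)

lemma mil_le_of (w q : ℝ) (h : ∫ u in Set.Ioi w, gam u ≤ q * gam w) : mil w ≤ q := by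
  unfold mil
  calc _ ≤ Real.exp (w ^ 2 / 2) * (q * gam w) := by gcongr
    _ = q * (Real.exp (w ^ 2 / 2) * gam w) := by ring
    _ = q := by rw [exp_mul_gam, mul_one]

lemma mil_poly (w : ℝ) (hw : 0 ≤ w) : mil w ≤ 3/2 - w + w ^ 2 / 4 := by
  apply mil_le_of
  apply mills_super w (fun w => 3/2 - w + w ^ 2 / 4) (fun u => -1 + u / 2)
  · intro u _
    have := ((hasDerivAt_id u).const_sub (3/2)).add (((hasDerivAt_pow 2 u)).div_const 4)
    exact this.congr_deriv (by push_cast; ring)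
  · intro u _; nlinarith [sq_nonneg (u - 2)]
  · intro u hu
    have h0 : 0 ≤ u := hw.trans hu
    have : 0 ≤ u * (1 - u/2) ^ 2 := by positivity
    nlinarith

lemma mul_mil_le (w : ℝ) (hw : 0 ≤ w) : w * mil w ≤ 1 := by
  rcases hw.eq_or_lt with rfl | hw
  · simp
  have : mil w ≤ w⁻¹ := by
    apply mil_le_of
    apply mills_super w (fun w => w⁻¹) (fun u => -(u ^ 2)⁻¹)
    · intro u hu; exact hasDerivAt_inv (hw.trans_le hu).ne'
    · intro u hu; exact (inv_pos.2 (hw.trans_le hu)).le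
    · intro u hu
      rw [mul_inv_cancel₀ (hw.trans_le hu).ne']
      have : 0 ≤ (u ^ 2)⁻¹ := by positivity
      linarith
  calc w * mil w ≤ w * w⁻¹ := by gcongr
    _ = 1 := mul_inv_cancel₀ hw.ne'

lemma mil_le (w : ℝ) (hw : 0 ≤ w) : mil w ≤ 3/2 := by
  by_cases h : w ≤ 2
  · have := mil_poly w hw; nlinarith
  · push Not at h
    have := mul_mil_le w hw
    have := mil_nonneg w
    nlinarith

lemma gam_Iic (w : ℝ) : ∫ u in Set.Iic w, gam u = ∫ u in Set.Ioi (-w), gam u := by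
  rw [← integral_comp_neg_Iic]; simp [gam_neg]

lemma mil_Iic (w : ℝ) : Real.exp (w ^ 2 / 2) * ∫ u in Set.Iic w, gam u = mil (-w) := by
  rw [gam_Iic]; unfold mil; simp

/-! ### Stein solution for a continuous decreasing test function -/

noncomputable def NN (h : ℝ → ℝ) : ℝ := (√(2 * π))⁻¹ * ∫ u, h u * gam u

noncomputable def sf (h : ℝ → ℝ) (w : ℝ) : ℝ :=
  Real.exp (w ^ 2 / 2) * ∫ u in Set.Iic w, (h u - NN h) * gam u

noncomputable def sf' (h : ℝ → ℝ) (w : ℝ) : ℝ := w * sf h w + h w - NN h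

structure TF (h : ℝ → ℝ) : Prop where
  cont : Continuous h
  anti : Antitone h
  nn : ∀ w, 0 ≤ h w
  le1 : ∀ w, h w ≤ 1

namespace TF
variable {h : ℝ → ℝ}

lemma int (H : TF h) : Integrable (fun u => h u * gam u) := by
  apply gam_int.mono (H.cont.mul gam_cont).aestronglyMeasurable
  filter_upwards with u
  show ‖h u * gam u‖ ≤ _
  rw [norm_mul, Real.norm_of_nonneg (H.nn u)]
  have := norm_nonneg (gam u)
  nlinarith [H.le1 u, H.nn u]

lemma int2 (H : TF h) (N : ℝ) : Integrable (fun u => (h u - N) * gam u) := by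
  simp_rw [sub_mul]
  exact H.int.sub (gam_int.const_mul N)

lemma NN_nonneg (H : TF h) : 0 ≤ NN h := by
  unfold NN
  exact mul_nonneg (by positivity) (integral_nonneg fun u => mul_nonneg (H.nn u) (gam_pos u).le)

lemma NN_le (H : TF h) : NN h ≤ 1 := by
  unfold NN
  have : ∫ u, h u * gam u ≤ √(2 * π) := by
    rw [← gam_integral]
    apply integral_mono H.int gam_int
    intro u; have := gam_pos u; have := H.le1 u; simp only; nlinarith
  calc _ ≤ (√(2 * π))⁻¹ * √(2 * π) := by gcongr
    _ = 1 := inv_mul_cancel₀ sqrt2pi_pos.ne'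

lemma total (H : TF h) : ∫ u, (h u - NN h) * gam u = 0 := by
  simp_rw [sub_mul]
  rw [integral_sub H.int (gam_int.const_mul _), integral_const_mul, gam_integral]
  unfold NN
  have := sqrt2pi_pos.ne'
  field_simp
  ring

lemma sf_right (H : TF h) (w : ℝ) :
    sf h w = Real.exp (w ^ 2 / 2) * ∫ u in Set.Ioi w, (NN h - h u) * gam u := by
  unfold sf
  congr 1
  have h1 := intervalIntegral.integral_Iic_add_Ioi (b := w) (H.int2 (NN h)).integrableOn
    (H.int2 (NN h)).integrableOn
  rw [H.total] at h1
  have h2 : ∫ u in Set.Ioi w, (NN h - h u) * gam u = - ∫ u in Set.Ioi w, (h u - NN h) * gam u := by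
    rw [← integral_neg]; congr 1; ext u; ring
  linarith

lemma hasDeriv (H : TF h) (w : ℝ) : HasDerivAt (sf h) (sf' h w) w := by
  have hc : Continuous (fun u => (h u - NN h) * gam u) :=
    (H.cont.sub continuous_const).mul gam_cont
  have e : sf h = fun w => Real.exp (w ^ 2 / 2) * ((∫ u in Set.Iic 0, (h u - NN h) * gam u)
      + ∫ u in (0:ℝ)..w, (h u - NN h) * gam u) := by
    funext w
    unfold sf
    rw [← intervalIntegral.integral_Iic_sub_Iic (H.int2 _).integrableOn (H.int2 _).integrableOn,
      add_sub_cancel]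
  have h1 : HasDerivAt (fun w : ℝ => Real.exp (w ^ 2 / 2)) (w * Real.exp (w ^ 2 / 2)) w := by
    have := ((hasDerivAt_pow 2 w).div_const 2).exp
    convert this using 1; simp; ring
  have h2 := (hc.integral_hasStrictDerivAt 0 w).hasDerivAt.const_add
    (∫ u in Set.Iic 0, (h u - NN h) * gam u)
  have h3 := h1.mul h2
  have e2 : sf' h w = w * Real.exp (w ^ 2 / 2) * ((∫ u in Set.Iic 0, (h u - NN h) * gam u)
      + ∫ u in (0:ℝ)..w, (h u - NN h) * gam u) + Real.exp (w ^ 2 / 2) * ((h w - NN h) * gam w) := by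
    unfold sf'
    rw [e]
    have := exp_mul_gam w
    linear_combination (- (h w - NN h)) * this
  rw [e2, e]
  exact h3

lemma sf_cont (H : TF h) : Continuous (sf h) :=
  continuous_iff_continuousAt.2 fun w => (H.hasDeriv w).continuousAt

lemma sf'_cont (H : TF h) : Continuous (sf' h) := by
  unfold sf'
  exact ((continuous_id.mul H.sf_cont).add H.cont).sub continuous_const

lemma right_le (H : TF h) (w : ℝ) : sf h w ≤ NN h * mil w := by
  rw [H.sf_right, mil]
  have : ∫ u in Set.Ioi w, (NN h - h u) * gam u ≤ ∫ u in Set.Ioi w, NN h * gam u := by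
    apply setIntegral_mono_on _ (gam_int.const_mul _).integrableOn measurableSet_Ioi
    · intro u _; have := gam_pos u; have := H.nn u; nlinarith
    · have := (H.int2 (NN h)).neg.integrableOn (s := Set.Ioi w)
      refine this.congr_fun (fun u _ => ?_) measurableSet_Ioi
      simp; ring
  rw [integral_const_mul] at this
  calc _ ≤ Real.exp (w ^ 2 / 2) * (NN h * ∫ u in Set.Ioi w, gam u) := by gcongr
    _ = _ := by ring

lemma right_ge (H : TF h) (w : ℝ) : (NN h - h w) * mil w ≤ sf h w := by
  rw [H.sf_right, mil]
  have : ∫ u in Set.Ioi w, (NN h - h w) * gam u ≤ ∫ u in Set.Ioi w, (NN h - h u) * gam u := by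
    apply setIntegral_mono_on (gam_int.const_mul _).integrableOn _ measurableSet_Ioi
    · intro u hu; have := gam_pos u; have := H.anti (le_of_lt hu); nlinarith
    · have := (H.int2 (NN h)).neg.integrableOn (s := Set.Ioi w)
      refine this.congr_fun (fun u _ => ?_) measurableSet_Ioi
      simp; ring
  rw [integral_const_mul] at this
  calc _ = Real.exp (w ^ 2 / 2) * ((NN h - h w) * ∫ u in Set.Ioi w, gam u) := by ring
    _ ≤ _ := by gcongr

lemma left_le (H : TF h) (w : ℝ) : sf h w ≤ (1 - NN h) * mil (-w) := by
  rw [← mil_Iic]; unfold sf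
  have : ∫ u in Set.Iic w, (h u - NN h) * gam u ≤ ∫ u in Set.Iic w, (1 - NN h) * gam u := by
    apply setIntegral_mono_on (H.int2 _).integrableOn (gam_int.const_mul _).integrableOn measurableSet_Iic
    intro u _; have := gam_pos u; have := H.le1 u; nlinarith
  rw [integral_const_mul] at this
  calc _ ≤ Real.exp (w ^ 2 / 2) * ((1 - NN h) * ∫ u in Set.Iic w, gam u) := by gcongr
    _ = _ := by ring

lemma left_ge (H : TF h) (w : ℝ) : (h w - NN h) * mil (-w) ≤ sf h w := by
  rw [← mil_Iic]; unfold sf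
  have : ∫ u in Set.Iic w, (h w - NN h) * gam u ≤ ∫ u in Set.Iic w, (h u - NN h) * gam u := by
    apply setIntegral_mono_on (gam_int.const_mul _).integrableOn (H.int2 _).integrableOn measurableSet_Iic
    intro u hu; have := gam_pos u; have := H.anti hu; nlinarith
  rw [integral_const_mul] at this
  calc _ = Real.exp (w ^ 2 / 2) * ((h w - NN h) * ∫ u in Set.Iic w, gam u) := by ring
    _ ≤ _ := by gcongr

lemma abs_sf_le_mil (H : TF h) (w : ℝ) : |sf h w| ≤ mil |w| := by
  have n0 := H.NN_nonneg
  have n1 := H.NN_le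
  have a0 := H.nn w
  have a1 := H.le1 w
  rcases le_total 0 w with hw | hw
  · rw [abs_of_nonneg hw]
    have := H.right_le w
    have := H.right_ge w
    have := mil_nonneg w
    rw [abs_le]; constructor <;> nlinarith
  · rw [abs_of_nonpos hw]
    have := H.left_le w
    have := H.left_ge w
    have := mil_nonneg (-w)
    rw [abs_le]; constructor <;> nlinarith

lemma abs_sf_le (H : TF h) (w : ℝ) : |sf h w| ≤ 3/2 :=
  (H.abs_sf_le_mil w).trans (mil_le _ (abs_nonneg _))

lemma abs_sf'_le (H : TF h) (w : ℝ) : |sf' h w| ≤ 1 := by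
  have n0 := H.NN_nonneg
  have n1 := H.NN_le
  have a0 := H.nn w
  have a1 := H.le1 w
  unfold sf'
  rcases le_total 0 w with hw | hw
  · have h1 := mul_le_mul_of_nonneg_left (H.right_le w) hw
    have h2 := mul_le_mul_of_nonneg_left (H.right_ge w) hw
    have h3 := mul_mil_le w hw
    have h4 := mul_nonneg hw (mil_nonneg w)
    generalize hp : w * mil w = p at *
    have e1 : w * (NN h * mil w) = NN h * p := by rw [← hp]; ring
    have e2 : w * ((NN h - h w) * mil w) = (NN h - h w) * p := by rw [← hp]; ring
    rw [e1] at h1; rw [e2] at h2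
    rw [abs_le]; constructor <;> nlinarith
  · have hw' : 0 ≤ -w := by linarith
    have h1 := mul_le_mul_of_nonneg_left (H.left_le w) hw'
    have h2 := mul_le_mul_of_nonneg_left (H.left_ge w) hw'
    have h3 := mul_mil_le (-w) hw'
    have h4 := mul_nonneg hw' (mil_nonneg (-w))
    generalize hp : -w * mil (-w) = p at *
    have e1 : -w * ((1 - NN h) * mil (-w)) = (1 - NN h) * p := by rw [← hp]; ring
    have e2 : -w * ((h w - NN h) * mil (-w)) = (h w - NN h) * p := by rw [← hp]; ring
    rw [e1] at h1; rw [e2] at h2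
    rw [abs_le]; constructor <;> nlinarith

lemma abs_g'_le (H : TF h) (w : ℝ) : |sf h w + w * sf' h w| ≤ 3/2 + w ^ 2 / 4 := by
  have h1 := H.abs_sf_le_mil w
  have h2 := H.abs_sf'_le w
  have h3 := mil_poly |w| (abs_nonneg _)
  have h4 : |w * sf' h w| ≤ |w| := by
    rw [abs_mul]; exact mul_le_of_le_one_right (abs_nonneg _) h2
  rw [sq_abs] at h3
  linarith [abs_add_le (sf h w) (w * sf' h w)]

lemma hasDeriv_g (H : TF h) (w : ℝ) :
    HasDerivAt (fun w => w * sf h w) (sf h w + w * sf' h w) w := by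
  have := (hasDerivAt_id w).mul (H.hasDeriv w)
  exact this.congr_deriv (by simp)

end TF

open MeasureTheory ProbabilityTheory Real

/-! ### The smoothed indicator -/

noncomputable def hsm (c δ w : ℝ) : ℝ := max 0 (min 1 ((c + δ - w) / δ))

lemma hsm_TF (c δ : ℝ) (hδ : 0 < δ) : TF (hsm c δ) where
  cont := by unfold hsm; fun_prop
  anti := by
    intro a b hab
    unfold hsm
    gcongr
  nn := fun w => le_max_left _ _
  le1 := fun w => max_le (by norm_num) (min_le_left _ _)

lemma hsm_one (c δ w : ℝ) (hδ : 0 < δ) (hw : w ≤ c) : hsm c δ w = 1 := by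
  unfold hsm
  rw [min_eq_left, max_eq_right] <;> try norm_num
  rw [le_div_iff₀ hδ]; linarith

lemma hsm_zero (c δ w : ℝ) (hδ : 0 < δ) (hw : c + δ ≤ w) : hsm c δ w = 0 := by
  unfold hsm
  have : (c + δ - w) / δ ≤ 0 := div_nonpos_of_nonpos_of_nonneg (by linarith) hδ.le
  rw [max_eq_left]
  exact (min_le_right _ _).trans this

lemma hsm_mid (c δ w : ℝ) (hδ : 0 < δ) (h1 : c ≤ w) (h2 : w ≤ c + δ) :
    hsm c δ w = (c + δ - w) / δ := by
  unfold hsm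
  have : (c + δ - w) / δ ≤ 1 := by rw [div_le_iff₀ hδ]; linarith
  have : 0 ≤ (c + δ - w) / δ := div_nonneg (by linarith) hδ.le
  rw [min_eq_right, max_eq_right] <;> assumption

lemma hsm_diff (c δ v s t : ℝ) (hδ : 0 < δ) (hst : s ≤ t) :
    |hsm c δ (v + s) - hsm c δ (v + t)| ≤
      δ⁻¹ * ∫ u in Set.Ioc s t, Set.indicator (Set.Icc c (c + δ)) (fun _ => (1 : ℝ)) (v + u) := by
  have e : (fun u => Set.indicator (Set.Icc c (c + δ)) (fun _ => (1 : ℝ)) (v + u))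
      = Set.indicator (Set.Icc (c - v) (c + δ - v)) (fun _ => (1:ℝ)) := by
    funext u
    by_cases hu : u ∈ Set.Icc (c - v) (c + δ - v)
    · rw [Set.indicator_of_mem hu, Set.indicator_of_mem]
      constructor <;> linarith [hu.1, hu.2]
    · rw [Set.indicator_of_notMem hu, Set.indicator_of_notMem]
      intro h; apply hu; constructor <;> linarith [h.1, h.2]
  rw [e, setIntegral_indicator measurableSet_Icc, setIntegral_const, smul_eq_mul, mul_one]
  have hsub : Set.Ioc (max s (c - v)) (min t (c + δ - v)) ⊆
      Set.Ioc s t ∩ Set.Icc (c - v) (c + δ - v) := by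
    intro u hu
    obtain ⟨h1, h2⟩ := hu
    rw [max_lt_iff] at h1
    rw [le_min_iff] at h2
    exact ⟨⟨h1.1, h2.1⟩, ⟨h1.2.le, h2.2⟩⟩
  have hm : volume.real (Set.Ioc (max s (c - v)) (min t (c + δ - v))) ≤
      volume.real (Set.Ioc s t ∩ Set.Icc (c - v) (c + δ - v)) := by
    have hfin : volume (Set.Ioc s t ∩ Set.Icc (c - v) (c + δ - v)) ≠ ⊤ :=
      ne_top_of_le_ne_top (b := volume (Set.Ioc s t)) (by simp)
        (measure_mono Set.inter_subset_left)
    exact measureReal_mono hsub hfin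
  rw [Real.volume_real_Ioc] at hm
  have hanti := (hsm_TF c δ hδ).anti (show v + s ≤ v + t by linarith)
  rw [abs_of_nonneg (by linarith)]
  have key : hsm c δ (v + s) - hsm c δ (v + t) ≤
      δ⁻¹ * max (min t (c + δ - v) - max s (c - v)) 0 := by
    rw [← div_eq_inv_mul, le_div_iff₀ hδ]
    rcases le_total (v + s) c with h1 | h1
    · rw [hsm_one c δ _ hδ h1]
      rw [max_eq_right (show s ≤ c - v by linarith)]
      rcases le_total (v + t) c with h2 | h2
      · rw [hsm_one c δ _ hδ h2]; simp
      rcases le_total (v + t) (c + δ) with h3 | h3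
      · rw [hsm_mid c δ _ hδ h2 h3, min_eq_left (by linarith)]
        refine le_trans ?_ (le_max_left _ _)
        rw [sub_mul, div_mul_cancel₀ _ hδ.ne']; linarith
      · rw [hsm_zero c δ _ hδ h3, min_eq_right (by linarith)]
        refine le_trans ?_ (le_max_left _ _)
        linarith
    rcases le_total (v + s) (c + δ) with h1' | h1'
    · rw [hsm_mid c δ _ hδ h1 h1', max_eq_left (show c - v ≤ s by linarith)]
      rcases le_total (v + t) (c + δ) with h3 | h3
      · rw [hsm_mid c δ _ hδ (by linarith) h3, min_eq_left (by linarith)]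
        refine le_trans ?_ (le_max_left _ _)
        rw [sub_mul, div_mul_cancel₀ _ hδ.ne', div_mul_cancel₀ _ hδ.ne']; linarith
      · rw [hsm_zero c δ _ hδ h3, min_eq_right (by linarith)]
        refine le_trans ?_ (le_max_left _ _)
        rw [sub_zero, div_mul_cancel₀ _ hδ.ne']; linarith
    · rw [hsm_zero c δ _ hδ h1', hsm_zero c δ _ hδ (by linarith)]
      simp
  refine key.trans ?_
  gcongr

/-! ### Facts about Phi -/

lemma Phi_eq (z : ℝ) : Phi z = (√(2 * π))⁻¹ * ∫ u in Set.Iic z, gam u := rfl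

lemma Phi_compl (z : ℝ) : 1 - Phi z = (√(2 * π))⁻¹ * ∫ u in Set.Ioi z, gam u := by
  have h1 := intervalIntegral.integral_Iic_add_Ioi (b := z) gam_int.integrableOn gam_int.integrableOn
  rw [gam_integral] at h1
  rw [Phi_eq]
  have := sqrt2pi_pos.ne'
  field_simp
  linarith

lemma Phi_nonneg (z : ℝ) : 0 ≤ Phi z := by
  rw [Phi_eq]
  exact mul_nonneg (by positivity) (setIntegral_nonneg measurableSet_Iic fun u _ => (gam_pos u).le)

lemma Phi_le_one (z : ℝ) : Phi z ≤ 1 := by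
  have : 0 ≤ 1 - Phi z := by
    rw [Phi_compl]
    exact mul_nonneg (by positivity) (setIntegral_nonneg measurableSet_Ioi fun u _ => (gam_pos u).le)
  linarith

lemma Phi_neg (z : ℝ) : Phi (-z) = 1 - Phi z := by
  rw [Phi_compl, Phi_eq, gam_Iic, neg_neg]

lemma inv_sqrt2pi_le : (√(2 * π))⁻¹ ≤ 0.399 := by
  rw [inv_le_comm₀ sqrt2pi_pos (by norm_num)]
  refine le_trans ?_ sqrt2pi_lo
  norm_num

lemma Phi_compl_mil (z : ℝ) : 1 - Phi z = (√(2 * π))⁻¹ * (mil z * gam z) := by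
  rw [Phi_compl, mil]
  congr 1
  have := exp_mul_gam z
  linear_combination (-∫ u in Set.Ioi z, gam u) * this

lemma Phi_tail (z : ℝ) (hz : 0 ≤ z) : 1 - Phi z ≤ 1 / (1 + z ^ 2) := by
  have h1 := mil_poly z hz
  have h2 : gam z ≤ 1 / (1 + z ^ 2 / 2 + z ^ 4 / 8) := by
    unfold gam
    rw [show -z ^ 2 / 2 = -(z ^ 2 / 2) by ring, Real.exp_neg, ← one_div]
    apply one_div_le_one_div_of_le (by positivity)
    have := Real.quadratic_le_exp_of_nonneg (show 0 ≤ z ^ 2 / 2 by positivity)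
    nlinarith
  rw [Phi_compl_mil]
  have h3 : 0 ≤ 3/2 - z + z ^ 2 / 4 := (mil_nonneg z).trans h1
  calc _ ≤ 0.4 * ((3/2 - z + z ^ 2 / 4) * (1 / (1 + z ^ 2 / 2 + z ^ 4 / 8))) := by
        have := inv_sqrt2pi_le
        have := gam_pos z
        have := mil_nonneg z
        gcongr
        linarith
    _ ≤ _ := by
        rw [mul_one_div, ← mul_div_assoc, div_le_div_iff₀ (by positivity) (by positivity)]
        nlinarith [mul_nonneg hz (sq_nonneg (z - 1)), pow_nonneg hz 4, sq_nonneg (z-1),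
          pow_nonneg hz 3, pow_nonneg hz 5, pow_nonneg hz 6]

lemma tri_int (a δ : ℝ) (hδ : 0 < δ) : ∫ u in Set.Ioc a (a + δ), (a + δ - u) / δ = δ / 2 := by
  rw [← intervalIntegral.integral_of_le (by linarith)]
  have : ∀ u ∈ Set.uIcc a (a + δ), HasDerivAt (fun u => -(a + δ - u) ^ 2 / (2 * δ)) ((a + δ - u) / δ) u := by
    intro u _
    have := ((((hasDerivAt_id u).const_sub (a + δ)).pow 2).neg).div_const (2 * δ)
    refine this.congr_deriv ?_
    simp; field_simp
  rw [intervalIntegral.integral_eq_sub_of_hasDerivAt this]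
  · simp; field_simp
  · apply Continuous.intervalIntegrable; fun_prop

lemma tri_int' (a δ : ℝ) (hδ : 0 < δ) : ∫ u in Set.Ioc a (a + δ), (u - a) / δ = δ / 2 := by
  have h := tri_int a δ hδ
  have e : ∀ u : ℝ, (u - a) / δ = 1 - (a + δ - u) / δ := by intro u; field_simp; ring
  simp_rw [e]
  rw [integral_sub, h]
  · simp [hδ.le]; ring
  · exact integrable_const _
  · apply ContinuousOn.integrableOn_Icc (a := a) (b := a + δ) (f := fun u => (a + δ - u) / δ)
      (by fun_prop) |>.mono_set Set.Ioc_subset_Icc_self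

lemma NN_upper (z δ K : ℝ) (hδ : 0 < δ) (hK : ∀ u, z ≤ u → gam u ≤ K) :
    NN (hsm z δ) ≤ Phi z + 0.399 * K * δ / 2 := by
  have H := hsm_TF z δ hδ
  have hK0 : 0 ≤ K := (gam_pos z).le.trans (hK z le_rfl)
  have hi : IntegrableOn (fun u => K * ((z + δ - u) / δ)) (Set.Ioc z (z + δ)) :=
    ContinuousOn.integrableOn_Icc (by fun_prop) |>.mono_set Set.Ioc_subset_Icc_self
  have h1 : ∫ u, hsm z δ u * gam u ≤ ∫ u, (Set.indicator (Set.Iic z) gam u +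
      Set.indicator (Set.Ioc z (z + δ)) (fun u => K * ((z + δ - u) / δ)) u) := by
    apply integral_mono H.int
    · exact (gam_int.indicator measurableSet_Iic).add (hi.integrable_indicator measurableSet_Ioc)
    intro u
    simp only
    rcases le_or_gt u z with hu | hu
    · rw [Set.indicator_of_mem (Set.mem_Iic.2 hu), Set.indicator_of_notMem, hsm_one z δ u hδ hu]
      · simp
      · intro h; exact absurd h.1 (not_lt.2 hu)
    rw [Set.indicator_of_notMem (s := Set.Iic z) (by simpa using hu), zero_add]
    rcases le_or_gt u (z + δ) with hu' | hu'
    · rw [Set.indicator_of_mem (show u ∈ Set.Ioc z (z + δ) from ⟨hu, hu'⟩), hsm_mid z δ u hδ hu.le hu', mul_comm]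
      apply mul_le_mul_of_nonneg_right (hK u hu.le)
      exact div_nonneg (by linarith) hδ.le
    · rw [Set.indicator_of_notMem, hsm_zero z δ u hδ hu'.le]
      · simp
      · intro h; exact absurd h.2 (not_le.2 hu')
  rw [integral_add (gam_int.indicator measurableSet_Iic) (hi.integrable_indicator measurableSet_Ioc),
    integral_indicator measurableSet_Iic, integral_indicator measurableSet_Ioc, integral_const_mul,
    tri_int z δ hδ] at h1
  unfold NN
  rw [Phi_eq]
  calc _ ≤ (√(2 * π))⁻¹ * (∫ u in Set.Iic z, gam u) + (√(2 * π))⁻¹ * (K * (δ / 2)) := by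
        rw [← mul_add]; gcongr
    _ ≤ _ := by
        have := mul_le_mul_of_nonneg_right inv_sqrt2pi_le (show 0 ≤ K * (δ/2) by positivity)
        linarith

lemma NN_lower (z δ K : ℝ) (hδ : 0 < δ) (hK : ∀ u, z ≤ u → gam u ≤ K) :
    Phi (z + δ) ≤ NN (hsm z δ) + 0.399 * K * δ / 2 := by
  have H := hsm_TF z δ hδ
  have hK0 : 0 ≤ K := (gam_pos z).le.trans (hK z le_rfl)
  have hi : IntegrableOn (fun u => K * ((u - z) / δ)) (Set.Ioc z (z + δ)) :=
    ContinuousOn.integrableOn_Icc (by fun_prop) |>.mono_set Set.Ioc_subset_Icc_self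
  have h1 : ∫ u, Set.indicator (Set.Iic (z + δ)) gam u ≤ ∫ u, (hsm z δ u * gam u +
      Set.indicator (Set.Ioc z (z + δ)) (fun u => K * ((u - z) / δ)) u) := by
    apply integral_mono (gam_int.indicator measurableSet_Iic)
    · exact H.int.add (hi.integrable_indicator measurableSet_Ioc)
    intro u
    simp only
    rcases le_or_gt u z with hu | hu
    · rw [Set.indicator_of_mem (Set.mem_Iic.2 (by linarith)), Set.indicator_of_notMem,
        hsm_one z δ u hδ hu]
      · simp
      · intro h; exact absurd h.1 (not_lt.2 hu)
    rcases le_or_gt u (z + δ) with hu' | hu'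
    · rw [Set.indicator_of_mem (Set.mem_Iic.2 hu'), Set.indicator_of_mem (show u ∈ Set.Ioc z (z + δ) from ⟨hu, hu'⟩),
        hsm_mid z δ u hδ hu.le hu']
      have := mul_le_mul_of_nonneg_right (hK u hu.le)
        (show 0 ≤ (u - z) / δ from div_nonneg (by linarith) hδ.le)
      have e : (z + δ - u) / δ = 1 - (u - z) / δ := by field_simp; ring
      rw [e]; linarith
    · rw [Set.indicator_of_notMem (s := Set.Iic (z + δ)) (by simpa using hu'),
        Set.indicator_of_notMem, hsm_zero z δ u hδ hu'.le]
      · simp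
      · intro h; exact absurd h.2 (not_le.2 hu')
  rw [integral_add H.int (hi.integrable_indicator measurableSet_Ioc),
    integral_indicator measurableSet_Iic, integral_indicator measurableSet_Ioc, integral_const_mul,
    tri_int' z δ hδ] at h1
  unfold NN
  rw [Phi_eq]
  calc _ ≤ (√(2 * π))⁻¹ * (∫ u, hsm z δ u * gam u) + (√(2 * π))⁻¹ * (K * (δ / 2)) := by
        rw [← mul_add]; gcongr
    _ ≤ _ := by
        have := mul_le_mul_of_nonneg_right inv_sqrt2pi_le (show 0 ≤ K * (δ/2) by positivity)
        linarith

/-! ### Refined bounds far in the tail -/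

section tail
variable {c δ : ℝ}

lemma one_sub_NN (hδ : 0 < δ) (hc : 0 ≤ c) : 1 - NN (hsm c δ) ≤ gam c := by
  have H := hsm_TF c δ hδ
  have h1 : ∫ u in Set.Iic c, gam u ≤ ∫ u, hsm c δ u * gam u := by
    rw [← integral_indicator measurableSet_Iic]
    apply integral_mono (gam_int.indicator measurableSet_Iic) H.int
    intro u
    simp only
    rcases le_or_gt u c with hu | hu
    · rw [Set.indicator_of_mem (Set.mem_Iic.2 hu), hsm_one c δ u hδ hu, one_mul]
    · rw [Set.indicator_of_notMem (s := Set.Iic c) (by simpa using hu)]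
      exact mul_nonneg (H.nn u) (gam_pos u).le
  have h2 : Phi c ≤ NN (hsm c δ) := by
    rw [Phi_eq]; unfold NN; gcongr
  have h3 := Phi_compl_mil c
  have h4 := mil_le c hc
  have h5 := gam_pos c
  have h6 := mil_nonneg c
  have h7 : (√(2 * π))⁻¹ * (mil c * gam c) ≤ 0.399 * (3/2 * gam c) := by
    have := inv_sqrt2pi_le
    gcongr
  nlinarith

lemma exp_small (hc : 19 ≤ c) : Real.exp (-(3 * c ^ 2 / 8)) ≤ 0.01 / c ^ 4 := by
  have hc0 : 0 < c := by linarith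
  rw [Real.exp_neg, ← one_div, div_le_div_iff₀ (Real.exp_pos _) (by positivity)]
  have h := Real.pow_div_factorial_le_exp (3 * c ^ 2 / 8) (by positivity) 4
  have e : (3 * c ^ 2 / 8) ^ 4 / (Nat.factorial 4 : ℝ) = (81 / 98304) * (c ^ 4 * c ^ 4) := by
    simp [Nat.factorial]; ring
  rw [e] at h
  have h2 : (130321:ℝ) ≤ c ^ 4 := by
    calc (130321:ℝ) = 19 ^ 4 := by norm_num
      _ ≤ c ^ 4 := by gcongr
  nlinarith

lemma sf_small (hδ : 0 < δ) (hc : 19 ≤ c) (w : ℝ) (hw : w ≤ c / 2) :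
    0 ≤ sf (hsm c δ) w ∧ sf (hsm c δ) w ≤ 0.03 / c ^ 4 ∧
    |w * sf (hsm c δ) w| ≤ 0.015 * c / c ^ 4 ∧ 0 ≤ 1 - NN (hsm c δ) ∧ 1 - NN (hsm c δ) ≤ 0.01 / c ^ 4 := by
  have H := hsm_TF c δ hδ
  have hc0 : 0 < c := by linarith
  have h1 := H.left_le w
  have h2 := H.left_ge w
  rw [hsm_one c δ w hδ (by linarith)] at h2
  have n1 := H.NN_le
  have hE := exp_small hc
  have hN := one_sub_NN (c := c) hδ (by linarith)
  have hg : gam c ≤ Real.exp (-(3 * c ^ 2 / 8)) := by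
    unfold gam; apply Real.exp_le_exp.2; nlinarith [sq_nonneg c]
  have m0 := mil_nonneg (-w)
  have f0 : 0 ≤ sf (hsm c δ) w := le_trans (mul_nonneg (by linarith) m0) h2
  have key : sf (hsm c δ) w ≤ 0.03 / c ^ 4 ∧ |w * sf (hsm c δ) w| ≤ 0.015 * c / c ^ 4 := by
    rcases le_total w 0 with hw0 | hw0
    · have h3 := mil_le (-w) (by linarith)
      have h4 := mul_mil_le (-w) (by linarith)
      have hb : sf (hsm c δ) w ≤ 0.01 / c ^ 4 * (3/2) := by
        refine h1.trans ?_
        apply mul_le_mul (by linarith) h3 m0 (by positivity)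
      constructor
      · have e : 0.01 / c ^ 4 * (3/2) = 0.015 / c ^ 4 := by ring
        rw [e] at hb
        refine hb.trans ?_
        gcongr; norm_num
      · rw [abs_mul, abs_of_nonpos hw0, abs_of_nonneg f0]
        calc -w * sf (hsm c δ) w ≤ -w * ((1 - NN (hsm c δ)) * mil (-w)) := by
              apply mul_le_mul_of_nonneg_left h1 (by linarith)
          _ = (1 - NN (hsm c δ)) * (-w * mil (-w)) := by ring
          _ ≤ 0.01 / c ^ 4 * 1 := by
              apply mul_le_mul (by linarith) h4 (mul_nonneg (by linarith) m0) (by positivity)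
          _ = 0.01 / c ^ 4 := by ring
          _ ≤ _ := by gcongr; linarith
    · have hm : mil (-w) ≤ Real.exp (c ^ 2 / 8) * 2.51 := by
        rw [← mil_Iic]
        have : ∫ u in Set.Iic w, gam u ≤ 2.51 := by
          refine le_trans (setIntegral_le_integral gam_int ?_) (gam_integral.le.trans sqrt2pi_hi)
          filter_upwards with u using (gam_pos u).le
        have i0 : 0 ≤ ∫ u in Set.Iic w, gam u :=
          setIntegral_nonneg measurableSet_Iic fun u _ => (gam_pos u).le
        have : Real.exp (w ^ 2 / 2) ≤ Real.exp (c ^ 2 / 8) := by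
          apply Real.exp_le_exp.2; nlinarith
        gcongr
      have hf : sf (hsm c δ) w ≤ 0.0251 / c ^ 4 := by
        calc _ ≤ (1 - NN (hsm c δ)) * mil (-w) := h1
          _ ≤ gam c * (Real.exp (c ^ 2 / 8) * 2.51) := by
              apply mul_le_mul hN hm m0 (gam_pos c).le
          _ = 2.51 * Real.exp (-(3 * c ^ 2 / 8)) := by
              unfold gam
              rw [← mul_assoc, ← Real.exp_add]
              rw [show -c ^ 2 / 2 + c ^ 2 / 8 = -(3 * c ^ 2 / 8) by ring]; ring
          _ ≤ 2.51 * (0.01 / c ^ 4) := by gcongr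
          _ = _ := by ring
      constructor
      · refine hf.trans ?_
        gcongr; norm_num
      · rw [abs_mul, abs_of_nonneg hw0, abs_of_nonneg f0]
        calc w * sf (hsm c δ) w ≤ (c / 2) * (0.0251 / c ^ 4) := by
              apply mul_le_mul hw hf f0 (by positivity)
          _ = 0.01255 * c / c ^ 4 := by ring
          _ ≤ _ := by gcongr; norm_num
  exact ⟨f0, key.1, key.2, by linarith, by linarith⟩

lemma sf_tail (hδ : 0 < δ) (hc : 19 ≤ c) (w : ℝ) :
    |sf (hsm c δ) w| ≤ (1 + 6 * w ^ 2) / c ^ 2 := by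
  have H := hsm_TF c δ hδ
  have hc0 : 0 < c := by linarith
  rcases le_or_gt w (c / 2) with hw | hw
  · obtain ⟨h0, h1, -⟩ := sf_small hδ hc w hw
    rw [abs_of_nonneg h0]
    refine h1.trans ?_
    rw [div_le_div_iff₀ (by positivity) (by positivity)]
    have : 1 ≤ c ^ 2 := by nlinarith
    nlinarith [sq_nonneg w, mul_nonneg (sq_nonneg w) (sq_nonneg (c^2))]
  · refine (H.abs_sf_le w).trans ?_
    rw [le_div_iff₀ (by positivity)]
    nlinarith

lemma sf'_tail (hδ : 0 < δ) (hc : 19 ≤ c) (w : ℝ) :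
    |sf' (hsm c δ) w| ≤ (1 + 4 * w ^ 2) / c ^ 2 := by
  have H := hsm_TF c δ hδ
  have hc0 : 0 < c := by linarith
  rcases le_or_gt w (c / 2) with hw | hw
  · obtain ⟨h0, h1, h2, h3, h4⟩ := sf_small hδ hc w hw
    have e : |sf' (hsm c δ) w| ≤ 0.015 * c / c ^ 4 + 0.01 / c ^ 4 := by
      unfold sf'
      rw [hsm_one c δ w hδ (by linarith), add_sub_assoc]
      refine (abs_add_le _ _).trans ?_
      rw [abs_of_nonneg h3]; gcongr
    refine e.trans ?_
    rw [← add_div, div_le_div_iff₀ (by positivity) (by positivity)]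
    have : c ≤ c ^ 2 := by nlinarith
    nlinarith [sq_nonneg w, mul_nonneg (sq_nonneg w) (sq_nonneg (c^2)), sq_nonneg c]
  · refine (H.abs_sf'_le w).trans ?_
    rw [le_div_iff₀ (by positivity)]
    nlinarith

lemma g'_tail (hδ : 0 < δ) (hc : 19 ≤ c) (w : ℝ) :
    |sf (hsm c δ) w + w * sf' (hsm c δ) w| ≤ 2 * (1 + w ^ 4) / c ^ 2 := by
  have H := hsm_TF c δ hδ
  have hc0 : 0 < c := by linarith
  rcases le_or_gt w (c / 2) with hw | hw
  · obtain ⟨h0, h1, h2, h3, h4⟩ := sf_small hδ hc w hw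
    have e : |sf' (hsm c δ) w| ≤ 0.015 * c / c ^ 4 + 0.01 / c ^ 4 := by
      unfold sf'
      rw [hsm_one c δ w hδ (by linarith), add_sub_assoc]
      refine (abs_add_le _ _).trans ?_
      rw [abs_of_nonneg h3]; gcongr
    have e1 : |sf (hsm c δ) w + w * sf' (hsm c δ) w| ≤
        0.03 / c ^ 4 + |w| * (0.015 * c / c ^ 4 + 0.01 / c ^ 4) := by
      refine (abs_add_le _ _).trans ?_
      rw [abs_of_nonneg h0, abs_mul]; gcongr
    refine e1.trans ?_
    have e2 : 0.03 / c ^ 4 + |w| * (0.015 * c / c ^ 4 + 0.01 / c ^ 4) =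
        (0.03 + |w| * (0.015 * c + 0.01)) / c ^ 4 := by field_simp
    rw [e2, div_le_div_iff₀ (by positivity) (by positivity)]
    have hw4 : |w| ≤ 1 + w ^ 4 := by
      rw [← Even.pow_abs (by decide : Even 4) w]
      nlinarith [sq_nonneg (|w| ^ 2 - 1/2), sq_nonneg (|w| - 1/2), abs_nonneg w]
    have hc1 : c ≤ c ^ 2 := by nlinarith
    have p4 : 0 ≤ w ^ 4 := by positivity
    calc (0.03 + |w| * (0.015 * c + 0.01)) * c ^ 2
        ≤ ((1 + w ^ 4) * c ^ 2 + (1 + w ^ 4) * (c ^ 2)) * c ^ 2 := by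
          gcongr
          · nlinarith
          · nlinarith
      _ = _ := by ring
  · refine (H.abs_g'_le w).trans ?_
    rw [le_div_iff₀ (by positivity)]
    have h1 : c ^ 2 ≤ 4 * w ^ 2 := by nlinarith
    have h2 : 36 ≤ w ^ 2 := by nlinarith
    nlinarith [sq_nonneg w]

end tail


open MeasureTheory ProbabilityTheory Real

/-- Bounded measurable random variables. -/
def Bd {Ω : Type*} [MeasurableSpace Ω] (Y : Ω → ℝ) : Prop :=
  Measurable Y ∧ ∃ C, ∀ ω, |Y ω| ≤ C

namespace Bd
variable {Ω : Type*} [MeasurableSpace Ω] {X Y : Ω → ℝ}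

lemma int (h : Bd Y) (μ : Measure Ω) [IsFiniteMeasure μ] : Integrable Y μ := by
  obtain ⟨hm, C, hC⟩ := h
  exact Integrable.of_bound hm.aestronglyMeasurable C (Filter.Eventually.of_forall hC)

lemma const (c : ℝ) : Bd (fun _ : Ω => c) := ⟨measurable_const, |c|, fun _ => le_rfl⟩

lemma add (hX : Bd X) (hY : Bd Y) : Bd (fun ω => X ω + Y ω) := by
  obtain ⟨hm, C, hC⟩ := hX
  obtain ⟨hm', C', hC'⟩ := hY
  exact ⟨hm.add hm', C + C', fun ω => (abs_add_le _ _).trans (add_le_add (hC ω) (hC' ω))⟩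

lemma mul (hX : Bd X) (hY : Bd Y) : Bd (fun ω => X ω * Y ω) := by
  obtain ⟨hm, C, hC⟩ := hX
  obtain ⟨hm', C', hC'⟩ := hY
  refine ⟨hm.mul hm', C * C', fun ω => ?_⟩
  rw [abs_mul]
  exact mul_le_mul (hC ω) (hC' ω) (abs_nonneg _) ((abs_nonneg _).trans (hC ω))

lemma cmp {f : ℝ → ℝ} (hf : Continuous f) (hX : Bd X) : Bd (fun ω => f (X ω)) := by
  obtain ⟨hm, C, hC⟩ := hX
  refine ⟨hf.measurable.comp hm, ?_⟩
  obtain ⟨K, hK⟩ := (isCompact_Icc (a := -C) (b := C)).exists_bound_of_continuousOn hf.continuousOn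
  exact ⟨K, fun ω => hK _ (abs_le.1 (hC ω))⟩

lemma neg (hX : Bd X) : Bd (fun ω => - X ω) := hX.cmp continuous_neg
lemma abs (hX : Bd X) : Bd (fun ω => |X ω|) := hX.cmp continuous_abs
lemma pow (hX : Bd X) (k : ℕ) : Bd (fun ω => X ω ^ k) := hX.cmp (continuous_pow k)
lemma sub (hX : Bd X) (hY : Bd Y) : Bd (fun ω => X ω - Y ω) := by
  simpa [sub_eq_add_neg] using hX.add hY.neg
lemma cmul (c : ℝ) (hX : Bd X) : Bd (fun ω => c * X ω) := (const c).mul hX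

lemma ind {s : Set ℝ} (hs : MeasurableSet s) (hX : Bd X) :
    Bd (fun ω => s.indicator (fun _ => (1 : ℝ)) (X ω)) := by
  refine ⟨(measurable_const.indicator hs).comp hX.1, 1, fun ω => ?_⟩
  by_cases h : X ω ∈ s <;> simp [h]

lemma sum {ι : Type*} {f : ι → Ω → ℝ} (S : Finset ι) (h : ∀ i ∈ S, Bd (f i)) :
    Bd (fun ω => ∑ i ∈ S, f i ω) := by
  classical
  induction S using Finset.induction_on with
  | empty => simpa using const 0
  | insert a S ha ih =>
    simp_rw [Finset.sum_insert ha]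
    exact (h a (by simp)).add (ih fun i hi => h i (by simp [hi]))

lemma comp {Ω' : Type*} [MeasurableSpace Ω'] {p : Ω' → Ω} (hp : Measurable p) (hX : Bd X) :
    Bd (fun ω => X (p ω)) := ⟨hX.1.comp hp, hX.2.imp fun _ h _ => h _⟩

end Bd

lemma indep_mul {Ω : Type*} [MeasurableSpace Ω] {μ : Measure Ω} [IsProbabilityMeasure μ]
    {X Y : Ω → ℝ} (hX : Bd X) (hY : Bd Y) (h : IndepFun X Y μ) {f g : ℝ → ℝ}
    (hf : Measurable f) (hg : Measurable g) :
    ∫ ω, f (X ω) * g (Y ω) ∂μ = (∫ ω, f (X ω) ∂μ) * ∫ ω, g (Y ω) ∂μ := by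
  have := h.comp hf hg
  exact this.integral_fun_mul_eq_mul_integral (hf.comp hX.1).aestronglyMeasurable
    (hg.comp hY.1).aestronglyMeasurable

lemma indep_fubini {Ω : Type*} [MeasurableSpace Ω] {μ : Measure Ω} [IsProbabilityMeasure μ]
    {X Y : Ω → ℝ} (hX : Measurable X) (hY : Measurable Y) (h : IndepFun X Y μ) {k : ℝ → ℝ → ℝ}
    (hk : Measurable (fun p : ℝ × ℝ => k p.1 p.2)) (C : ℝ) (hC : ∀ ω ω', |k (X ω) (Y ω')| ≤ C) :
    ∫ ω, k (X ω) (Y ω) ∂μ = ∫ ω, (∫ ω', k (X ω) (Y ω') ∂μ) ∂μ := by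
  have e := (indepFun_iff_map_prod_eq_prod_map_map hX.aemeasurable hY.aemeasurable).1 h
  rw [Measure.map_prod_map _ _ hX hY] at e
  have hXY : Measurable (Prod.map X Y) := hX.prodMap hY
  have h1 : ∫ ω, k (X ω) (Y ω) ∂μ = ∫ p, k p.1 p.2 ∂(μ.map (fun ω => (X ω, Y ω))) := by
    rw [integral_map (hX.prodMk hY).aemeasurable hk.aestronglyMeasurable]
  have hi : Integrable (fun p : Ω × Ω => k (X p.1) (Y p.2)) (μ.prod μ) :=
    Integrable.of_bound (hk.comp hXY).aestronglyMeasurable C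
      (Filter.Eventually.of_forall fun p => hC _ _)
  rw [h1, e, integral_map hXY.aemeasurable hk.aestronglyMeasurable]
  exact integral_prod _ hi

lemma hasDeriv_mul_abs (t : ℝ) : HasDerivAt (fun t : ℝ => t * |t|) (2 * |t|) t := by
  rcases lt_trichotomy t 0 with h | h | h
  · have := (hasDerivAt_id t).mul (hasDerivAt_abs_neg h)
    refine this.congr_deriv ?_
    simp [abs_of_neg h]; ring
  · subst h
    rw [hasDerivAt_iff_tendsto_slope]
    have : Filter.Tendsto (fun t : ℝ => |t|) (nhdsWithin 0 {0}ᶜ) (nhds (2 * |0|)) := by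
      have := (continuous_abs (G := ℝ)).tendsto 0
      simp at this
      simpa using this.mono_left nhdsWithin_le_nhds
    refine this.congr' ?_
    filter_upwards [self_mem_nhdsWithin] with u hu
    have hu' : u ≠ 0 := hu
    simp [slope, hu']
  · have := (hasDerivAt_id t).mul (hasDerivAt_abs_pos h)
    refine this.congr_deriv ?_
    simp [abs_of_pos h]; ring

lemma kernel_pt {φ F : ℝ → ℝ} {M : ℝ} (hF : ∀ t, HasDerivAt F (φ t) t)
    (hφ : ∀ s t, |s| ≤ 1 → |t| ≤ 1 → |φ s - φ t| ≤ M * |s - t|) (x y : ℝ)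
    (hx : |x| ≤ 1) (hy : |y| ≤ 1) :
    |y ^ 2 * φ x - y * (F y - F 0)| ≤ M / 2 * (y * ((y - x) * |y - x| + x * |x|)) := by
  set G : ℝ → ℝ := fun t => M / 2 * ((t - x) * |t - x|) with hG
  have hGd : ∀ t, HasDerivAt G (M * |t - x|) t := by
    intro t
    have := ((hasDeriv_mul_abs (t - x)).comp t ((hasDerivAt_id t).sub_const x)).const_mul (M / 2)
    refine this.congr_deriv ?_
    ring
  have mono : ∀ ε : ℝ, |ε| = 1 →
      MonotoneOn (fun t => G t + ε * (F t - t * φ x)) (Set.Icc (-1) 1) := by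
    intro ε hε
    have hd : ∀ t, HasDerivAt (fun t => G t + ε * (F t - t * φ x))
        (M * |t - x| + ε * (φ t - φ x)) t := by
      intro t
      have := (hGd t).add (((hF t).sub ((hasDerivAt_id t).mul_const (φ x))).const_mul ε)
      exact this.congr_deriv (by ring)
    apply monotoneOn_of_deriv_nonneg (convex_Icc _ _)
    · exact fun t _ => (hd t).continuousAt.continuousWithinAt
    · exact fun t _ => (hd t).differentiableAt.differentiableWithinAt
    · intro t ht
      rw [interior_Icc] at ht
      rw [(hd t).deriv]
      have h1 := hφ t x (abs_le.2 ⟨ht.1.le, ht.2.le⟩) hx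
      have h2 : |ε * (φ t - φ x)| ≤ M * |t - x| := by rw [abs_mul, hε, one_mul]; exact h1
      linarith [neg_abs_le (ε * (φ t - φ x))]
  have e0 : G 0 = - (M / 2 * (x * |x|)) := by simp [hG]
  have y1 : y ∈ Set.Icc (-1 : ℝ) 1 := abs_le.1 hy
  have z1 : (0:ℝ) ∈ Set.Icc (-1 : ℝ) 1 := by constructor <;> norm_num
  have key : ∀ ε : ℝ, |ε| = 1 →
      0 ≤ y * ((G y + ε * (F y - y * φ x)) - (G 0 + ε * (F 0 - 0 * φ x))) := by
    intro ε hε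
    rcases le_total 0 y with h | h
    · exact mul_nonneg h (sub_nonneg.2 (mono ε hε z1 y1 h))
    · exact mul_nonneg_of_nonpos_of_nonpos h (sub_nonpos.2 (mono ε hε y1 z1 h))
  have k1 := key 1 (by simp)
  have k2 := key (-1) (by simp)
  rw [e0] at k1 k2
  simp only [hG] at k1 k2
  rw [abs_le]
  constructor <;> nlinarith

lemma sym_pt (x y : ℝ) :
    y * ((y - x) * |y - x| + x * |x|) + x * ((x - y) * |x - y| + y * |y|) ≤
      2 * |x| ^ 3 + 2 * |y| ^ 3 - (x * |x|) * y - x * (y * |y|) := by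
  rw [abs_sub_comm x y]
  have h1 : |y - x| ≤ |y| + |x| := abs_sub _ _
  have h2 : (y - x) ^ 2 * |y - x| ≤ (y - x) ^ 2 * (|y| + |x|) :=
    mul_le_mul_of_nonneg_left h1 (sq_nonneg _)
  have h3 : 0 ≤ (|x| - |y|) ^ 2 * (|x| + |y|) := by positivity
  have ex : x ^ 2 = |x| ^ 2 := (sq_abs x).symm
  have ey : y ^ 2 = |y| ^ 2 := (sq_abs y).symm
  have e1 : (y - x) ^ 2 * (|y| + |x|) = |x| ^ 3 + |y| ^ 3 + |x| ^ 2 * |y| + |y| ^ 2 * |x|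
      - 2 * (x * |x|) * y - 2 * x * (y * |y|) := by
    rw [sub_sq, ex, ey]; ring
  nlinarith

lemma sym_bound {Ω : Type*} [MeasurableSpace Ω] {μ : Measure Ω} [IsProbabilityMeasure μ]
    {x : Ω → ℝ} (hx : Measurable x) (hb : ∀ ω, |x ω| ≤ 1) {φ F : ℝ → ℝ} {M : ℝ} (hM : 0 ≤ M)
    (hF : ∀ t, HasDerivAt F (φ t) t) (hφc : Continuous φ)
    (hφ : ∀ s t, |s| ≤ 1 → |t| ≤ 1 → |φ s - φ t| ≤ M * |s - t|) :
    |(∫ ω, x ω ^ 2 ∂μ) * (∫ ω, φ (x ω) ∂μ) - ∫ ω, x ω * (F (x ω) - F 0) ∂μ| ≤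
      M * ((∫ ω, |x ω| ^ 3 ∂μ) + 1 / 2 * |∫ ω, x ω ∂μ| * ∫ ω, x ω ^ 2 ∂μ) := by
  have hFc : Continuous F := continuous_iff_continuousAt.2 fun t => (hF t).continuousAt
  have Bx : Bd x := ⟨hx, 1, hb⟩
  set P := μ.prod μ with hP
  have BX : Bd (fun p : Ω × Ω => x p.1) := Bx.comp measurable_fst
  have BY : Bd (fun p : Ω × Ω => x p.2) := Bx.comp measurable_snd
  have e1 : (∫ ω, x ω ^ 2 ∂μ) * (∫ ω, φ (x ω) ∂μ) - ∫ ω, x ω * (F (x ω) - F 0) ∂μ =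
      ∫ p : Ω × Ω, (x p.2 ^ 2 * φ (x p.1) - x p.2 * (F (x p.2) - F 0)) ∂P := by
    rw [integral_sub (((BY.pow 2).mul (BX.cmp hφc)).int P)
      ((BY.mul ((BY.cmp hFc).sub (Bd.const _))).int P)]
    congr 1
    · rw [mul_comm, ← integral_prod_mul (fun ω => φ (x ω)) (fun ω => x ω ^ 2)]
      congr 1; funext p; ring
    · have := integral_prod_mul (μ := μ) (ν := μ) (fun _ : Ω => (1 : ℝ))
        (fun ω => x ω * (F (x ω) - F 0))
      simpa using this.symm
  set k : ℝ → ℝ → ℝ := fun x y => M / 2 * (y * ((y - x) * |y - x| + x * |x|)) with hk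
  have Bk : Bd (fun p : Ω × Ω => k (x p.1) (x p.2)) :=
    (BY.mul (((BY.sub BX).mul (BY.sub BX).abs).add (BX.mul BX.abs))).cmul _
  have Bk' : Bd (fun p : Ω × Ω => k (x p.2) (x p.1)) :=
    (BX.mul (((BX.sub BY).mul (BX.sub BY).abs).add (BY.mul BY.abs))).cmul _
  have e2 : ∫ p : Ω × Ω, k (x p.2) (x p.1) ∂P = ∫ p : Ω × Ω, k (x p.1) (x p.2) ∂P := by
    have := integral_prod_swap (μ := μ) (ν := μ) (fun p : Ω × Ω => k (x p.1) (x p.2))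
    simpa using this
  have e3 : ∫ p : Ω × Ω, (k (x p.1) (x p.2) + k (x p.2) (x p.1)) ∂P ≤
      ∫ p : Ω × Ω, M / 2 * (2 * |x p.1| ^ 3 + 2 * |x p.2| ^ 3 - (x p.1 * |x p.1|) * x p.2
        - x p.1 * (x p.2 * |x p.2|)) ∂P := by
    apply integral_mono ((Bk.add Bk').int P)
    · exact ((((((BX.abs.pow 3).cmul 2).add ((BY.abs.pow 3).cmul 2)).sub
        ((BX.mul BX.abs).mul BY)).sub (BX.mul (BY.mul BY.abs))).cmul _).int P
    · intro p
      simp only [hk]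
      rw [← mul_add]
      exact mul_le_mul_of_nonneg_left (sym_pt _ _) (by linarith)
  have f1 : ∫ p : Ω × Ω, |x p.1| ^ 3 ∂P = ∫ ω, |x ω| ^ 3 ∂μ := by
    have := integral_prod_mul (μ := μ) (ν := μ) (fun ω => |x ω| ^ 3) (fun _ : Ω => (1 : ℝ))
    simpa using this
  have f2 : ∫ p : Ω × Ω, |x p.2| ^ 3 ∂P = ∫ ω, |x ω| ^ 3 ∂μ := by
    have := integral_prod_mul (μ := μ) (ν := μ) (fun _ : Ω => (1 : ℝ)) (fun ω => |x ω| ^ 3)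
    simpa using this
  have f3 : ∫ p : Ω × Ω, (x p.1 * |x p.1|) * x p.2 ∂P = (∫ ω, x ω * |x ω| ∂μ) * ∫ ω, x ω ∂μ :=
    integral_prod_mul (μ := μ) (ν := μ) (fun ω => x ω * |x ω|) x
  have f4 : ∫ p : Ω × Ω, x p.1 * (x p.2 * |x p.2|) ∂P = (∫ ω, x ω ∂μ) * (∫ ω, x ω * |x ω| ∂μ) :=
    integral_prod_mul (μ := μ) (ν := μ) x (fun ω => x ω * |x ω|)
  have e3r : ∫ p : Ω × Ω, M / 2 * (2 * |x p.1| ^ 3 + 2 * |x p.2| ^ 3 - (x p.1 * |x p.1|) * x p.2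
        - x p.1 * (x p.2 * |x p.2|)) ∂P = M / 2 * (2 * (∫ ω, |x ω| ^ 3 ∂μ)
        + 2 * (∫ ω, |x ω| ^ 3 ∂μ) - (∫ ω, x ω * |x ω| ∂μ) * (∫ ω, x ω ∂μ)
        - (∫ ω, x ω ∂μ) * (∫ ω, x ω * |x ω| ∂μ)) := by
    have b1 := ((BX.abs.pow 3).cmul 2)
    have b2 := ((BY.abs.pow 3).cmul 2)
    have b3 := (BX.mul BX.abs).mul BY
    have b4 := BX.mul (BY.mul BY.abs)
    rw [integral_const_mul, integral_sub (((b1.add b2).sub b3).int P) (b4.int P),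
      integral_sub ((b1.add b2).int P) (b3.int P), integral_add (b1.int P) (b2.int P),
      integral_const_mul, integral_const_mul, f1, f2, f3, f4]
  rw [e3r, integral_add (Bk.int P) (Bk'.int P), e2] at e3
  rw [e1]
  have e4 : |∫ p : Ω × Ω, (x p.2 ^ 2 * φ (x p.1) - x p.2 * (F (x p.2) - F 0)) ∂P| ≤
      ∫ p : Ω × Ω, k (x p.1) (x p.2) ∂P := by
    refine (abs_integral_le_integral_abs).trans ?_
    apply integral_mono
    · exact (((BY.pow 2).mul (BX.cmp hφc)).sub (BY.mul ((BY.cmp hFc).sub (Bd.const _)))).abs.int P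
    · exact Bk.int P
    · intro p
      exact kernel_pt hF hφ _ _ (hb _) (hb _)
  have e5 : |(∫ ω, x ω ∂μ) * ∫ ω, x ω * |x ω| ∂μ| ≤ |∫ ω, x ω ∂μ| * ∫ ω, x ω ^ 2 ∂μ := by
    rw [abs_mul]
    apply mul_le_mul_of_nonneg_left _ (abs_nonneg _)
    refine (abs_integral_le_integral_abs).trans (le_of_eq ?_)
    congr 1; funext ω
    rw [abs_mul, abs_abs, ← sq, sq_abs]
  have e6 := neg_abs_le ((∫ ω, x ω ∂μ) * ∫ ω, x ω * |x ω| ∂μ)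
  refine e4.trans ?_
  have : M * -((∫ ω, x ω ∂μ) * ∫ ω, x ω * |x ω| ∂μ) ≤ M * (|∫ ω, x ω ∂μ| * ∫ ω, x ω ^ 2 ∂μ) :=
    mul_le_mul_of_nonneg_left (by linarith) hM
  nlinarith


open MeasureTheory ProbabilityTheory Real

/-- Truncated summands: bounded by one, with variance defect `B`, and error level `b`. -/
structure TS {Ω : Type*} [MeasurableSpace Ω] (μ : Measure Ω) {n : ℕ} (x : Fin n → Ω → ℝ)
    (B b : ℝ) : Prop where
  meas : ∀ i, Measurable (x i)
  ind : iIndepFun x μ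
  bd : ∀ i ω, |x i ω| ≤ 1
  var : ∑ i, ∫ ω, x i ω ^ 2 ∂μ = 1 - B
  mean : ∑ i, |∫ ω, x i ω ∂μ| ≤ B
  B0 : 0 ≤ B
  third : B + ∑ i, ∫ ω, |x i ω| ^ 3 ∂μ ≤ b
  b0 : 0 < b
  b1 : b < 2 / 37

lemma centered_sum {Ω : Type*} [MeasurableSpace Ω] {μ : Measure Ω} [IsProbabilityMeasure μ]
    {ι : Type*} {Y : ι → Ω → ℝ} (S : Finset ι) (hY : ∀ i, Bd (Y i)) (hi : iIndepFun Y μ) :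
    ∫ ω, (∑ j ∈ S, Y j ω - ∑ j ∈ S, ∫ ω', Y j ω' ∂μ) ^ 2 ∂μ ≤ ∑ j ∈ S, ∫ ω, Y j ω ^ 2 ∂μ := by
  have hL : ∀ i, MemLp (Y i) 2 μ := fun i => by
    obtain ⟨hm, C, hC⟩ := hY i
    exact MemLp.of_bound hm.aestronglyMeasurable C (Filter.Eventually.of_forall hC)
  have h1 := IndepFun.variance_sum (μ := μ) (X := Y) (s := S) (fun i _ => hL i)
    (fun i _ j _ hij => hi.indepFun hij)
  have hsum : (∑ j ∈ S, Y j) = fun ω => ∑ j ∈ S, Y j ω := by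
    funext ω; simp
  rw [variance_eq_integral, hsum] at h1
  · rw [integral_finsetSum _ (fun i _ => (hY i).int μ)] at h1
    rw [h1]
    apply Finset.sum_le_sum
    intro i _
    exact variance_le_expectation_sq (hY i).1.aestronglyMeasurable
  · rw [hsum]; exact (Bd.sum S fun i _ => hY i).1.aemeasurable

namespace TS
variable {Ω : Type*} [MeasurableSpace Ω] {μ : Measure Ω} [IsProbabilityMeasure μ] {n : ℕ}
  {x : Fin n → Ω → ℝ} {B b : ℝ}

lemma bx (H : TS μ x B b) (i) : Bd (x i) := ⟨H.meas i, 1, H.bd i⟩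

lemma bS (H : TS μ x B b) (S : Finset (Fin n)) : Bd (fun ω => ∑ j ∈ S, x j ω) :=
  Bd.sum S fun i _ => H.bx i

lemma T0 (H : TS μ x B b) : ∀ i, 0 ≤ ∫ ω, |x i ω| ^ 3 ∂μ :=
  fun i => integral_nonneg fun ω => by positivity

lemma s0 (H : TS μ x B b) : ∀ i, 0 ≤ ∫ ω, x i ω ^ 2 ∂μ :=
  fun i => integral_nonneg fun ω => by positivity

lemma Bb (H : TS μ x B b) : B ≤ b := by
  have : 0 ≤ ∑ i, ∫ ω, |x i ω| ^ 3 ∂μ := Finset.sum_nonneg fun i _ => H.T0 i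
  linarith [H.third]

lemma B1 (H : TS μ x B b) : B < 2 / 37 := H.Bb.trans_lt H.b1

lemma indS (H : TS μ x B b) {S : Finset (Fin n)} {i : Fin n} (hi : i ∉ S) :
    IndepFun (fun ω => ∑ j ∈ S, x j ω) (x i) μ := by
  have := H.ind.indepFun_finsetSum_of_notMem H.meas hi
  have hsum : (∑ j ∈ S, x j) = fun ω => ∑ j ∈ S, x j ω := by funext ω; simp
  rwa [hsum] at this

lemma meanS (H : TS μ x B b) (S : Finset (Fin n)) : |∑ j ∈ S, ∫ ω, x j ω ∂μ| ≤ B :=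
  (Finset.abs_sum_le_sum_abs _ _).trans ((Finset.sum_le_sum_of_subset_of_nonneg
    (Finset.subset_univ S) (fun i _ _ => abs_nonneg _)).trans H.mean)

lemma meanS' (H : TS μ x B b) (S : Finset (Fin n)) : ∑ j ∈ S, |∫ ω, x j ω ∂μ| ≤ B :=
  (Finset.sum_le_sum_of_subset_of_nonneg
    (Finset.subset_univ S) (fun i _ _ => abs_nonneg _)).trans H.mean

lemma intS (H : TS μ x B b) (S : Finset (Fin n)) :
    ∫ ω, ∑ j ∈ S, x j ω ∂μ = ∑ j ∈ S, ∫ ω, x j ω ∂μ :=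
  integral_finsetSum _ fun i _ => (H.bx i).int μ

lemma varS (H : TS μ x B b) (S : Finset (Fin n)) : ∑ j ∈ S, ∫ ω, x j ω ^ 2 ∂μ ≤ 1 - B := by
  rw [← H.var]
  exact Finset.sum_le_sum_of_subset_of_nonneg (Finset.subset_univ S) (fun i _ _ => H.s0 i)

lemma m2 (H : TS μ x B b) (S : Finset (Fin n)) : ∫ ω, (∑ j ∈ S, x j ω) ^ 2 ∂μ ≤ 1 := by
  have h1 := (centered_sum S H.bx H.ind).trans (H.varS S)
  set m := ∑ j ∈ S, ∫ ω, x j ω ∂μ with hm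
  have h2 : ∫ ω, (∑ j ∈ S, x j ω - m) ^ 2 ∂μ = ∫ ω, (∑ j ∈ S, x j ω) ^ 2 ∂μ - m ^ 2 := by
    have e : (fun ω => (∑ j ∈ S, x j ω - m) ^ 2) =
        fun ω => (∑ j ∈ S, x j ω) ^ 2 - (2 * m * ∑ j ∈ S, x j ω - m ^ 2) := by
      funext ω; ring
    have c1 := (H.bS S).pow 2
    have c2 := (H.bS S).cmul (2 * m)
    rw [e, integral_sub (c1.int μ) ((c2.sub (Bd.const _)).int μ), integral_sub (c2.int μ)
      ((Bd.const _).int μ), integral_const_mul, H.intS, ← hm]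
    simp; ring
  have h3 : m ^ 2 ≤ B ^ 2 := by
    rw [← sq_abs]; exact pow_le_pow_left₀ (abs_nonneg _) (H.meanS S) 2
  have := H.B1
  have := H.B0
  nlinarith

lemma m1 (H : TS μ x B b) (S : Finset (Fin n)) : ∫ ω, |∑ j ∈ S, x j ω| ∂μ ≤ 1 := by
  have h : ∫ ω, |∑ j ∈ S, x j ω| ∂μ ≤ ∫ ω, (1 / 2 + 1 / 2 * (∑ j ∈ S, x j ω) ^ 2) ∂μ := by
    apply integral_mono ((H.bS S).abs.int μ)
    · exact ((Bd.const _).add (((H.bS S).pow 2).cmul _)).int μ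
    · intro ω
      simp only
      nlinarith [sq_nonneg (|∑ j ∈ S, x j ω| - 1), sq_abs (∑ j ∈ S, x j ω)]
  rw [integral_add ((Bd.const _).int μ) ((((H.bS S).pow 2).cmul _).int μ), integral_const_mul] at h
  have := H.m2 S
  simp at h
  linarith

lemma mgf1 (H : TS μ x B b) (S : Finset (Fin n)) (t : ℝ) (ht : |t| = 1) :
    ∫ ω, Real.exp (t * ∑ j ∈ S, x j ω) ∂μ ≤ Real.exp 1 := by
  have h := H.ind.mgf_sum H.meas S (t := t)
  have hsum : (∑ j ∈ S, x j) = fun ω => ∑ j ∈ S, x j ω := by funext ω; simp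
  rw [hsum] at h
  unfold mgf at h
  rw [h]
  have hj : ∀ j ∈ S, ∫ ω, Real.exp (t * x j ω) ∂μ ≤
      Real.exp (|∫ ω, x j ω ∂μ| + ∫ ω, x j ω ^ 2 ∂μ) := by
    intro j _
    have h1 : ∫ ω, Real.exp (t * x j ω) ∂μ ≤ ∫ ω, (1 + t * x j ω + x j ω ^ 2) ∂μ := by
      apply integral_mono
      · exact (((H.bx j).cmul t).cmp Real.continuous_exp).int μ
      · exact (((Bd.const 1).add ((H.bx j).cmul t)).add ((H.bx j).pow 2)).int μ
      · intro ω
        have hb : |t * x j ω| ≤ 1 := by rw [abs_mul, ht, one_mul]; exact H.bd j ω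
        have := Real.abs_exp_sub_one_sub_id_le hb
        have e : (t * x j ω) ^ 2 = x j ω ^ 2 := by rw [mul_pow, ← sq_abs t, ht]; ring
        rw [e] at this
        simp only
        linarith [(abs_le.1 this).2]
    rw [integral_add (((Bd.const 1).add ((H.bx j).cmul t)).int μ) (((H.bx j).pow 2).int μ),
      integral_add ((Bd.const 1).int μ) (((H.bx j).cmul t).int μ), integral_const_mul] at h1
    have h2 : t * ∫ ω, x j ω ∂μ ≤ |∫ ω, x j ω ∂μ| := by
      refine (le_abs_self _).trans ?_
      rw [abs_mul, ht, one_mul]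
    have h3 := Real.add_one_le_exp (|∫ ω, x j ω ∂μ| + ∫ ω, x j ω ^ 2 ∂μ)
    simp at h1
    linarith
  refine (Finset.prod_le_prod (fun j _ => integral_nonneg fun ω => (Real.exp_pos _).le) hj).trans ?_
  rw [← Real.exp_sum, Real.exp_le_exp, Finset.sum_add_distrib]
  linarith [H.meanS' S, H.varS S]

lemma m4 (H : TS μ x B b) (S : Finset (Fin n)) : ∫ ω, (∑ j ∈ S, x j ω) ^ 4 ∂μ ≤ 131 := by
  have b1 := ((H.bS S).cmul 1).cmp Real.continuous_exp
  have b2 := ((H.bS S).cmul (-1)).cmp Real.continuous_exp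
  have h : ∫ ω, (∑ j ∈ S, x j ω) ^ 4 ∂μ ≤ ∫ ω, 24 * (Real.exp (1 * ∑ j ∈ S, x j ω) +
      Real.exp (-1 * ∑ j ∈ S, x j ω)) ∂μ := by
    apply integral_mono (((H.bS S).pow 4).int μ)
    · exact ((b1.add b2).cmul 24).int μ
    · intro ω
      simp only
      set v := ∑ j ∈ S, x j ω
      have h1 := Real.pow_div_factorial_le_exp |v| (abs_nonneg _) 4
      have e : |v| ^ 4 = v ^ 4 := by
        rw [show (4:ℕ) = 2 * 2 by norm_num, pow_mul, sq_abs, ← pow_mul]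
      rw [e] at h1
      simp [Nat.factorial] at h1
      have h2 : Real.exp |v| ≤ Real.exp (1 * v) + Real.exp (-1 * v) := by
        rcases abs_cases v with ⟨h, _⟩ | ⟨h, _⟩ <;> rw [h]
        · rw [one_mul]; linarith [Real.exp_pos (-1 * v)]
        · rw [neg_one_mul]; linarith [Real.exp_pos (1 * v)]
      linarith
  rw [integral_const_mul, integral_add (b1.int μ) (b2.int μ)] at h
  have h1 := H.mgf1 S 1 (by simp)
  have h2 := H.mgf1 S (-1) (by simp)
  have := Real.exp_one_lt_d9
  linarith

lemma s_le (H : TS μ x B b) (i : Fin n) : ∫ ω, x i ω ^ 2 ∂μ ≤ 0.143 := by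
  have h : ∫ ω, x i ω ^ 2 ∂μ ≤ ∫ ω, (16 / 9 * |x i ω| ^ 3 + 3 / 64) ∂μ := by
    apply integral_mono (((H.bx i).pow 2).int μ)
    · exact ((((H.bx i).abs.pow 3).cmul _).add (Bd.const _)).int μ
    · intro ω
      simp only
      rw [← sq_abs]
      have := abs_nonneg (x i ω)
      have : 0 ≤ (|x i ω| - 3 / 8) ^ 2 * (16 / 9 * |x i ω| + 1 / 3) := by positivity
      nlinarith
  rw [integral_add ((((H.bx i).abs.pow 3).cmul _).int μ) ((Bd.const _).int μ),
    integral_const_mul] at h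
  have h2 : ∫ ω, |x i ω| ^ 3 ∂μ ≤ ∑ i, ∫ ω, |x i ω| ^ 3 ∂μ :=
    Finset.single_le_sum (f := fun i => ∫ ω, |x i ω| ^ 3 ∂μ) (fun i _ => H.T0 i) (Finset.mem_univ i)
  have := H.third
  have := H.B0
  have := H.b1
  simp at h
  norm_num
  linarith

lemma stein_id (H : TS μ x B b) (S : Finset (Fin n)) {f : ℝ → ℝ} (hf : Continuous f) :
    ∫ ω, (∑ j ∈ S, x j ω) * f (∑ j ∈ S, x j ω) ∂μ =
      ∑ j ∈ S, ∫ ω, x j ω * (f (∑ k ∈ S, x k ω) - f (∑ k ∈ S.erase j, x k ω)) ∂μ +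
      ∑ j ∈ S, (∫ ω, x j ω ∂μ) * ∫ ω, f (∑ k ∈ S.erase j, x k ω) ∂μ := by
  rw [← Finset.sum_add_distrib]
  simp_rw [Finset.sum_mul]
  rw [integral_finsetSum _ (fun i _ => ((H.bx i).mul ((H.bS S).cmp hf)).int μ)]
  apply Finset.sum_congr rfl
  intro j hj
  have h1 := indep_mul (H.bx j) (H.bS (S.erase j)) (H.indS (Finset.notMem_erase j S)).symm
    measurable_id hf.measurable
  simp only [id] at h1
  rw [← h1, ← integral_add]
  · congr 1; funext ω; ring
  · exact ((H.bx j).mul (((H.bS S).cmp hf).sub ((H.bS (S.erase j)).cmp hf))).int μ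
  · exact ((H.bx j).mul ((H.bS (S.erase j)).cmp hf)).int μ

end TS


open MeasureTheory ProbabilityTheory Real

/-- A ramp of slope one, of height `7 b`, starting at `a - b`. -/
noncomputable def ramp (a b w : ℝ) : ℝ := max 0 (min (w - (a - b)) (7 * b))

lemma ramp_cont (a b : ℝ) : Continuous (ramp a b) := by unfold ramp; fun_prop

lemma ramp_mono (a b : ℝ) : Monotone (ramp a b) := by
  intro u v h
  unfold ramp
  exact max_le_max le_rfl (min_le_min (by linarith) le_rfl)

lemma ramp_nonneg (a b w : ℝ) : 0 ≤ ramp a b w := le_max_left _ _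

lemma ramp_le (a b w : ℝ) (hb : 0 < b) : ramp a b w ≤ 7 * b :=
  max_le (by linarith) (min_le_right _ _)

lemma ramp_zero (a b w : ℝ) (h : w ≤ a - b) : ramp a b w = 0 :=
  max_eq_left ((min_le_left _ _).trans (by linarith))

lemma ramp_mid (a b w : ℝ) (h1 : a - b ≤ w) (h2 : w ≤ a + 6 * b) : ramp a b w = w - (a - b) := by
  unfold ramp
  rw [min_eq_left (by linarith), max_eq_right (by linarith)]

lemma ramp_pt (a b v x : ℝ) (hb : 0 < b) :
    (Set.Icc a (a + 5 * b)).indicator (fun _ => (1 : ℝ)) v * (|x| * min |x| b) ≤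
      x * (ramp a b v - ramp a b (v - x)) := by
  have nn : 0 ≤ x * (ramp a b v - ramp a b (v - x)) := by
    rcases le_total 0 x with h | h
    · exact mul_nonneg h (sub_nonneg.2 (ramp_mono a b (by linarith)))
    · exact mul_nonneg_of_nonpos_of_nonpos h (sub_nonpos.2 (ramp_mono a b (by linarith)))
  by_cases hv : v ∈ Set.Icc a (a + 5 * b)
  · rw [Set.indicator_of_mem hv, one_mul]
    obtain ⟨h1, h2⟩ := hv
    have ev := ramp_mid a b v (by linarith) (by linarith)
    rcases le_total 0 x with h | h
    · rw [abs_of_nonneg h]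
      apply mul_le_mul_of_nonneg_left _ h
      have e := ramp_mid a b (v - min x b) (by linarith [min_le_right x b])
        (by have : 0 ≤ min x b := le_min h hb.le
            linarith)
      have : ramp a b (v - x) ≤ ramp a b (v - min x b) := ramp_mono a b (by linarith [min_le_left x b])
      linarith
    · rw [abs_of_nonpos h]
      have e := ramp_mid a b (v + min (-x) b)
        (by have : 0 ≤ min (-x) b := le_min (by linarith) hb.le
            linarith) (by linarith [min_le_right (-x) b])
      have : ramp a b (v + min (-x) b) ≤ ramp a b (v - x) := ramp_mono a b (by linarith [min_le_left (-x) b])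
      have : -x * min (-x) b ≤ -x * (ramp a b (v - x) - ramp a b v) :=
        mul_le_mul_of_nonneg_left (by linarith) (by linarith)
      linarith
  · rw [Set.indicator_of_notMem hv, zero_mul]; exact nn

namespace TS
variable {Ω : Type*} [MeasurableSpace Ω] {μ : Measure Ω} [IsProbabilityMeasure μ] {n : ℕ}
  {x : Fin n → Ω → ℝ} {B b : ℝ}

lemma core (H : TS μ x B b) (S : Finset (Fin n)) (a K : ℝ) :
    ∫ ω, (Set.Icc a (a + 5 * b)).indicator (fun _ => (1 : ℝ)) (∑ j ∈ S, x j ω) *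
      (∑ j ∈ S, |x j ω| * min |x j ω| b) ∂μ ≤
    ∫ ω, (∑ j ∈ S, x j ω) * (ramp a b (∑ j ∈ S, x j ω) - K) ∂μ -
      ∑ j ∈ S, (∫ ω, x j ω ∂μ) * ∫ ω, (ramp a b (∑ k ∈ S.erase j, x k ω) - K) ∂μ := by
  have hf : Continuous (fun w => ramp a b w - K) := (ramp_cont a b).sub continuous_const
  rw [H.stein_id S hf]
  have bm : ∀ j, Bd (fun ω => min |x j ω| b) := fun j =>
    (H.bx j).cmp (f := fun u => min |u| b) (by fun_prop)
  have bi : Bd (fun ω => (Set.Icc a (a + 5 * b)).indicator (fun _ => (1 : ℝ)) (∑ j ∈ S, x j ω)) :=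
    (H.bS S).ind measurableSet_Icc
  simp_rw [Finset.mul_sum]
  rw [integral_finsetSum _ (fun j _ => (bi.mul ((H.bx j).abs.mul (bm j))).int μ), add_sub_cancel_right]
  apply Finset.sum_le_sum
  intro j hj
  apply integral_mono
  · exact (bi.mul ((H.bx j).abs.mul (bm j))).int μ
  · exact ((H.bx j).mul (((H.bS S).cmp hf).sub ((H.bS (S.erase j)).cmp hf))).int μ
  · intro ω
    have e : ∑ k ∈ S.erase j, x k ω = ∑ k ∈ S, x k ω - x j ω := by
      rw [← Finset.add_sum_erase S (fun k => x k ω) hj]; ring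
    have := ramp_pt a b (∑ k ∈ S, x k ω) (x j ω) H.b0
    simp only [e]
    refine this.trans (le_of_eq (by ring))

lemma bH (H : TS μ x B b) (j : Fin n) : Bd (fun ω => |x j ω| * min |x j ω| b) :=
  (H.bx j).cmp (f := fun u => |u| * min |u| b) (by fun_prop)

lemma EH (H : TS μ x B b) (i : Fin n) :
    0.607 ≤ ∑ j ∈ Finset.univ.erase i, ∫ ω, |x j ω| * min |x j ω| b ∂μ := by
  have hb := H.b0
  have h1 : ∀ j, ∫ ω, x j ω ^ 2 ∂μ - (4 * b)⁻¹ * ∫ ω, |x j ω| ^ 3 ∂μ ≤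
      ∫ ω, |x j ω| * min |x j ω| b ∂μ := by
    intro j
    rw [← integral_const_mul, ← integral_sub (((H.bx j).pow 2).int μ)
      ((((H.bx j).abs.pow 3).cmul _).int μ)]
    apply integral_mono
    · exact (((H.bx j).pow 2).sub (((H.bx j).abs.pow 3).cmul _)).int μ
    · exact (H.bH j).int μ
    · intro ω
      simp only
      rw [← sq_abs]
      set u := |x j ω|
      have hu : 0 ≤ u := abs_nonneg _
      rw [sub_le_iff_le_add, ← sub_le_iff_le_add', ← div_eq_inv_mul, le_div_iff₀ (by linarith)]
      rcases le_total u b with h | h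
      · rw [min_eq_left h]
        have : 0 ≤ u ^ 3 := by positivity
        nlinarith
      · rw [min_eq_right h]
        nlinarith [mul_nonneg hu (sq_nonneg (u - 2 * b))]
  have h2 : ∑ j ∈ Finset.univ.erase i, (∫ ω, x j ω ^ 2 ∂μ - (4 * b)⁻¹ * ∫ ω, |x j ω| ^ 3 ∂μ) ≤ _ :=
    Finset.sum_le_sum fun j _ => h1 j
  refine le_trans ?_ h2
  rw [Finset.sum_sub_distrib, ← Finset.mul_sum]
  have e1 := Finset.add_sum_erase Finset.univ (fun j => ∫ ω, x j ω ^ 2 ∂μ) (Finset.mem_univ i)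
  rw [H.var] at e1
  have e2 : ∑ j ∈ Finset.univ.erase i, ∫ ω, |x j ω| ^ 3 ∂μ ≤ b - B := by
    refine (Finset.sum_le_sum_of_subset_of_nonneg (Finset.subset_univ _)
      (fun i _ _ => H.T0 i)).trans ?_
    linarith [H.third]
  have e3 : (4 * b)⁻¹ * ∑ j ∈ Finset.univ.erase i, ∫ ω, |x j ω| ^ 3 ∂μ ≤ 1 / 4 - B := by
    rw [← div_eq_inv_mul, div_le_iff₀ (by linarith)]
    nlinarith [H.B0, H.b1, H.Bb, mul_nonneg H.B0 (show 0 ≤ 1 - 4 * b by linarith [H.b1])]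
  have := H.s_le i
  rw [show (0.143 : ℝ) = 143 / 1000 by norm_num] at this
  rw [show (0.607 : ℝ) = 607 / 1000 by norm_num]
  linarith

lemma VH (H : TS μ x B b) (S : Finset (Fin n)) :
    ∫ ω, (∑ j ∈ S, |x j ω| * min |x j ω| b - ∑ j ∈ S, ∫ ω', |x j ω'| * min |x j ω'| b ∂μ) ^ 2 ∂μ
      ≤ b ^ 2 := by
  have hi : iIndepFun (fun j ω => |x j ω| * min |x j ω| b) μ :=
    H.ind.comp (fun _ u => |u| * min |u| b) (fun _ => by fun_prop)
  refine (centered_sum S H.bH hi).trans ?_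
  have : ∀ j ∈ S, ∫ ω, (|x j ω| * min |x j ω| b) ^ 2 ∂μ ≤ b ^ 2 * ∫ ω, x j ω ^ 2 ∂μ := by
    intro j _
    rw [← integral_const_mul]
    apply integral_mono (((H.bH j).pow 2).int μ) ((((H.bx j).pow 2).cmul _).int μ)
    intro ω
    simp only
    rw [mul_pow, sq_abs, mul_comm]
    apply mul_le_mul_of_nonneg_right _ (sq_nonneg _)
    exact pow_le_pow_left₀ (le_min (abs_nonneg _) H.b0.le) (min_le_right _ _) 2
  refine (Finset.sum_le_sum this).trans ?_
  rw [← Finset.mul_sum]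
  have h1 := H.varS S
  have h2 := H.B0
  have : 0 ≤ b ^ 2 := sq_nonneg b
  nlinarith

/-- Uniform concentration. -/
lemma conc (H : TS μ x B b) (i : Fin n) (a : ℝ) :
    ∫ ω, (Set.Icc a (a + 5 * b)).indicator (fun _ => (1 : ℝ))
      (∑ j ∈ Finset.univ.erase i, x j ω) ∂μ ≤ 7.75 * b := by
  set S := Finset.univ.erase i with hS
  set V : Ω → ℝ := fun ω => ∑ j ∈ S, x j ω with hV
  set I : Ω → ℝ := fun ω => (Set.Icc a (a + 5 * b)).indicator (fun _ => (1 : ℝ)) (V ω) with hI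
  set Hh : Ω → ℝ := fun ω => ∑ j ∈ S, |x j ω| * min |x j ω| b with hHh
  set E := ∑ j ∈ S, ∫ ω, |x j ω| * min |x j ω| b ∂μ with hE
  have hb := H.b0
  have c1 := H.core S a (7 / 2 * b)
  have hE0 : 0.607 ≤ E := H.EH i
  have v1 := H.VH S
  have bV : Bd V := H.bS S
  have bI : Bd I := bV.ind measurableSet_Icc
  have bHh : Bd Hh := Bd.sum S fun j _ => H.bH j
  have I01 : ∀ ω, 0 ≤ I ω ∧ I ω ≤ 1 := by
    intro ω
    simp only [hI]
    by_cases h : V ω ∈ Set.Icc a (a + 5 * b) <;> simp [h]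
  have rb : ∀ w, |ramp a b w - 7 / 2 * b| ≤ 7 / 2 * b := fun w => by
    rw [abs_le]; constructor <;> linarith [ramp_nonneg a b w, ramp_le a b w hb]
  have hf : Continuous (fun w => ramp a b w - 7 / 2 * b) := (ramp_cont a b).sub continuous_const
  have t1 : ∫ ω, V ω * (ramp a b (V ω) - 7 / 2 * b) ∂μ ≤ 7 / 2 * b := by
    have : ∫ ω, V ω * (ramp a b (V ω) - 7 / 2 * b) ∂μ ≤ ∫ ω, 7 / 2 * b * |V ω| ∂μ := by
      apply integral_mono ((bV.mul (bV.cmp hf)).int μ) ((bV.abs.cmul _).int μ)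
      intro ω
      refine (le_abs_self _).trans ?_
      simp only
      rw [abs_mul, mul_comm]
      exact mul_le_mul_of_nonneg_right (rb _) (abs_nonneg _)
    rw [integral_const_mul] at this
    have h1 := H.m1 S
    nlinarith
  have t2 : - ∑ j ∈ S, (∫ ω, x j ω ∂μ) * ∫ ω, (ramp a b (∑ k ∈ S.erase j, x k ω) - 7 / 2 * b) ∂μ
      ≤ 7 / 2 * b * B := by
    refine (neg_le_abs _).trans ((Finset.abs_sum_le_sum_abs _ _).trans ?_)
    have : ∀ j ∈ S, |(∫ ω, x j ω ∂μ) * ∫ ω, (ramp a b (∑ k ∈ S.erase j, x k ω) - 7 / 2 * b) ∂μ| ≤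
        7 / 2 * b * |∫ ω, x j ω ∂μ| := by
      intro j _
      rw [abs_mul, mul_comm]
      apply mul_le_mul_of_nonneg_right _ (abs_nonneg _)
      refine abs_integral_le_integral_abs.trans ?_
      have : ∫ ω, |ramp a b (∑ k ∈ S.erase j, x k ω) - 7 / 2 * b| ∂μ ≤ ∫ ω, 7 / 2 * b ∂μ :=
        integral_mono (((H.bS (S.erase j)).cmp hf).abs.int μ) ((Bd.const _).int μ) (fun ω => rb _)
      simpa using this
    refine (Finset.sum_le_sum this).trans ?_
    rw [← Finset.mul_sum]
    exact mul_le_mul_of_nonneg_left (H.meanS' S) (by linarith)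
  have t3 : E * ∫ ω, I ω ∂μ ≤ ∫ ω, I ω * Hh ω ∂μ + b := by
    have q : ∫ ω, E * I ω ∂μ ≤ ∫ ω, (I ω * Hh ω + (b / 2 + (2 * b)⁻¹ * (Hh ω - E) ^ 2)) ∂μ := by
      apply integral_mono ((bI.cmul _).int μ)
      · exact ((bI.mul bHh).add ((Bd.const _).add (((bHh.sub (Bd.const _)).pow 2).cmul _))).int μ
      · intro ω
        simp only
        have e1 : |Hh ω - E| ≤ b / 2 + (2 * b)⁻¹ * (Hh ω - E) ^ 2 := by
          rw [← sub_le_iff_le_add', ← div_eq_inv_mul, le_div_iff₀ (by linarith), ← sq_abs]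
          nlinarith [sq_nonneg (|Hh ω - E| - b)]
        have e2 : I ω * (E - Hh ω) ≤ |Hh ω - E| := by
          refine (le_abs_self _).trans ?_
          rw [abs_mul, abs_sub_comm, abs_of_nonneg (I01 ω).1]
          exact mul_le_of_le_one_left (abs_nonneg _) (I01 ω).2
        linarith
    rw [integral_const_mul, integral_add ((bI.mul bHh).int μ)
      (((Bd.const _).add (((bHh.sub (Bd.const _)).pow 2).cmul _)).int μ),
      integral_add ((Bd.const _).int μ) ((((bHh.sub (Bd.const _)).pow 2).cmul _).int μ),
      integral_const_mul] at q
    have q2 : (2 * b)⁻¹ * ∫ ω, (Hh ω - E) ^ 2 ∂μ ≤ b / 2 := by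
      rw [← div_eq_inv_mul, div_le_iff₀ (by linarith)]
      refine v1.trans (le_of_eq (by ring))
    simp only [integral_const, probReal_univ, one_smul] at q
    linarith
  have nnI : 0 ≤ ∫ ω, I ω ∂μ := integral_nonneg fun ω => (I01 ω).1
  have := H.B1
  have : 7 / 2 * b * B ≤ 7 / 2 * b * (2 / 37) := mul_le_mul_of_nonneg_left (by linarith) (by linarith)
  have k1 : E * ∫ ω, I ω ∂μ ≤ 7 / 2 * b + 7 / 2 * b * (2 / 37) + b := by linarith
  have k2 : 0.607 * ∫ ω, I ω ∂μ ≤ E * ∫ ω, I ω ∂μ := mul_le_mul_of_nonneg_right hE0 nnI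
  norm_num at k2 ⊢
  linarith

/-- Concentration in the tail. -/
lemma conc_tail (H : TS μ x B b) (i : Fin n) (a c : ℝ) (hc : 19 ≤ c) (ha : c - 1 ≤ a) :
    ∫ ω, (Set.Icc a (a + 5 * b)).indicator (fun _ => (1 : ℝ))
      (∑ j ∈ Finset.univ.erase i, x j ω) ∂μ ≤ 150 / c ^ 2 * b := by
  set S := Finset.univ.erase i with hS
  set V : Ω → ℝ := fun ω => ∑ j ∈ S, x j ω with hV
  set I : Ω → ℝ := fun ω => (Set.Icc a (a + 5 * b)).indicator (fun _ => (1 : ℝ)) (V ω) with hI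
  set Hh : Ω → ℝ := fun ω => ∑ j ∈ S, |x j ω| * min |x j ω| b with hHh
  set E := ∑ j ∈ S, ∫ ω, |x j ω| * min |x j ω| b ∂μ with hE
  have hb := H.b0
  have hb1 := H.b1
  have c1 := H.core S a 0
  simp only [sub_zero] at c1
  have hE0 : 0.607 ≤ E := H.EH i
  have v1 := H.VH S
  have bV : Bd V := H.bS S
  have bI : Bd I := bV.ind measurableSet_Icc
  have bHh : Bd Hh := Bd.sum S fun j _ => H.bH j
  have hf := ramp_cont a b
  obtain ⟨y, hy⟩ : ∃ y, y = 9 / 10 * c := ⟨_, rfl⟩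
  have hy17 : 17 ≤ y := by rw [hy]; linarith
  have hya : y ≤ a - b := by rw [hy]; linarith
  have hy0 : 0 < y := by linarith
  have I01 : ∀ ω, 0 ≤ I ω ∧ I ω ≤ 1 ∧ I ω * y ^ 2 ≤ V ω ^ 2 := by
    intro ω
    simp only [hI]
    by_cases h : V ω ∈ Set.Icc a (a + 5 * b)
    · simp only [h, Set.indicator_of_mem]
      refine ⟨by norm_num, le_rfl, ?_⟩
      rw [one_mul]
      exact pow_le_pow_left₀ hy0.le (by linarith [h.1]) 2
    · simp only [h, not_false_eq_true, Set.indicator_of_notMem]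
      refine ⟨le_rfl, by norm_num, ?_⟩
      rw [zero_mul]; positivity
  have rb : ∀ w, ramp a b w * y ^ 2 ≤ 7 * b * w ^ 2 := by
    intro w
    rcases le_total w (a - b) with h | h
    · rw [ramp_zero a b w h, zero_mul]; positivity
    · exact mul_le_mul (ramp_le a b w hb) (pow_le_pow_left₀ hy0.le (by linarith) 2) (by positivity)
        (by linarith)
  have rb3 : ∀ w, w * ramp a b w * (17 * y ^ 2) ≤ 7 * b * w ^ 4 := by
    intro w
    rcases le_total w (a - b) with h | h
    · rw [ramp_zero a b w h, mul_zero, zero_mul]; positivity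
    · have h1 := rb w
      have hw : 17 ≤ w := by linarith
      have h2 : w * 17 * (ramp a b w * y ^ 2) ≤ w * 17 * (7 * b * w ^ 2) :=
        mul_le_mul_of_nonneg_left h1 (by linarith)
      have h3 : w * 17 * (7 * b * w ^ 2) ≤ w * w * (7 * b * w ^ 2) :=
        mul_le_mul_of_nonneg_right (by nlinarith) (by positivity)
      nlinarith
  have t1 : (∫ ω, V ω * ramp a b (V ω) ∂μ) * (17 * y ^ 2) ≤ 7 * b * 131 := by
    have : ∫ ω, V ω * ramp a b (V ω) * (17 * y ^ 2) ∂μ ≤ ∫ ω, 7 * b * V ω ^ 4 ∂μ := by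
      apply integral_mono (((bV.mul (bV.cmp hf)).mul (Bd.const _)).int μ) (((bV.pow 4).cmul _).int μ)
      intro ω
      exact rb3 _
    rw [integral_const_mul, integral_mul_const] at this
    exact this.trans (mul_le_mul_of_nonneg_left (H.m4 S) (by linarith))
  have t2 : (- ∑ j ∈ S, (∫ ω, x j ω ∂μ) * ∫ ω, ramp a b (∑ k ∈ S.erase j, x k ω) ∂μ) * y ^ 2
      ≤ 7 * b * B := by
    have l1 : (- ∑ j ∈ S, (∫ ω, x j ω ∂μ) * ∫ ω, ramp a b (∑ k ∈ S.erase j, x k ω) ∂μ)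
      ≤ ∑ j ∈ S, |∫ ω, x j ω ∂μ| * ∫ ω, ramp a b (∑ k ∈ S.erase j, x k ω) ∂μ := by
      refine (neg_le_abs _).trans ((Finset.abs_sum_le_sum_abs _ _).trans (le_of_eq ?_))
      apply Finset.sum_congr rfl
      intro j _
      have nn : 0 ≤ ∫ ω, ramp a b (∑ k ∈ S.erase j, x k ω) ∂μ :=
        integral_nonneg fun ω => ramp_nonneg _ _ _
      rw [abs_mul, abs_of_nonneg nn]
    refine (mul_le_mul_of_nonneg_right l1 (by positivity)).trans ?_
    rw [Finset.sum_mul]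
    have : ∀ j ∈ S, |∫ ω, x j ω ∂μ| * (∫ ω, ramp a b (∑ k ∈ S.erase j, x k ω) ∂μ) * y ^ 2 ≤
        7 * b * |∫ ω, x j ω ∂μ| := by
      intro j _
      rw [mul_assoc, mul_comm]
      apply mul_le_mul_of_nonneg_right _ (abs_nonneg _)
      rw [← integral_mul_const]
      have : ∫ ω, ramp a b (∑ k ∈ S.erase j, x k ω) * y ^ 2 ∂μ ≤
          ∫ ω, 7 * b * (∑ k ∈ S.erase j, x k ω) ^ 2 ∂μ :=
        integral_mono ((((H.bS (S.erase j)).cmp hf).mul (Bd.const _)).int μ)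
          ((((H.bS (S.erase j)).pow 2).cmul _).int μ) (fun ω => rb _)
      rw [integral_const_mul] at this
      have m := H.m2 (S.erase j)
      nlinarith
    refine (Finset.sum_le_sum this).trans ?_
    rw [← Finset.mul_sum]
    exact mul_le_mul_of_nonneg_left (H.meanS' S) (by linarith)
  have t3 : (E * ∫ ω, I ω ∂μ) * y ^ 2 ≤ (∫ ω, I ω * Hh ω ∂μ) * y ^ 2 + 11.5 * b := by
    have q : ∫ ω, E * I ω * y ^ 2 ∂μ ≤ ∫ ω, (I ω * Hh ω * y ^ 2 + (b / 24 * V ω ^ 4 +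
        6 * b⁻¹ * (Hh ω - E) ^ 2)) ∂μ := by
      apply integral_mono (((bI.cmul _).mul (Bd.const _)).int μ)
      · exact (((bI.mul bHh).mul (Bd.const _)).add (((bV.pow 4).cmul _).add
          (((bHh.sub (Bd.const _)).pow 2).cmul _))).int μ
      · intro ω
        simp only
        obtain ⟨i0, i1, i2⟩ := I01 ω
        have e1 : V ω ^ 2 * |Hh ω - E| ≤ b / 24 * V ω ^ 4 + 6 * b⁻¹ * (Hh ω - E) ^ 2 := by
          rw [← sub_le_iff_le_add', mul_comm 6 b⁻¹, mul_assoc b⁻¹, ← div_eq_inv_mul,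
            le_div_iff₀ (by linarith), ← sq_abs (Hh ω - E)]
          nlinarith [sq_nonneg (12 * |Hh ω - E| - b * V ω ^ 2)]
        have e2 : I ω * y ^ 2 * (E - Hh ω) ≤ V ω ^ 2 * |Hh ω - E| := by
          refine (le_abs_self _).trans ?_
          rw [abs_mul, abs_sub_comm, abs_of_nonneg (by positivity)]
          exact mul_le_mul_of_nonneg_right i2 (abs_nonneg _)
        linarith
    rw [integral_mul_const, integral_const_mul, integral_add (((bI.mul bHh).mul (Bd.const _)).int μ)
      ((((bV.pow 4).cmul _).add (((bHh.sub (Bd.const _)).pow 2).cmul _)).int μ),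
      integral_add (((bV.pow 4).cmul _).int μ) ((((bHh.sub (Bd.const _)).pow 2).cmul _).int μ),
      integral_const_mul, integral_const_mul, integral_mul_const] at q
    have q2 : 6 * b⁻¹ * ∫ ω, (Hh ω - E) ^ 2 ∂μ ≤ 6 * b := by
      rw [mul_assoc, ← div_eq_inv_mul]
      apply mul_le_mul_of_nonneg_left _ (by norm_num)
      rw [div_le_iff₀ hb]
      refine v1.trans (le_of_eq (by ring))
    have q3 : b / 24 * ∫ ω, V ω ^ 4 ∂μ ≤ b / 24 * 131 :=
      mul_le_mul_of_nonneg_left (H.m4 S) (by linarith)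
    norm_num at *
    linarith
  have nnI : 0 ≤ ∫ ω, I ω ∂μ := integral_nonneg fun ω => (I01 ω).1
  have hB := H.B1
  have : 7 * b * B ≤ 7 * b * (2 / 37) := mul_le_mul_of_nonneg_left (by linarith) (by linarith)
  have k0 : (∫ ω, I ω * Hh ω ∂μ) * y ^ 2 ≤ 54 * b + 7 * b * (2 / 37) := by
    have := mul_le_mul_of_nonneg_right c1 (show 0 ≤ y ^ 2 by positivity)
    simp only [sub_mul] at this
    linarith
  have k2 : 0.607 * (∫ ω, I ω ∂μ) * y ^ 2 ≤ E * (∫ ω, I ω ∂μ) * y ^ 2 :=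
    mul_le_mul_of_nonneg_right (mul_le_mul_of_nonneg_right hE0 nnI) (by positivity)
  have k3 : 0.607 * (∫ ω, I ω ∂μ) * y ^ 2 ≤ 66 * b := by norm_num at *; linarith
  rw [div_mul_eq_mul_div, le_div_iff₀ (by positivity)]
  rw [hy, mul_pow] at k3
  norm_num at k3
  linarith

end TS


open MeasureTheory ProbabilityTheory Real

section
variable {Ω : Type*} [MeasurableSpace Ω] {μ : Measure Ω} [IsProbabilityMeasure μ] {V : Ω → ℝ}

lemma shift_cont (hV : Measurable V) {g : ℝ → ℝ} (hg : Continuous g) (C : ℝ)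
    (hC : ∀ w, |g w| ≤ C) : Continuous (fun s => ∫ ω, g (V ω + s) ∂μ) := by
  apply continuous_of_dominated (bound := fun _ => C)
  · intro s
    exact (hg.measurable.comp (hV.add_const s)).aestronglyMeasurable
  · intro s
    exact Filter.Eventually.of_forall fun ω => hC _
  · exact integrable_const C
  · exact Filter.Eventually.of_forall fun ω => by fun_prop

lemma shift_deriv (hV : Measurable V) {f f' : ℝ → ℝ} (hf : ∀ w, HasDerivAt f (f' w) w)
    (hc : Continuous f') (C C' : ℝ) (hC : ∀ w, |f w| ≤ C) (hC' : ∀ w, |f' w| ≤ C') (s : ℝ) :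
    HasDerivAt (fun s => ∫ ω, f (V ω + s) ∂μ) (∫ ω, f' (V ω + s) ∂μ) s := by
  have hfc : Continuous f := continuous_iff_continuousAt.2 fun t => (hf t).continuousAt
  have hm : ∀ s, AEStronglyMeasurable (fun ω => f (V ω + s)) μ := fun s =>
    (hfc.measurable.comp (hV.add_const s)).aestronglyMeasurable
  refine (hasDerivAt_integral_of_dominated_loc_of_deriv_le (μ := μ) (𝕜 := ℝ)
    (F := fun s ω => f (V ω + s)) (F' := fun s ω => f' (V ω + s)) (x₀ := s)
    (bound := fun _ => C') (s := Set.univ) Filter.univ_mem ?_ ?_ ?_ ?_ ?_ ?_).2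
  · exact Filter.Eventually.of_forall hm
  · exact Integrable.of_bound (hm s) C (Filter.Eventually.of_forall fun ω => hC _)
  · exact (hc.measurable.comp (hV.add_const s)).aestronglyMeasurable
  · exact Filter.Eventually.of_forall fun ω t _ => hC' _
  · exact integrable_const C'
  · refine Filter.Eventually.of_forall fun ω t _ => ?_
    have := (hf (V ω + t)).comp_const_add (V ω) t
    exact this

lemma shift_h (hV : Measurable V) (c δ Q : ℝ) (hδ : 0 < δ)
    (hQ : ∀ u, |u| ≤ 1 → ∫ ω, (Set.Icc c (c + δ)).indicator (fun _ => (1 : ℝ)) (V ω + u) ∂μ ≤ Q)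
    (s t : ℝ) (hs : |s| ≤ 1) (ht : |t| ≤ 1) (hst : s ≤ t) :
    |∫ ω, hsm c δ (V ω + s) ∂μ - ∫ ω, hsm c δ (V ω + t) ∂μ| ≤ δ⁻¹ * Q * (t - s) := by
  have H := hsm_TF c δ hδ
  have hint : ∀ s, Integrable (fun ω => hsm c δ (V ω + s)) μ := fun s =>
    Integrable.of_bound (H.cont.measurable.comp (hV.add_const s)).aestronglyMeasurable 1
      (Filter.Eventually.of_forall fun ω => by
        rw [Real.norm_eq_abs, abs_of_nonneg (H.nn _)]; exact H.le1 _)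
  set J : ℝ → ℝ := (Set.Icc c (c + δ)).indicator (fun _ => (1 : ℝ)) with hJ
  have J1 : ∀ w, |J w| ≤ 1 := fun w => by
    simp only [hJ]; by_cases h : w ∈ Set.Icc c (c + δ) <;> simp [h]
  have J0 : ∀ w, 0 ≤ J w := fun w => by
    simp only [hJ]; by_cases h : w ∈ Set.Icc c (c + δ) <;> simp [h]
  have Jm : Measurable J := measurable_const.indicator measurableSet_Icc
  have hm2 : Measurable (fun p : Ω × ℝ => J (V p.1 + p.2)) :=
    Jm.comp ((hV.comp measurable_fst).add measurable_snd)
  have hint2 : Integrable (Function.uncurry fun ω u => J (V ω + u))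
      (μ.prod (volume.restrict (Set.Ioc s t))) :=
    Integrable.of_bound hm2.aestronglyMeasurable 1 (Filter.Eventually.of_forall fun p => J1 _)
  rw [← integral_sub (hint s) (hint t)]
  refine abs_integral_le_integral_abs.trans ?_
  have h1 : ∫ ω, |hsm c δ (V ω + s) - hsm c δ (V ω + t)| ∂μ ≤
      ∫ ω, δ⁻¹ * (∫ u in Set.Ioc s t, J (V ω + u)) ∂μ := by
    apply integral_mono ((hint s).sub (hint t)).abs
    · exact (hint2.integral_prod_left).const_mul _
    · intro ω
      exact hsm_diff c δ (V ω) s t hδ hst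
  refine h1.trans ?_
  rw [integral_const_mul, integral_integral_swap hint2, mul_assoc]
  apply mul_le_mul_of_nonneg_left _ (inv_nonneg.2 hδ.le)
  have h2 : ∫ u in Set.Ioc s t, (∫ ω, J (V ω + u) ∂μ) ≤ ∫ u in Set.Ioc s t, Q := by
    apply setIntegral_mono_on hint2.integral_prod_right (integrable_const Q) measurableSet_Ioc
    intro u hu
    apply hQ
    rw [abs_le] at *
    constructor <;> linarith [hu.1, hu.2]
  refine h2.trans (le_of_eq ?_)
  simp [Real.volume_real_Ioc, max_eq_left (sub_nonneg.2 hst), mul_comm]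

end

namespace TS
variable {Ω : Type*} [MeasurableSpace Ω] {μ : Measure Ω} [IsProbabilityMeasure μ] {n : ℕ}
  {x : Fin n → Ω → ℝ} {B b : ℝ}

lemma stein_main (H : TS μ x B b) (c δ Mg Q D0 D1 : ℝ) (hδ : 0 < δ) (hMg : 0 ≤ Mg) (hQ0 : 0 ≤ Q)
    (hg : ∀ i : Fin n, ∀ s t, |s| ≤ 1 → |t| ≤ 1 → s ≤ t →
      |∫ ω, (∑ j ∈ Finset.univ.erase i, x j ω + s) * sf (hsm c δ)
          (∑ j ∈ Finset.univ.erase i, x j ω + s) ∂μ -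
        ∫ ω, (∑ j ∈ Finset.univ.erase i, x j ω + t) * sf (hsm c δ)
          (∑ j ∈ Finset.univ.erase i, x j ω + t) ∂μ| ≤ Mg * (t - s))
    (hQ : ∀ i : Fin n, ∀ u, |u| ≤ 1 → ∫ ω, (Set.Icc c (c + δ)).indicator (fun _ => (1 : ℝ))
      (∑ j ∈ Finset.univ.erase i, x j ω + u) ∂μ ≤ Q)
    (hD1 : |∫ ω, sf' (hsm c δ) (∑ j, x j ω) ∂μ| ≤ D1)
    (hD0 : ∀ i : Fin n, |∫ ω, sf (hsm c δ) (∑ j ∈ Finset.univ.erase i, x j ω) ∂μ| ≤ D0) :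
    |∫ ω, hsm c δ (∑ j, x j ω) ∂μ - NN (hsm c δ)| ≤
      (Mg + δ⁻¹ * Q) * (∑ i, ∫ ω, |x i ω| ^ 3 ∂μ + 0.0715 * B) + B * D1 + B * D0 := by
  have T := hsm_TF c δ hδ
  set h := hsm c δ with hh
  set f := sf h with hf
  set f' := sf' h with hf'
  set M := Mg + δ⁻¹ * Q with hM
  have hM0 : 0 ≤ M := by positivity
  have bW : Bd (fun ω => ∑ j, x j ω) := H.bS Finset.univ
  have fc : Continuous f := T.sf_cont
  have f'c : Continuous f' := T.sf'_cont
  have hgc : Continuous (fun w => w * f w) := continuous_id.mul fc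
  set ψ := ∫ ω, f' (∑ j, x j ω) ∂μ with hψ
  -- the Stein equation
  have eq1 : ∫ ω, h (∑ j, x j ω) ∂μ - NN h = ψ - ∫ ω, (∑ j, x j ω) * f (∑ j, x j ω) ∂μ := by
    have e : ψ = ∫ ω, ((∑ j, x j ω) * f (∑ j, x j ω) + h (∑ j, x j ω) - NN h) ∂μ := rfl
    rw [e, integral_sub (((bW.mul (bW.cmp fc)).add (bW.cmp T.cont)).int μ) ((Bd.const _).int μ),
      integral_add ((bW.mul (bW.cmp fc)).int μ) ((bW.cmp T.cont).int μ)]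
    simp; ring
  have eq2 := H.stein_id Finset.univ fc
  have key : ∀ i : Fin n, |(∫ ω, x i ω ^ 2 ∂μ) * ψ -
      ∫ ω, x i ω * (f (∑ k, x k ω) - f (∑ k ∈ Finset.univ.erase i, x k ω)) ∂μ| ≤
      M * ((∫ ω, |x i ω| ^ 3 ∂μ) + 0.0715 * |∫ ω, x i ω ∂μ|) := by
    intro i
    set V : Ω → ℝ := fun ω => ∑ j ∈ Finset.univ.erase i, x j ω with hV
    have bV : Bd V := H.bS _
    have hind : IndepFun (x i) V μ := (H.indS (Finset.notMem_erase i _)).symm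
    have eW : ∀ ω, ∑ k, x k ω = V ω + x i ω := fun ω => by
      rw [← Finset.add_sum_erase Finset.univ (fun k => x k ω) (Finset.mem_univ i), add_comm]
    set φ : ℝ → ℝ := fun s => ∫ ω, f' (V ω + s) ∂μ with hφ
    set F : ℝ → ℝ := fun s => ∫ ω, f (V ω + s) ∂μ with hF
    have hFd : ∀ t, HasDerivAt F (φ t) t :=
      shift_deriv bV.1 T.hasDeriv f'c (3 / 2) 1 T.abs_sf_le T.abs_sf'_le
    have hφc : Continuous φ := shift_cont bV.1 f'c 1 T.abs_sf'_le
    have hφe : ∀ s, φ s = ∫ ω, (V ω + s) * f (V ω + s) ∂μ + ∫ ω, h (V ω + s) ∂μ - NN h := by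
      intro s
      have bs : Bd (fun ω => V ω + s) := bV.add (Bd.const s)
      have e : φ s = ∫ ω, ((V ω + s) * f (V ω + s) + h (V ω + s) - NN h) ∂μ := rfl
      rw [e, integral_sub (((bs.mul (bs.cmp fc)).add (bs.cmp T.cont)).int μ) ((Bd.const _).int μ),
        integral_add ((bs.mul (bs.cmp fc)).int μ) ((bs.cmp T.cont).int μ)]
      simp
    have lip0 : ∀ s t, |s| ≤ 1 → |t| ≤ 1 → s ≤ t → |φ s - φ t| ≤ M * (t - s) := by
      intro s t hs ht hst
      have h1 := hg i s t hs ht hst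
      have h2 := shift_h bV.1 c δ Q hδ (hQ i) s t hs ht hst
      rw [hφe s, hφe t, hM, add_mul]
      refine le_trans (le_of_eq ?_) ((abs_add_le _ _).trans (add_le_add h1 h2))
      congr 1; ring
    have lip : ∀ s t, |s| ≤ 1 → |t| ≤ 1 → |φ s - φ t| ≤ M * |s - t| := by
      intro s t hs ht
      rcases le_total s t with hst | hst
      · rw [abs_sub_comm s t, abs_of_nonneg (sub_nonneg.2 hst)]; exact lip0 s t hs ht hst
      · rw [abs_sub_comm, abs_of_nonneg (sub_nonneg.2 hst)]; exact lip0 t s ht hs hst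
    have sb := sym_bound (μ := μ) (H.meas i) (H.bd i) hM0 hFd hφc lip
    have f1 : ψ = ∫ ω, φ (x i ω) ∂μ := by
      have := indep_fubini (H.meas i) bV.1 hind (k := fun a v => f' (v + a))
        (f'c.measurable.comp (measurable_snd.add measurable_fst)) 1 (fun _ _ => T.abs_sf'_le _)
      rw [← this, hψ]
      simp_rw [eW]
    have f2 : ∫ ω, x i ω * (f (∑ k, x k ω) - f (V ω)) ∂μ = ∫ ω, x i ω * (F (x i ω) - F 0) ∂μ := by
      have := indep_fubini (H.meas i) bV.1 hind (k := fun a v => a * (f (v + a) - f v))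
        (by
          have : Continuous (fun p : ℝ × ℝ => p.1 * (f (p.2 + p.1) - f p.2)) := by fun_prop
          exact this.measurable) 3 (fun ω ω' => by
            rw [abs_mul]
            have a1 := H.bd i ω
            have a2 : |f (V ω' + x i ω) - f (V ω')| ≤ 3 := by
              refine (abs_sub _ _).trans ?_
              have := T.abs_sf_le (V ω' + x i ω)
              have := T.abs_sf_le (V ω')
              linarith
            nlinarith [abs_nonneg (x i ω), abs_nonneg (f (V ω' + x i ω) - f (V ω'))])
      simp_rw [eW]
      rw [this]
      congr 1; funext ω
      have bs : Bd (fun ω' => V ω' + x i ω) := bV.add (Bd.const _)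
      rw [integral_const_mul, integral_sub ((bs.cmp fc).int μ) ((bV.cmp fc).int μ)]
      simp [hF]
    rw [f1, f2]
    refine sb.trans (mul_le_mul_of_nonneg_left ?_ hM0)
    have h1 := H.s_le i
    have h2 := abs_nonneg (∫ ω, x i ω ∂μ)
    have h3 : |∫ ω, x i ω ∂μ| * (∫ ω, x i ω ^ 2 ∂μ) ≤ |∫ ω, x i ω ∂μ| * 0.143 :=
      mul_le_mul_of_nonneg_left h1 h2
    norm_num at h3 ⊢
    linarith
  have dec : ψ - ∫ ω, (∑ j, x j ω) * f (∑ j, x j ω) ∂μ =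
      ∑ i, ((∫ ω, x i ω ^ 2 ∂μ) * ψ -
        ∫ ω, x i ω * (f (∑ k, x k ω) - f (∑ k ∈ Finset.univ.erase i, x k ω)) ∂μ) + B * ψ -
      ∑ i, (∫ ω, x i ω ∂μ) * ∫ ω, f (∑ k ∈ Finset.univ.erase i, x k ω) ∂μ := by
    rw [Finset.sum_sub_distrib, ← Finset.sum_mul, H.var, eq2]; ring
  rw [eq1, dec]
  have p1 := (Finset.abs_sum_le_sum_abs (fun i => (∫ ω, x i ω ^ 2 ∂μ) * ψ -
        ∫ ω, x i ω * (f (∑ k, x k ω) - f (∑ k ∈ Finset.univ.erase i, x k ω)) ∂μ)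
        Finset.univ).trans (Finset.sum_le_sum fun i _ => key i)
  rw [← Finset.mul_sum, Finset.sum_add_distrib, ← Finset.mul_sum] at p1
  have p2 : M * (∑ i, ∫ ω, |x i ω| ^ 3 ∂μ + 0.0715 * ∑ i, |∫ ω, x i ω ∂μ|) ≤
      M * (∑ i, ∫ ω, |x i ω| ^ 3 ∂μ + 0.0715 * B) := by
    apply mul_le_mul_of_nonneg_left _ hM0
    have := H.mean
    norm_num
    linarith
  have p3 : |B * ψ| ≤ B * D1 := by
    rw [abs_mul, abs_of_nonneg H.B0]; exact mul_le_mul_of_nonneg_left hD1 H.B0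
  have p4 : |∑ i, (∫ ω, x i ω ∂μ) * ∫ ω, f (∑ k ∈ Finset.univ.erase i, x k ω) ∂μ| ≤ B * D0 := by
    refine (Finset.abs_sum_le_sum_abs _ _).trans ?_
    have : ∀ i ∈ Finset.univ, |(∫ ω, x i ω ∂μ) * ∫ ω, f (∑ k ∈ Finset.univ.erase i, x k ω) ∂μ| ≤
        |∫ ω, x i ω ∂μ| * D0 := fun i _ => by
      rw [abs_mul]; exact mul_le_mul_of_nonneg_left (hD0 i) (abs_nonneg _)
    refine (Finset.sum_le_sum this).trans ?_
    rw [← Finset.sum_mul]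
    rcases Nat.eq_zero_or_pos n with hn | hn
    · subst hn
      have := H.var
      have := H.B1
      simp at *
      linarith
    · exact mul_le_mul_of_nonneg_right H.mean ((abs_nonneg _).trans (hD0 ⟨0, hn⟩))
  refine (abs_sub _ _).trans (add_le_add ((abs_add_le _ _).trans (add_le_add (p1.trans p2) p3)) p4)

end TS


open MeasureTheory ProbabilityTheory Real

lemma ind_shift (c δ v u : ℝ) : (Set.Icc c (c + δ)).indicator (fun _ => (1 : ℝ)) (v + u) =
    (Set.Icc (c - u) (c - u + δ)).indicator (fun _ => (1 : ℝ)) v := by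
  by_cases hv : v ∈ Set.Icc (c - u) (c - u + δ)
  · rw [Set.indicator_of_mem hv, Set.indicator_of_mem]
    constructor <;> linarith [hv.1, hv.2]
  · rw [Set.indicator_of_notMem hv, Set.indicator_of_notMem]
    intro h; apply hv; constructor <;> linarith [h.1, h.2]

lemma g_diff {h : ℝ → ℝ} (T : TF h) (a b : ℝ) (hab : a ≤ b) :
    |a * sf h a - b * sf h b| ≤ (3 / 2 * b + b ^ 3 / 12) - (3 / 2 * a + a ^ 3 / 12) := by
  have mono : ∀ ε : ℝ, |ε| = 1 →
      Monotone (fun w => (3 / 2 * w + w ^ 3 / 12) + ε * (w * sf h w)) := by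
    intro ε hε
    have hd : ∀ t, HasDerivAt (fun w => (3 / 2 * w + w ^ 3 / 12) + ε * (w * sf h w))
        (3 / 2 + t ^ 2 / 4 + ε * (sf h t + t * sf' h t)) t := by
      intro t
      have := (((hasDerivAt_id t).const_mul (3 / 2 : ℝ)).add
        ((hasDerivAt_pow 3 t).div_const 12)).add ((T.hasDeriv_g t).const_mul ε)
      exact this.congr_deriv (by push_cast; ring)
    apply monotone_of_deriv_nonneg (fun t => (hd t).differentiableAt)
    intro t
    rw [(hd t).deriv]
    have h1 := T.abs_g'_le t
    have h2 : |ε * (sf h t + t * sf' h t)| ≤ 3 / 2 + t ^ 2 / 4 := by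
      rw [abs_mul, hε, one_mul]; exact h1
    linarith [neg_abs_le (ε * (sf h t + t * sf' h t))]
  have k1 := mono 1 (by simp) hab
  have k2 := mono (-1) (by simp) hab
  simp only at k1 k2
  rw [abs_le]
  constructor <;> linarith

lemma g_diff_tail {c δ : ℝ} (hδ : 0 < δ) (hc : 19 ≤ c) (v s t : ℝ) (hs : |s| ≤ 1) (ht : |t| ≤ 1)
    (hst : s ≤ t) :
    |(v + s) * sf (hsm c δ) (v + s) - (v + t) * sf (hsm c δ) (v + t)| ≤
      (18 + 16 * v ^ 4) / c ^ 2 * (t - s) := by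
  have T := hsm_TF c δ hδ
  have key := Convex.norm_image_sub_le_of_norm_hasDerivWithin_le (𝕜 := ℝ)
    (f := fun w => w * sf (hsm c δ) w)
    (f' := fun w => sf (hsm c δ) w + w * sf' (hsm c δ) w) (s := Set.Icc (v - 1) (v + 1))
    (x := v + t) (y := v + s) (C := (18 + 16 * v ^ 4) / c ^ 2)
    (fun w _ => (T.hasDeriv_g w).hasDerivWithinAt) (fun w hw => ?_) (convex_Icc _ _) ?_ ?_
  · simp only [Real.norm_eq_abs] at key
    rw [abs_sub_comm (v + s)] at key
    rw [show v + t - (v + s) = t - s by ring, abs_of_nonneg (sub_nonneg.2 hst)] at key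
    exact key
  · rw [Real.norm_eq_abs]
    refine (g'_tail hδ hc w).trans ?_
    apply div_le_div_of_nonneg_right _ (by positivity)
    obtain ⟨r, hr⟩ : ∃ r, r = w - v := ⟨_, rfl⟩
    have hw' : w = v + r := by rw [hr]; ring
    have r1 : r ^ 2 ≤ 1 := by
      have := hw.1
      have := hw.2
      nlinarith
    have r4 : r ^ 4 ≤ 1 := by nlinarith [sq_nonneg (r ^ 2)]
    have a1 : (v + r) ^ 2 ≤ 2 * (v ^ 2 + r ^ 2) := by nlinarith [sq_nonneg (v - r)]
    have a2 : (v + r) ^ 4 ≤ 8 * (v ^ 4 + r ^ 4) := by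
      have : ((v + r) ^ 2) ^ 2 ≤ (2 * (v ^ 2 + r ^ 2)) ^ 2 := pow_le_pow_left₀ (sq_nonneg _) a1 2
      nlinarith [sq_nonneg (v ^ 2 - r ^ 2)]
    rw [hw']
    linarith
  · have := abs_le.1 ht
    constructor <;> linarith
  · have := abs_le.1 hs
    constructor <;> linarith

namespace TS
variable {Ω : Type*} [MeasurableSpace Ω] {μ : Measure Ω} [IsProbabilityMeasure μ] {n : ℕ}
  {x : Fin n → Ω → ℝ} {B b : ℝ}

lemma abs_int_le (X : Ω → ℝ) (C : ℝ) (h : ∀ ω, |X ω| ≤ C) (hX : Measurable X) :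
    |∫ ω, X ω ∂μ| ≤ C := by
  refine abs_integral_le_integral_abs.trans ?_
  have : ∫ ω, |X ω| ∂μ ≤ ∫ _, C ∂μ :=
    integral_mono ((Bd.abs ⟨hX, C, h⟩).int μ) ((Bd.const C).int μ) h
  simpa using this

lemma main_unif (H : TS μ x B b) (c : ℝ) :
    |∫ ω, hsm c (5 * b) (∑ j, x j ω) ∂μ - NN (hsm c (5 * b))| ≤ 3.58 * b := by
  have hb := H.b0
  have hδ : 0 < 5 * b := by linarith
  have T := hsm_TF c (5 * b) hδ
  have gc : Continuous (fun w => w * sf (hsm c (5 * b)) w) := continuous_id.mul T.sf_cont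
  have h := H.stein_main c (5 * b) 2.03 (7.75 * b) (3 / 2) 1 hδ (by norm_num) (by positivity)
    ?_ ?_ ?_ ?_
  · refine h.trans ?_
    have e : (5 * b)⁻¹ * (7.75 * b) = 1.55 := by field_simp; norm_num
    rw [e]
    have := H.third
    have := H.B0
    norm_num at *
    linarith
  · intro i s t hs ht hst
    set V : Ω → ℝ := fun ω => ∑ j ∈ Finset.univ.erase i, x j ω with hV
    have bV : Bd V := H.bS _
    have bb : ∀ s, Bd (fun ω => (V ω + s) * sf (hsm c (5 * b)) (V ω + s)) := fun s =>
      (bV.add (Bd.const s)).cmp gc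
    rw [← integral_sub ((bb s).int μ) ((bb t).int μ)]
    refine abs_integral_le_integral_abs.trans ?_
    have b1 := (bV.pow 2).cmul (3 : ℝ)
    have b2 := bV.cmul (3 * (s + t))
    have q : ∫ ω, |(V ω + s) * sf (hsm c (5 * b)) (V ω + s) -
        (V ω + t) * sf (hsm c (5 * b)) (V ω + t)| ∂μ ≤
        ∫ ω, ((t - s) / 12) * (18 + (3 * V ω ^ 2 + (3 * (s + t) * V ω + (s ^ 2 + s * t + t ^ 2)))) ∂μ := by
      apply integral_mono (((bb s).sub (bb t)).abs.int μ)
      · exact (((Bd.const 18).add (b1.add (b2.add (Bd.const _)))).cmul _).int μ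
      · intro ω
        refine (g_diff T _ _ (by linarith)).trans (le_of_eq ?_)
        ring
    refine q.trans ?_
    rw [integral_const_mul, integral_add ((Bd.const _).int μ) ((b1.add (b2.add (Bd.const _))).int μ),
      integral_add (b1.int μ) ((b2.add (Bd.const _)).int μ), integral_add (b2.int μ)
      ((Bd.const _).int μ), integral_const_mul, integral_const_mul]
    simp only [integral_const, probReal_univ, one_smul]
    have m2 : ∫ ω, V ω ^ 2 ∂μ ≤ 1 := H.m2 _
    have m1 : |∫ ω, V ω ∂μ| ≤ B := by rw [hV, H.intS]; exact H.meanS _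
    have hs' := abs_le.1 hs
    have ht' := abs_le.1 ht
    have c1 : 3 * (s + t) * ∫ ω, V ω ∂μ ≤ 6 * B := by
      refine (le_abs_self _).trans ?_
      rw [abs_mul]
      apply mul_le_mul _ m1 (abs_nonneg _) (by norm_num)
      rw [abs_le]; constructor <;> linarith
    have c2 : s ^ 2 + s * t + t ^ 2 ≤ 3 := by nlinarith
    have hB := H.B1
    have := sub_nonneg.2 hst
    have : (t - s) / 12 * (18 + (3 * (∫ ω, V ω ^ 2 ∂μ) + (3 * (s + t) * (∫ ω, V ω ∂μ) +
        (s ^ 2 + s * t + t ^ 2)))) ≤ (t - s) / 12 * (24 + 12 / 37) :=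
      mul_le_mul_of_nonneg_left (by linarith) (by linarith)
    norm_num at *
    linarith
  · intro i u hu
    simp_rw [ind_shift]
    exact H.conc i _
  · exact abs_int_le _ _ (fun ω => T.abs_sf'_le _) (T.sf'_cont.measurable.comp (H.bS Finset.univ).1)
  · intro i
    exact abs_int_le _ _ (fun ω => T.abs_sf_le _) (T.sf_cont.measurable.comp (H.bS _).1)

lemma quad_int (H : TS μ x B b) (S : Finset (Fin n)) (C c : ℝ) (hC : 0 ≤ C) (hc : 0 < c) {f : ℝ → ℝ}
    (hf : Continuous f) (h : ∀ w, |f w| ≤ (1 + C * w ^ 2) / c ^ 2) :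
    |∫ ω, f (∑ j ∈ S, x j ω) ∂μ| ≤ (1 + C) / c ^ 2 := by
  have bV := H.bS S
  refine abs_integral_le_integral_abs.trans ?_
  have : ∫ ω, |f (∑ j ∈ S, x j ω)| ∂μ ≤ ∫ ω, (1 + C * (∑ j ∈ S, x j ω) ^ 2) / c ^ 2 ∂μ := by
    apply integral_mono ((bV.cmp hf).abs.int μ)
    · exact (((Bd.const 1).add ((bV.pow 2).cmul C)).int μ).div_const _
    · exact fun ω => h _
  refine this.trans ?_
  rw [integral_div]
  apply div_le_div_of_nonneg_right _ (by positivity)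
  rw [integral_add ((Bd.const 1).int μ) (((bV.pow 2).cmul C).int μ), integral_const_mul]
  simp only [integral_const, probReal_univ, one_smul]
  have := mul_le_mul_of_nonneg_left (H.m2 S) hC
  linarith

lemma main_tail (H : TS μ x B b) (c : ℝ) (hc : 19 ≤ c) :
    |∫ ω, hsm c (5 * b) (∑ j, x j ω) ∂μ - NN (hsm c (5 * b))| ≤ 2200 / c ^ 2 * b := by
  have hb := H.b0
  have hδ : 0 < 5 * b := by linarith
  have hc0 : 0 < c := by linarith
  have T := hsm_TF c (5 * b) hδ
  have gc : Continuous (fun w => w * sf (hsm c (5 * b)) w) := continuous_id.mul T.sf_cont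
  have h := H.stein_main c (5 * b) (2114 / c ^ 2) (150 / c ^ 2 * b) (7 / c ^ 2) (5 / c ^ 2) hδ
    (by positivity) (by positivity) ?_ ?_ ?_ ?_
  · refine h.trans ?_
    have e : (5 * b)⁻¹ * (150 / c ^ 2 * b) = 30 / c ^ 2 := by field_simp; norm_num
    rw [e]
    obtain ⟨r, hr⟩ : ∃ r, r = (c ^ 2)⁻¹ := ⟨_, rfl⟩
    have hr0 : 0 ≤ r := by rw [hr]; positivity
    simp only [div_eq_mul_inv, ← hr]
    have h3 := mul_le_mul_of_nonneg_left H.third hr0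
    have h4 := mul_nonneg hr0 H.B0
    have h5 := mul_nonneg hr0 hb.le
    norm_num
    nlinarith
  · intro i s t hs ht hst
    set V : Ω → ℝ := fun ω => ∑ j ∈ Finset.univ.erase i, x j ω with hV
    have bV : Bd V := H.bS _
    have bb : ∀ s, Bd (fun ω => (V ω + s) * sf (hsm c (5 * b)) (V ω + s)) := fun s =>
      (bV.add (Bd.const s)).cmp gc
    rw [← integral_sub ((bb s).int μ) ((bb t).int μ)]
    refine abs_integral_le_integral_abs.trans ?_
    have b1 := (bV.pow 4).cmul (16 : ℝ)
    have q : ∫ ω, |(V ω + s) * sf (hsm c (5 * b)) (V ω + s) -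
        (V ω + t) * sf (hsm c (5 * b)) (V ω + t)| ∂μ ≤
        ∫ ω, (18 + 16 * V ω ^ 4) / c ^ 2 * (t - s) ∂μ := by
      apply integral_mono (((bb s).sub (bb t)).abs.int μ)
      · exact ((((Bd.const 18).add b1).int μ).div_const _).mul_const _
      · intro ω
        exact g_diff_tail hδ hc _ s t hs ht hst
    refine q.trans ?_
    rw [integral_mul_const, integral_div]
    apply mul_le_mul_of_nonneg_right _ (sub_nonneg.2 hst)
    apply div_le_div_of_nonneg_right _ (by positivity)
    rw [integral_add ((Bd.const _).int μ) (b1.int μ), integral_const_mul]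
    simp only [integral_const, probReal_univ, one_smul]
    have : ∫ ω, V ω ^ 4 ∂μ ≤ 131 := H.m4 _
    linarith
  · intro i u hu
    simp_rw [ind_shift]
    exact H.conc_tail i _ c hc (by linarith [(abs_le.1 hu).2])
  · have := H.quad_int Finset.univ 4 c (by norm_num) hc0 T.sf'_cont (sf'_tail hδ hc)
    norm_num at this
    exact this
  · intro i
    have := H.quad_int (Finset.univ.erase i) 6 c (by norm_num) hc0 T.sf_cont (sf_tail hδ hc)
    rw [show (1 + 6 : ℝ) = 7 by norm_num] at this
    exact this

end TS


open MeasureTheory ProbabilityTheory Real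

section
variable {Ω : Type*} [MeasurableSpace Ω] {μ : Measure Ω} [IsProbabilityMeasure μ]

lemma prob_le_int {S : Set Ω} (hS : MeasurableSet S) {f : Ω → ℝ} (hf : Integrable f μ)
    (h0 : ∀ ω, 0 ≤ f ω) (h1 : ∀ ω ∈ S, 1 ≤ f ω) : μ.real S ≤ ∫ ω, f ω ∂μ := by
  rw [← integral_indicator_one hS]
  apply integral_mono ((integrable_const (1 : ℝ)).indicator hS) hf
  intro ω
  by_cases h : ω ∈ S
  · simp only [h, Set.indicator_of_mem, Pi.one_apply]; exact h1 ω h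
  · simp only [h, not_false_eq_true, Set.indicator_of_notMem]; exact h0 ω

lemma int_le_prob {S : Set Ω} (hS : MeasurableSet S) {f : Ω → ℝ} (hf : Integrable f μ)
    (h0 : ∀ ω, f ω ≤ 1) (h1 : ∀ ω, ω ∉ S → f ω ≤ 0) : ∫ ω, f ω ∂μ ≤ μ.real S := by
  rw [← integral_indicator_one hS]
  apply integral_mono hf ((integrable_const (1 : ℝ)).indicator hS)
  intro ω
  by_cases h : ω ∈ S
  · simp only [h, Set.indicator_of_mem, Pi.one_apply]; exact h0 ω
  · simp only [h, not_false_eq_true, Set.indicator_of_notMem]; exact h1 ω h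

lemma markov2 {X : Ω → ℝ} (hX : Measurable X) (hi : Integrable (fun ω => X ω ^ 2) μ)
    (h1 : ∫ ω, X ω ^ 2 ∂μ ≤ 1) {r : ℝ} (hr : 0 < r) : μ.real {ω | r ≤ X ω} ≤ 1 / r ^ 2 := by
  have := prob_le_int (μ := μ) (S := {ω | r ≤ X ω}) (f := fun ω => X ω ^ 2 / r ^ 2)
    (measurableSet_le measurable_const hX) (hi.div_const _) (fun ω => by positivity)
    (fun ω hω => by
      rw [le_div_iff₀ (by positivity), one_mul]
      exact pow_le_pow_left₀ hr.le hω 2)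
  rw [integral_div] at this
  refine this.trans ?_
  exact div_le_div_of_nonneg_right h1 (by positivity)

end

namespace TS
variable {Ω : Type*} [MeasurableSpace Ω] {μ : Measure Ω} [IsProbabilityMeasure μ] {n : ℕ}
  {x : Fin n → Ω → ℝ} {B b : ℝ}

lemma cdf_upper (H : TS μ x B b) (z K ε : ℝ) (hK : ∀ u, z ≤ u → gam u ≤ K)
    (hε : |∫ ω, hsm z (5 * b) (∑ j, x j ω) ∂μ - NN (hsm z (5 * b))| ≤ ε) :
    μ.real {ω | ∑ j, x j ω ≤ z} ≤ Phi z + 0.9975 * K * b + ε := by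
  have hδ : 0 < 5 * b := by linarith [H.b0]
  have T := hsm_TF z (5 * b) hδ
  have bW := H.bS Finset.univ
  have h1 := prob_le_int (μ := μ) (S := {ω | ∑ j, x j ω ≤ z})
    (f := fun ω => hsm z (5 * b) (∑ j, x j ω)) (measurableSet_le bW.1 measurable_const)
    ((bW.cmp T.cont).int μ) (fun ω => T.nn _) (fun ω hω => (hsm_one z _ _ hδ hω).ge)
  have h2 := NN_upper z (5 * b) K hδ hK
  have h3 := (abs_le.1 hε).2
  norm_num at *
  linarith

lemma cdf_lower (H : TS μ x B b) (z K ε : ℝ) (hK : ∀ u, z - 5 * b ≤ u → gam u ≤ K)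
    (hε : |∫ ω, hsm (z - 5 * b) (5 * b) (∑ j, x j ω) ∂μ - NN (hsm (z - 5 * b) (5 * b))| ≤ ε) :
    Phi z - 0.9975 * K * b - ε ≤ μ.real {ω | ∑ j, x j ω < z} := by
  have hδ : 0 < 5 * b := by linarith [H.b0]
  have T := hsm_TF (z - 5 * b) (5 * b) hδ
  have bW := H.bS Finset.univ
  have h1 := int_le_prob (μ := μ) (S := {ω | ∑ j, x j ω < z})
    (f := fun ω => hsm (z - 5 * b) (5 * b) (∑ j, x j ω)) (measurableSet_lt bW.1 measurable_const)
    ((bW.cmp T.cont).int μ) (fun ω => T.le1 _) (fun ω hω => by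
      apply (hsm_zero _ _ _ hδ _).le
      simpa using hω)
  have h2 := NN_lower (z - 5 * b) (5 * b) K hδ hK
  rw [sub_add_cancel] at h2
  have h3 := (abs_le.1 hε).1
  norm_num at *
  linarith

end TS

/-- The hypotheses on the summands, in bundled form. -/
structure XS {Ω : Type*} [MeasureSpace Ω] {n : ℕ} (ξ : Fin n → Ω → ℝ) : Prop where
  meas : ∀ i, Measurable (ξ i)
  ind : iIndepFun ξ ℙ
  L2 : ∀ i, MemLp (ξ i) 2 ℙ
  mean : ∀ i, ∫ ω, ξ i ω = 0
  var : ∑ i, ∫ ω, (ξ i ω) ^ 2 = 1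

/-- One truncated summand. -/
noncomputable def tr (u : ℝ) : ℝ := if |u| ≤ 1 then u else 0

lemma tr_meas : Measurable tr :=
  Measurable.ite (measurableSet_le measurable_abs measurable_const) measurable_id measurable_const

lemma tr_abs (u : ℝ) : |tr u| ≤ 1 := by
  unfold tr; split_ifs with h
  · exact h
  · simp

namespace XS
variable {Ω : Type*} [MeasureSpace Ω] [IsProbabilityMeasure (ℙ : Measure Ω)] {n : ℕ}
  {ξ : Fin n → Ω → ℝ}

lemma neg (X : XS ξ) : XS (fun i ω => - ξ i ω) where
  meas i := (X.meas i).neg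
  ind := X.ind.comp (fun _ u => -u) (fun _ => measurable_neg)
  L2 i := (X.L2 i).neg
  mean i := by rw [integral_neg, X.mean i, neg_zero]
  var := by simpa using X.var

lemma int1 (X : XS ξ) (i) : Integrable (ξ i) := (X.L2 i).integrable (by norm_num)
lemma int2 (X : XS ξ) (i) : Integrable (fun ω => ξ i ω ^ 2) := (X.L2 i).integrable_sq
lemma intb (X : XS ξ) (i) : Integrable (fun ω => if 1 < |ξ i ω| then (ξ i ω) ^ 2 else 0) := by
  have := (X.int2 i).indicator (s := {ω | 1 < |ξ i ω|})
    (measurableSet_lt measurable_const (measurable_abs.comp (X.meas i)))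
  refine this.congr (Filter.Eventually.of_forall fun ω => ?_)
  simp [Set.indicator_apply]

lemma btr (X : XS ξ) (i) : Bd (fun ω => tr (ξ i ω)) :=
  ⟨tr_meas.comp (X.meas i), 1, fun _ => tr_abs _⟩

lemma b3 (X : XS ξ) : beta3 ξ = ∑ i, ∫ ω, |tr (ξ i ω)| ^ 3 := by
  unfold beta3
  apply Finset.sum_congr rfl
  intro i _
  congr 1; funext ω
  unfold tr; split_ifs <;> simp

lemma b2_nonneg (X : XS ξ) : 0 ≤ beta2 ξ := by
  apply Finset.sum_nonneg
  intro i _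
  apply integral_nonneg
  intro ω
  simp only [Pi.zero_apply]
  split_ifs <;> positivity

lemma b3_nonneg (X : XS ξ) : 0 ≤ beta3 ξ := by
  apply Finset.sum_nonneg
  intro i _
  apply integral_nonneg
  intro ω
  simp only [Pi.zero_apply]
  split_ifs <;> positivity

lemma tr_var (X : XS ξ) : ∑ i, ∫ ω, tr (ξ i ω) ^ 2 = 1 - beta2 ξ := by
  unfold beta2
  rw [eq_sub_iff_add_eq, ← Finset.sum_add_distrib]
  refine Eq.trans ?_ X.var
  apply Finset.sum_congr rfl
  intro i _
  rw [← integral_add (((X.btr i).pow 2).int _) (X.intb i)]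
  congr 1; funext ω
  unfold tr
  by_cases h : |ξ i ω| ≤ 1
  · simp [h]
  · simp [h, not_le.1 h]

lemma tr_mean (X : XS ξ) : ∑ i, |∫ ω, tr (ξ i ω)| ≤ beta2 ξ := by
  unfold beta2
  apply Finset.sum_le_sum
  intro i _
  have e : ∫ ω, tr (ξ i ω) = ∫ ω, (tr (ξ i ω) - ξ i ω) := by
    rw [integral_sub ((X.btr i).int _) (X.int1 i), X.mean i, sub_zero]
  rw [e]
  refine abs_integral_le_integral_abs.trans ?_
  apply integral_mono (((X.btr i).int _).sub (X.int1 i)).abs (X.intb i)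
  intro ω
  show |tr (ξ i ω) - ξ i ω| ≤ if 1 < |ξ i ω| then ξ i ω ^ 2 else 0
  unfold tr
  by_cases h : |ξ i ω| ≤ 1
  · simp [h, not_lt.2 h]
  · have h' := not_le.1 h
    simp only [h, h', if_true, if_false]
    rw [zero_sub, abs_neg, ← sq_abs]
    nlinarith

lemma b_pos (X : XS ξ) : 0 < beta2 ξ + beta3 ξ := by
  by_contra hcon
  have h2 := X.b2_nonneg
  have h3 := X.b3_nonneg
  have e2 : beta2 ξ = 0 := by linarith
  have e3 : beta3 ξ = 0 := by linarith
  have hv := X.tr_var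
  rw [X.b3, Finset.sum_eq_zero_iff_of_nonneg
    (fun i _ => integral_nonneg fun ω => by positivity)] at e3
  have : ∑ i, ∫ ω, tr (ξ i ω) ^ 2 = 0 := by
    apply Finset.sum_eq_zero
    intro i hi
    have h := e3 i hi
    rw [integral_eq_zero_iff_of_nonneg (fun ω => by positivity)
      (((X.btr i).abs.pow 3).int _)] at h
    apply integral_eq_zero_of_ae
    filter_upwards [h] with ω hω
    have : tr (ξ i ω) = 0 := by simpa using hω
    simp [this]
  rw [this, e2] at hv
  norm_num at hv

lemma ts (X : XS ξ) (hb : beta2 ξ + beta3 ξ < 2 / 37) :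
    TS (ℙ : Measure Ω) (fun i ω => tr (ξ i ω)) (beta2 ξ) (beta2 ξ + beta3 ξ) where
  meas i := tr_meas.comp (X.meas i)
  ind := X.ind.comp (fun _ => tr) (fun _ => tr_meas)
  bd i ω := tr_abs _
  var := X.tr_var
  mean := X.tr_mean
  B0 := X.b2_nonneg
  third := by rw [X.b3]
  b0 := X.b_pos
  b1 := hb

lemma tail1 (X : XS ξ) : ∑ i, (ℙ : Measure Ω).real {ω | 1 < |ξ i ω|} ≤ beta2 ξ := by
  unfold beta2
  apply Finset.sum_le_sum
  intro i _
  apply prob_le_int (measurableSet_lt measurable_const (measurable_abs.comp (X.meas i))) (X.intb i)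
  · intro ω; split_ifs <;> positivity
  · intro ω hω
    have h : 1 < |ξ i ω| := hω
    simp only [h, if_true]
    rw [← sq_abs]; nlinarith

lemma sum_meas (X : XS ξ) (S : Finset (Fin n)) : Measurable (fun ω => ∑ j ∈ S, ξ j ω) :=
  Finset.measurable_sum S fun i _ => X.meas i

lemma sum_L2 (X : XS ξ) (S : Finset (Fin n)) : MemLp (fun ω => ∑ j ∈ S, ξ j ω) 2 ℙ := by
  have := memLp_finset_sum (μ := (ℙ : Measure Ω)) (p := 2) S (f := ξ) (fun i _ => X.L2 i)
  exact this

lemma sum_mean (X : XS ξ) (S : Finset (Fin n)) : ∫ ω, ∑ j ∈ S, ξ j ω = 0 := by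
  rw [integral_finsetSum _ fun i _ => X.int1 i]
  exact Finset.sum_eq_zero fun i _ => X.mean i

lemma sum_sq (X : XS ξ) (S : Finset (Fin n)) : ∫ ω, (∑ j ∈ S, ξ j ω) ^ 2 ≤ 1 := by
  have h1 := IndepFun.variance_sum (μ := ℙ) (X := ξ) (s := S) (fun i _ => X.L2 i)
    (fun i _ j _ hij => X.ind.indepFun hij)
  have hsum : (∑ j ∈ S, ξ j) = fun ω => ∑ j ∈ S, ξ j ω := by funext ω; simp
  rw [hsum, variance_of_integral_eq_zero (X.sum_meas S).aemeasurable (X.sum_mean S)] at h1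
  have h2 : (∫ ω, (∑ j ∈ S, ξ j ω) ^ 2) = ∑ j ∈ S, ∫ ω, ξ j ω ^ 2 := by
    rw [← Finset.sum_congr rfl fun i _ =>
      variance_of_integral_eq_zero (X.meas i).aemeasurable (X.mean i)]
    exact h1
  rw [h2, ← X.var]
  exact Finset.sum_le_sum_of_subset_of_nonneg (Finset.subset_univ S)
    (fun i _ _ => integral_nonneg fun ω => by positivity)

lemma cantelli (X : XS ξ) (z : ℝ) (hz : 0 ≤ z) :
    (ℙ : Measure Ω).real {ω | z ≤ ∑ j, ξ j ω} ≤ 1 / (1 + z ^ 2) := by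
  have i2 : Integrable (fun ω => (∑ j, ξ j ω) ^ 2) := (X.sum_L2 Finset.univ).integrable_sq
  have i1 : Integrable (fun ω => ∑ j, ξ j ω) := (X.sum_L2 Finset.univ).integrable (by norm_num)
  have e : (fun ω => (z * (∑ j, ξ j ω) + 1) ^ 2 / (1 + z ^ 2) ^ 2) =
      fun ω => (z ^ 2 * (∑ j, ξ j ω) ^ 2 + (2 * z * (∑ j, ξ j ω) + 1)) / (1 + z ^ 2) ^ 2 := by
    funext ω; ring
  have i3 : Integrable (fun ω => 2 * z * (∑ j, ξ j ω) + 1) :=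
    (i1.const_mul _).add (integrable_const 1)
  have ii : Integrable (fun ω => z ^ 2 * (∑ j, ξ j ω) ^ 2 + (2 * z * (∑ j, ξ j ω) + 1)) :=
    (i2.const_mul _).add ((i1.const_mul _).add (integrable_const 1))
  have h := prob_le_int (μ := ℙ) (S := {ω | z ≤ ∑ j, ξ j ω})
    (f := fun ω => (z * (∑ j, ξ j ω) + 1) ^ 2 / (1 + z ^ 2) ^ 2)
    (measurableSet_le measurable_const (X.sum_meas Finset.univ))
    (by rw [e]; exact ii.div_const _) (fun ω => by positivity) (fun ω hω => by
      have hω' : z ≤ ∑ j, ξ j ω := hω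
      rw [le_div_iff₀ (by positivity), one_mul]
      apply pow_le_pow_left₀ (by positivity)
      nlinarith)
  refine h.trans ?_
  rw [e, integral_div, integral_add (i2.const_mul _) i3,
    integral_add (i1.const_mul _) (integrable_const 1), integral_const_mul, integral_const_mul,
    X.sum_mean Finset.univ]
  simp only [integral_const, probReal_univ, one_smul]
  rw [div_le_div_iff₀ (by positivity) (by positivity)]
  have := mul_le_mul_of_nonneg_left (X.sum_sq Finset.univ) (sq_nonneg z)
  nlinarith [sq_nonneg z]

end XS


open MeasureTheory ProbabilityTheory Real

lemma union_bound {Ω : Type*} [MeasurableSpace Ω] {μ : Measure Ω} [IsProbabilityMeasure μ] {n : ℕ}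
    {S T : Set Ω} {A : Fin n → Set Ω} (h : ∀ ω ∈ S, ω ∈ T ∨ ∃ i, ω ∈ A i) :
    μ.real S ≤ μ.real T + ∑ i, μ.real (A i) := by
  have h1 : S ⊆ T ∪ ⋃ i, A i := by
    intro ω hω
    rcases h ω hω with h | ⟨i, h⟩
    · exact Or.inl h
    · exact Or.inr (Set.mem_iUnion.2 ⟨i, h⟩)
  refine (measureReal_mono h1).trans ((measureReal_union_le _ _).trans ?_)
  gcongr
  exact measureReal_iUnion_fintype_le _

lemma gam_anti {c u : ℝ} (hc : 0 ≤ c) (hu : c ≤ u) : gam u ≤ exp (-(c ^ 2 / 2)) := by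
  unfold gam
  apply Real.exp_le_exp.2
  nlinarith

lemma gam_far {c u : ℝ} (hc : 19 ≤ c) (hu : c ≤ u) : gam u ≤ 1 / c ^ 2 := by
  refine (gam_anti (by linarith) hu).trans ?_
  refine (Real.exp_le_exp.2 (?_ : -(c ^ 2 / 2) ≤ -(3 * c ^ 2 / 8))).trans ?_
  · nlinarith
  refine (exp_small hc).trans ?_
  rw [div_le_div_iff₀ (by positivity) (by positivity)]
  have h1 : 0 < c ^ 2 := by positivity
  have h2 : 361 ≤ c ^ 2 := by nlinarith
  nlinarith

namespace XS
variable {Ω : Type*} [MeasureSpace Ω] [IsProbabilityMeasure (ℙ : Measure Ω)] {n : ℕ}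
  {ξ : Fin n → Ω → ℝ}

lemma prod_prob (X : XS ξ) (i : Fin n) (g : ℝ → ℝ) (hg : Measurable g) (r : ℝ) :
    (ℙ : Measure Ω).real {ω | 1 < |ξ i ω| ∧ r ≤ ∑ j ∈ Finset.univ.erase i, g (ξ j ω)} =
      (ℙ : Measure Ω).real {ω | 1 < |ξ i ω|} *
      (ℙ : Measure Ω).real {ω | r ≤ ∑ j ∈ Finset.univ.erase i, g (ξ j ω)} := by
  have h := X.ind.indepFun_finset {i} (Finset.univ.erase i) (by simp) X.meas
  have m1 : Measurable (fun v : ({i} : Finset (Fin n)) → ℝ =>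
      v ⟨i, Finset.mem_singleton_self i⟩) := measurable_pi_apply _
  have m2 : Measurable (fun v : ((Finset.univ.erase i : Finset (Fin n)) : Type) → ℝ => ∑ j, g (v j)) :=
    Finset.measurable_sum _ fun j _ => hg.comp (measurable_pi_apply j)
  have h2 := h.comp m1 m2
  have h3 := h2.measure_inter_preimage_eq_mul {u | 1 < |u|} {u | r ≤ u}
    (measurableSet_lt measurable_const measurable_abs)
    (measurableSet_le measurable_const measurable_id)
  have e : ∀ ω, (∑ j : (Finset.univ.erase i : Finset (Fin n)), g (ξ j ω)) =
      ∑ j ∈ Finset.univ.erase i, g (ξ j ω) := fun ω =>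
    Finset.sum_coe_sort (Finset.univ.erase i) (fun j => g (ξ j ω))
  have h4 := congrArg ENNReal.toReal h3
  rw [ENNReal.toReal_mul] at h4
  simp only [← e]
  exact h4

lemma prod_le (X : XS ξ) (g : ℝ → ℝ) (hg : Measurable g) (r : ℝ) (hr : 0 < r)
    (hi : ∀ i, Integrable (fun ω => (∑ j ∈ Finset.univ.erase i, g (ξ j ω)) ^ 2))
    (h1 : ∀ i, ∫ ω, (∑ j ∈ Finset.univ.erase i, g (ξ j ω)) ^ 2 ≤ 1) :
    ∑ i, (ℙ : Measure Ω).real {ω | 1 < |ξ i ω| ∧ r ≤ ∑ j ∈ Finset.univ.erase i, g (ξ j ω)} ≤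
      (beta2 ξ + beta3 ξ) * (1 / r ^ 2) := by
  have hb : ∑ i, (ℙ : Measure Ω).real {ω | 1 < |ξ i ω|} ≤ beta2 ξ + beta3 ξ := by
    linarith [X.tail1, X.b3_nonneg]
  refine le_trans ?_ (mul_le_mul_of_nonneg_right hb (by positivity))
  rw [Finset.sum_mul]
  apply Finset.sum_le_sum
  intro i _
  rw [X.prod_prob i g hg]
  apply mul_le_mul_of_nonneg_left _ measureReal_nonneg
  exact markov2 (Finset.measurable_sum _ fun j _ => hg.comp (X.meas j)) (hi i) (h1 i) hr

lemma tr_eq {ω : Ω} (h : ∀ i, ¬ 1 < |ξ i ω|) : ∑ i, tr (ξ i ω) = ∑ i, ξ i ω := by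
  apply Finset.sum_congr rfl
  intro i _
  simp [tr, not_lt.1 (h i)]

lemma trunc_upper (X : XS ξ) (z : ℝ) : (ℙ : Measure Ω).real {ω | ∑ i, ξ i ω ≤ z} ≤
    (ℙ : Measure Ω).real {ω | ∑ i, tr (ξ i ω) ≤ z} +
      ∑ i, (ℙ : Measure Ω).real {ω | 1 < |ξ i ω|} := by
  apply union_bound
  intro ω hω
  by_contra hcon
  push Not at hcon
  have := tr_eq (ξ := ξ) (ω := ω) (fun i hi => hcon.2 i hi)
  apply hcon.1
  show ∑ i, tr (ξ i ω) ≤ z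
  rw [this]; exact hω

lemma trunc_lower (X : XS ξ) (z : ℝ) : (ℙ : Measure Ω).real {ω | ∑ i, tr (ξ i ω) < z} ≤
    (ℙ : Measure Ω).real {ω | ∑ i, ξ i ω < z} +
      ∑ i, (ℙ : Measure Ω).real {ω | 1 < |ξ i ω|} := by
  apply union_bound
  intro ω hω
  by_contra hcon
  push Not at hcon
  have := tr_eq (ξ := ξ) (ω := ω) (fun i hi => hcon.2 i hi)
  apply hcon.1
  show ∑ i, ξ i ω < z
  rw [← this]; exact hω

lemma trunc_upper' (X : XS ξ) (z : ℝ) : (ℙ : Measure Ω).real {ω | ∑ i, ξ i ω ≤ z} ≤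
    (ℙ : Measure Ω).real {ω | ∑ i, tr (ξ i ω) ≤ z} +
      ∑ i, (ℙ : Measure Ω).real
        {ω | 1 < |ξ i ω| ∧ z ≤ ∑ j ∈ Finset.univ.erase i, tr (ξ j ω)} := by
  apply union_bound
  intro ω hω
  by_cases h : ∑ i, tr (ξ i ω) ≤ z
  · exact Or.inl h
  right
  by_contra hcon
  push Not at hcon
  apply h
  rw [tr_eq]
  · exact hω
  intro i hi
  apply hcon i
  refine ⟨hi, ?_⟩
  have h0 : tr (ξ i ω) = 0 := by simp [tr, not_le.2 hi]
  have := Finset.add_sum_erase Finset.univ (fun j => tr (ξ j ω)) (Finset.mem_univ i)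
  simp only [h0, zero_add] at this
  rw [this]
  exact (not_le.1 h).le

lemma trunc_lower' (X : XS ξ) (z : ℝ) : (ℙ : Measure Ω).real {ω | ∑ i, tr (ξ i ω) < z} ≤
    (ℙ : Measure Ω).real {ω | ∑ i, ξ i ω < z} +
      (∑ i, (ℙ : Measure Ω).real {ω | z / 4 < |ξ i ω|} +
       ∑ i, (ℙ : Measure Ω).real
        {ω | 1 < |ξ i ω| ∧ 3 * z / 4 ≤ ∑ j ∈ Finset.univ.erase i, ξ j ω}) := by
  rw [← Finset.sum_add_distrib]
  refine (union_bound (T := {ω | ∑ i, ξ i ω < z}) (A := fun i => {ω | z / 4 < |ξ i ω|} ∪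
    {ω | 1 < |ξ i ω| ∧ 3 * z / 4 ≤ ∑ j ∈ Finset.univ.erase i, ξ j ω}) ?_).trans ?_
  · intro ω hω
    by_cases h : ∑ i, ξ i ω < z
    · exact Or.inl h
    right
    by_contra hcon
    push Not at hcon
    apply h
    rw [← tr_eq]
    · exact hω
    intro i hi
    apply hcon i
    by_cases h4 : z / 4 < |ξ i ω|
    · exact Or.inl h4
    right
    refine ⟨hi, ?_⟩
    have := Finset.add_sum_erase Finset.univ (fun j => ξ j ω) (Finset.mem_univ i)
    have h5 := le_abs_self (ξ i ω)
    linarith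
  · gcongr
    exact measureReal_union_le _ _

/-- Both one-sided bounds. -/
def Bnds (ξ : Fin n → Ω → ℝ) (z R : ℝ) : Prop :=
  (ℙ : Measure Ω).real {ω | ∑ i, ξ i ω ≤ z} ≤ Phi z + R ∧
    Phi z - R ≤ (ℙ : Measure Ω).real {ω | ∑ i, ξ i ω < z}

lemma key_big (X : XS ξ) (z : ℝ) (hz : 0 ≤ z) (R : ℝ) (hR : 2 * ((1 + z) ^ 2)⁻¹ ≤ R) :
    Bnds ξ z R := by
  have h1 : 1 / (1 + z ^ 2) ≤ R := by
    refine le_trans ?_ hR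
    rw [← div_eq_mul_inv, div_le_div_iff₀ (by positivity) (by positivity)]
    nlinarith [sq_nonneg (z - 1)]
  have hc := X.cantelli z hz
  have ht := Phi_tail z hz
  have hp := Phi_le_one z
  constructor
  · have : (ℙ : Measure Ω).real {ω | ∑ i, ξ i ω ≤ z} ≤ 1 := measureReal_le_one
    linarith
  · have e : {ω | ∑ i, ξ i ω < z} = {ω | z ≤ ∑ i, ξ i ω}ᶜ := by ext ω; simp
    rw [e, probReal_compl_eq_one_sub
      (measurableSet_le measurable_const (X.sum_meas Finset.univ))]
    linarith

lemma key_small (X : XS ξ) (hb : beta2 ξ + beta3 ξ < 2 / 37) (z : ℝ) (hz : 0 ≤ z) (hz2 : z ≤ 2)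
    (R : ℝ) (hR : ∑ i, (ℙ : Measure Ω).real {ω | 1 < |ξ i ω|} +
      37 * ((1 + z) ^ 2)⁻¹ * (beta2 ξ + beta3 ξ) ≤ R) : Bnds ξ z R := by
  have H := X.ts hb
  have hb0 := X.b_pos
  obtain ⟨K, hK, hK2⟩ : ∃ K : ℝ, (∀ u, z - 5 * (beta2 ξ + beta3 ξ) ≤ u → gam u ≤ K) ∧
      3.58 + 0.9975 * K ≤ 37 * ((1 + z) ^ 2)⁻¹ := by
    rcases le_total z 1.75 with h | h
    · refine ⟨1, fun u _ => gam_le_one u, ?_⟩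
      rw [← div_eq_mul_inv, le_div_iff₀ (by positivity)]
      nlinarith
    · refine ⟨0.37, fun u hu => ?_, ?_⟩
      · refine (gam_anti (c := 1.4797) (by norm_num) (by linarith)).trans ?_
        refine (Real.exp_le_exp.2 (by norm_num : -((1.4797 : ℝ) ^ 2 / 2) ≤ -1)).trans ?_
        have := Real.exp_neg_one_lt_d9
        linarith
      · rw [← div_eq_mul_inv, le_div_iff₀ (by positivity)]
        nlinarith
  have hu := H.cdf_upper z K _ (fun u hu => hK u (by linarith)) (H.main_unif z)
  have hl := H.cdf_lower z K _ hK (H.main_unif _)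
  have h1 := X.trunc_upper z
  have h2 := X.trunc_lower z
  have h3 := mul_le_mul_of_nonneg_right hK2 hb0.le
  constructor <;> linarith

lemma key_mid (X : XS ξ) (hb : beta2 ξ + beta3 ξ < 2 / 37) (z : ℝ) (hz : 0 ≤ z) (hz2 : z ≤ 20)
    (R : ℝ) (hR : 25431 * ((1 + z) ^ 2)⁻¹ * (beta2 ξ + beta3 ξ) ≤ R) : Bnds ξ z R := by
  have H := X.ts hb
  have hb0 := X.b_pos
  have hb3 := X.b3_nonneg
  have hK2 : 3.58 + 0.9975 * 1 + 1 ≤ 25431 * ((1 + z) ^ 2)⁻¹ := by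
    rw [← div_eq_mul_inv, le_div_iff₀ (by positivity)]
    nlinarith
  have hu := H.cdf_upper z 1 _ (fun u _ => gam_le_one u) (H.main_unif z)
  have hl := H.cdf_lower z 1 _ (fun u _ => gam_le_one u) (H.main_unif _)
  have h1 := X.trunc_upper z
  have h2 := X.trunc_lower z
  have h4 := X.tail1
  have h3 := mul_le_mul_of_nonneg_right hK2 hb0.le
  constructor <;> linarith

lemma key_far (X : XS ξ) (hb : beta2 ξ + beta3 ξ < 2 / 37) (z : ℝ) (hz : 20 ≤ z)
    (R : ℝ) (hR : ∑ i, (ℙ : Measure Ω).real {ω | z / 4 < |ξ i ω|} +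
      25431 * ((1 + z) ^ 2)⁻¹ * (beta2 ξ + beta3 ξ) ≤ R) : Bnds ξ z R := by
  have H := X.ts hb
  have hb0 := X.b_pos
  have hL : 0 ≤ ∑ i, (ℙ : Measure Ω).real {ω | z / 4 < |ξ i ω|} :=
    Finset.sum_nonneg fun i _ => measureReal_nonneg
  have hq : ∀ c, 0.98 * z ≤ c → 1 / c ^ 2 ≤ 1.2 * ((1 + z) ^ 2)⁻¹ := by
    intro c hc
    have : 0 < c := by linarith
    rw [← div_eq_mul_inv, div_le_div_iff₀ (by positivity) (by positivity)]
    have : (1 + z) ^ 2 ≤ (1.05 * z) ^ 2 := pow_le_pow_left₀ (by linarith) (by linarith) 2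
    have : (0.98 * z) ^ 2 ≤ c ^ 2 := pow_le_pow_left₀ (by linarith) (by linarith) 2
    nlinarith
  set q := ((1 + z) ^ 2)⁻¹ with hqd
  have hq0 : 0 ≤ q := by positivity
  set β := beta2 ξ + beta3 ξ with hβ
  have hqb : 0 ≤ q * β := by positivity
  constructor
  · have hu := H.cdf_upper z (1 / z ^ 2) _ (fun u hu => gam_far (by linarith) hu)
      (H.main_tail z (by linarith))
    have h1 := X.trunc_upper' z
    have h2 := X.prod_le tr tr_meas z (by linarith)
      (fun i => ((H.bS (Finset.univ.erase i)).pow 2).int _) (fun i => H.m2 _)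
    have h3 := mul_le_mul_of_nonneg_right (hq z (by linarith)) hb0.le
    have e : 2200 / z ^ 2 * β = 2200 * (1 / z ^ 2 * β) := by ring
    have e2 : β * (1 / z ^ 2) = 1 / z ^ 2 * β := by ring
    have e3 : 0.9975 * (1 / z ^ 2) * β = 0.9975 * (1 / z ^ 2 * β) := by ring
    rw [e, e3] at hu
    rw [e2] at h2
    have h5 : 0 ≤ 1 / z ^ 2 * β := by positivity
    linarith
  · have hc : 0.98 * z ≤ z - 5 * β := by linarith
    have hc19 : 19 ≤ z - 5 * β := by linarith
    have hl := H.cdf_lower z (1 / (z - 5 * β) ^ 2) _ (fun u hu => gam_far hc19 hu)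
      (H.main_tail _ hc19)
    have h1 := X.trunc_lower' z
    have h2 := X.prod_le (fun u => u) measurable_id (3 * z / 4) (by linarith)
      (fun i => (X.sum_L2 _).integrable_sq) (fun i => X.sum_sq _)
    have h3 := mul_le_mul_of_nonneg_right (hq _ hc) hb0.le
    have h4 := mul_le_mul_of_nonneg_right (hq z (by linarith)) hb0.le
    have e : 2200 / (z - 5 * β) ^ 2 * β = 2200 * (1 / (z - 5 * β) ^ 2 * β) := by ring
    have e2 : β * (1 / (3 * z / 4) ^ 2) = 16 / 9 * (1 / z ^ 2 * β) := by
      have : z ≠ 0 := by linarith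
      field_simp
      norm_num
    have e3 : 0.9975 * (1 / (z - 5 * β) ^ 2) * β = 0.9975 * (1 / (z - 5 * β) ^ 2 * β) := by ring
    rw [e, e3] at hl
    rw [e2] at h2
    linarith

lemma key (X : XS ξ) (z : ℝ) (hz : 0 ≤ z) :
    Bnds ξ z (2 * ∑ i, (ℙ : Measure Ω).real {ω | max 1 |z| / 4 < |ξ i ω|}
        + (if 1 ≤ beta2 ξ + beta3 ξ then (15 : ℝ)
           else if |z| ≤ 2 then 37 else 25431)
          * ((1 + |z|) ^ 2)⁻¹ * (beta2 ξ + beta3 ξ)) := by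
  rw [abs_of_nonneg hz]
  have hL : 0 ≤ ∑ i, (ℙ : Measure Ω).real {ω | max 1 z / 4 < |ξ i ω|} :=
    Finset.sum_nonneg fun i _ => measureReal_nonneg
  have hq0 : 0 ≤ ((1 + z) ^ 2)⁻¹ := by positivity
  have hb0 := X.b_pos
  by_cases hb1 : 1 ≤ beta2 ξ + beta3 ξ
  · simp only [hb1, if_true]
    apply X.key_big z hz
    nlinarith
  simp only [hb1, if_false]
  by_cases hb : beta2 ξ + beta3 ξ < 2 / 37
  · split_ifs with h2
    · apply X.key_small hb z hz h2
      have : ∑ i, (ℙ : Measure Ω).real {ω | 1 < |ξ i ω|} ≤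
          ∑ i, (ℙ : Measure Ω).real {ω | max 1 z / 4 < |ξ i ω|} := by
        apply Finset.sum_le_sum
        intro i _
        refine measureReal_mono (fun ω hω => ?_)
        have h5 : 1 < |ξ i ω| := hω
        have : max 1 z ≤ 2 := max_le (by norm_num) h2
        show max 1 z / 4 < |ξ i ω|
        linarith
      linarith
    · rcases le_total z 20 with h | h
      · apply X.key_mid hb z hz h
        linarith
      · apply X.key_far hb z h
        have e : max 1 z = z := max_eq_right (by linarith)
        rw [e] at hL ⊢
        linarith
  · apply X.key_big z hz
    have hb' := not_lt.1 hb
    split_ifs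
    · nlinarith
    · nlinarith

end XS

theorem nonuniform_berry_esseen
    {Ω : Type*} [MeasureSpace Ω] [IsProbabilityMeasure (ℙ : Measure Ω)]
    {n : ℕ} (ξ : Fin n → Ω → ℝ)
    (hmeas : ∀ i, Measurable (ξ i))
    (hindep : iIndepFun ξ ℙ)
    (hL2 : ∀ i, MemLp (ξ i) 2 ℙ)
    (hmean : ∀ i, ∫ ω, ξ i ω = 0)
    (hvar : ∑ i, ∫ ω, (ξ i ω) ^ 2 = 1)
    (z : ℝ) :
    |(ℙ {ω | ∑ i, ξ i ω ≤ z}).toReal - Phi z|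
      ≤ 2 * ∑ i, (ℙ {ω | max 1 |z| / 4 < |ξ i ω|}).toReal
        + (if 1 ≤ beta2 ξ + beta3 ξ then (15 : ℝ)
           else if |z| ≤ 2 then 37 else 25431)
          * ((1 + |z|) ^ 2)⁻¹ * (beta2 ξ + beta3 ξ) := by
  have X : XS ξ := ⟨hmeas, hindep, hL2, hmean, hvar⟩
  simp only [← measureReal_def]
  rcases le_total 0 z with hz | hz
  · obtain ⟨h1, h2⟩ := X.key z hz
    have h3 : (ℙ : Measure Ω).real {ω | ∑ i, ξ i ω < z} ≤
        (ℙ : Measure Ω).real {ω | ∑ i, ξ i ω ≤ z} :=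
      measureReal_mono fun ω (hω : _ < z) => hω.le
    rw [abs_le]
    constructor <;> linarith
  · obtain ⟨h1, h2⟩ := X.neg.key (-z) (by linarith)
    have e2 : beta2 (fun i ω => - ξ i ω) = beta2 ξ := by simp [beta2]
    have e3 : beta3 (fun i ω => - ξ i ω) = beta3 ξ := by simp [beta3]
    simp only [e2, e3, abs_neg, Finset.sum_neg_distrib, neg_le_neg_iff, neg_lt_neg_iff] at h1 h2
    rw [Phi_neg] at h1 h2
    have m1 : MeasurableSet {ω | ∑ i, ξ i ω ≤ z} :=
      measurableSet_le (X.sum_meas Finset.univ) measurable_const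
    have c1 : (ℙ : Measure Ω).real {ω | z < ∑ i, ξ i ω} =
        1 - (ℙ : Measure Ω).real {ω | ∑ i, ξ i ω ≤ z} := by
      rw [← probReal_compl_eq_one_sub m1]
      congr 1
      ext ω
      simp
    have h3 : (ℙ : Measure Ω).real {ω | z < ∑ i, ξ i ω} ≤
        (ℙ : Measure Ω).real {ω | z ≤ ∑ i, ξ i ω} :=
      measureReal_mono fun ω (hω : z < _) => hω.le
    rw [abs_le]
    constructor <;> linarith
end

section
/- For μ > 0, σ > 0, n ≥ 1 and t > 0, let I = |Φ((nμ − t)/(σ√n)) − Φ((nμ − t)√μ/(σ√t))|. Then I ≤ (√2/(e√π)) · σ/√(tμ) if t ≤ nμ, and I ≤ (16/(e²√(2π))) · t²σ³ / (n^{1/2} μ² (t − nμ)² (√(nμt) + t)) if t > nμ. -/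
open MeasureTheory ProbabilityTheory Real

theorem phi_diff (a b C : ℝ) (hab : a ≤ b) (hC : ∀ u, a ≤ u → u ≤ b → Real.exp (-u ^ 2 / 2) ≤ C) :
    |Phi a - Phi b| ≤ (Real.sqrt (2 * Real.pi))⁻¹ * (C * (b - a)) := by
  have hint : Integrable (fun u : ℝ => Real.exp (-u ^ 2 / 2)) := by
    have := integrable_exp_neg_mul_sq (b := (1 / 2 : ℝ)) (by norm_num)
    refine this.congr (Filter.Eventually.of_forall fun u => ?_)
    simp only
    congr 1
    ring
  have h1 := intervalIntegral.integral_Iic_sub_Iic (μ := volume)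
    (hint.integrableOn (s := Set.Iic a)) (hint.integrableOn (s := Set.Iic b))
  have h2 : ‖∫ u in a..b, Real.exp (-u ^ 2 / 2)‖ ≤ C * |b - a| := by
    apply intervalIntegral.norm_integral_le_of_norm_le_const
    intro u hu
    rw [Set.uIoc_of_le hab] at hu
    rw [Real.norm_eq_abs, abs_of_pos (Real.exp_pos _)]
    exact hC u hu.1.le hu.2
  rw [abs_of_nonneg (sub_nonneg.2 hab), Real.norm_eq_abs] at h2
  unfold Phi
  rw [← mul_sub, abs_mul, abs_of_nonneg (by positivity), abs_sub_comm, h1]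
  gcongr

theorem e_one (y : ℝ) : Real.exp (-y / 2) * y ≤ 2 / Real.exp 1 := by
  have h := Real.add_one_le_exp (y / 2 - 1)
  have h3 : Real.exp (-y / 2) * Real.exp (y / 2 - 1) = 1 / Real.exp 1 := by
    rw [← Real.exp_add, one_div, ← Real.exp_neg]; congr 1; ring
  have h4 := mul_le_mul_of_nonneg_left h (Real.exp_pos (-y / 2)).le
  rw [h3] at h4
  have : 2 / Real.exp 1 = 2 * (1 / Real.exp 1) := by ring
  rw [this]
  linarith

theorem e_two (y : ℝ) (hy : 0 ≤ y) : Real.exp (-y / 2) * y ^ 2 ≤ 16 / Real.exp 1 ^ 2 := by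
  have h := e_one (y / 2)
  have h0 : 0 ≤ Real.exp (-(y / 2) / 2) * (y / 2) := by positivity
  have h2 := pow_le_pow_left₀ h0 h 2
  have h3 : Real.exp (-(y / 2) / 2) ^ 2 = Real.exp (-y / 2) := by
    rw [sq, ← Real.exp_add]; congr 1; ring
  rw [mul_pow, h3] at h2
  have : 16 / Real.exp 1 ^ 2 = 4 * (2 / Real.exp 1) ^ 2 := by ring
  rw [this]
  nlinarith

/-- Smoothness bound for the standard normal c.d.f. (Lemma 2.4). -/
theorem normal_cdf_difference_bound
    (μ σ t : ℝ) (hμ : 0 < μ) (hσ : 0 < σ) (ht : 0 < t) (n : ℕ) (hn : 1 ≤ n) :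
    (t ≤ n * μ →
      |Phi ((n * μ - t) / (σ * Real.sqrt n))
          - Phi ((n * μ - t) * Real.sqrt μ / (σ * Real.sqrt t))|
        ≤ Real.sqrt 2 / (Real.exp 1 * Real.sqrt Real.pi) * (σ / Real.sqrt (t * μ)))
    ∧ (n * μ < t →
      |Phi ((n * μ - t) / (σ * Real.sqrt n))
          - Phi ((n * μ - t) * Real.sqrt μ / (σ * Real.sqrt t))|
        ≤ 16 / (Real.exp 1 ^ 2 * Real.sqrt (2 * Real.pi))
            * (t ^ 2 * σ ^ 3
              / (Real.sqrt n * μ ^ 2 * (t - n * μ) ^ 2 * (Real.sqrt (n * μ * t) + t)))) := by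
  have hn0 : (0 : ℝ) < n := by exact_mod_cast hn
  obtain ⟨s, hs, hsn⟩ : ∃ s : ℝ, 0 < s ∧ (n : ℝ) = s ^ 2 :=
    ⟨√n, Real.sqrt_pos.2 hn0, (Real.sq_sqrt hn0.le).symm⟩
  obtain ⟨m, hm, rfl⟩ : ∃ s : ℝ, 0 < s ∧ μ = s ^ 2 :=
    ⟨√μ, Real.sqrt_pos.2 hμ, (Real.sq_sqrt hμ.le).symm⟩
  obtain ⟨r, hr, rfl⟩ : ∃ s : ℝ, 0 < s ∧ t = s ^ 2 :=
    ⟨√t, Real.sqrt_pos.2 ht, (Real.sq_sqrt ht.le).symm⟩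
  have q1 : √(r ^ 2 * m ^ 2) = r * m := by
    rw [← mul_pow, Real.sqrt_sq (by positivity)]
  have q2 : √(s ^ 2 * m ^ 2 * r ^ 2) = s * m * r := by
    rw [← mul_pow, ← mul_pow, Real.sqrt_sq (by positivity)]
  rw [hsn, q1, q2, Real.sqrt_sq hs.le, Real.sqrt_sq hm.le, Real.sqrt_sq hr.le]
  have hpi := Real.pi_pos
  have hdiff : (s ^ 2 * m ^ 2 - r ^ 2) * m / (σ * r) - (s ^ 2 * m ^ 2 - r ^ 2) / (σ * s)
      = (s * m - r) ^ 2 * (s * m + r) / (σ * r * s) := by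
    field_simp
    ring
  have hab : (s ^ 2 * m ^ 2 - r ^ 2) / (σ * s) ≤ (s ^ 2 * m ^ 2 - r ^ 2) * m / (σ * r) := by
    rw [← sub_nonneg, hdiff]; positivity
  constructor
  · intro h
    have ha0 : 0 ≤ (s ^ 2 * m ^ 2 - r ^ 2) / (σ * s) :=
      div_nonneg (by linarith) (by positivity)
    refine (phi_diff _ _ (Real.exp (-((s ^ 2 * m ^ 2 - r ^ 2) / (σ * s)) ^ 2 / 2)) hab ?_).trans ?_
    · intro u hu _
      apply Real.exp_le_exp.2
      have := pow_le_pow_left₀ ha0 hu 2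
      linarith
    · rw [hdiff]
      have e1 := e_one (((s ^ 2 * m ^ 2 - r ^ 2) / (σ * s)) ^ 2)
      have hle : (s * m - r) ^ 2 * (s * m + r) / (σ * r * s)
          ≤ ((s ^ 2 * m ^ 2 - r ^ 2) / (σ * s)) ^ 2 * (σ / (r * m)) := by
        have : ((s ^ 2 * m ^ 2 - r ^ 2) / (σ * s)) ^ 2 * (σ / (r * m))
          - (s * m - r) ^ 2 * (s * m + r) / (σ * r * s)
          = (s * m - r) ^ 2 * (s * m + r) * r / (σ * r * s ^ 2 * m) := by
          field_simp
          ring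
        rw [← sub_nonneg, this]; positivity
      have hc : √2 / (Real.exp 1 * √π) = (√(2 * π))⁻¹ * (2 / Real.exp 1) := by
        rw [Real.sqrt_mul (by norm_num)]
        have h2 : √2 * √2 = 2 := Real.mul_self_sqrt (by norm_num)
        field_simp
        linarith
      rw [hc, mul_assoc (√(2 * π))⁻¹]
      gcongr _ * ?_
      calc _ ≤ _ := mul_le_mul_of_nonneg_left hle (Real.exp_pos _).le
        _ = _ := (mul_assoc _ _ _).symm
        _ ≤ _ := mul_le_mul_of_nonneg_right e1 (by positivity)
  · intro h
    have hd : 0 < r ^ 2 - s ^ 2 * m ^ 2 := by linarith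
    have hb0 : (s ^ 2 * m ^ 2 - r ^ 2) * m / (σ * r) ≤ 0 :=
      div_nonpos_of_nonpos_of_nonneg (by nlinarith) (by positivity)
    refine (phi_diff _ _ (Real.exp (-((s ^ 2 * m ^ 2 - r ^ 2) * m / (σ * r)) ^ 2 / 2)) hab ?_).trans ?_
    · intro u _ hu
      apply Real.exp_le_exp.2
      nlinarith
    · rw [hdiff]
      have e2 := e_two (((s ^ 2 * m ^ 2 - r ^ 2) * m / (σ * r)) ^ 2) (sq_nonneg _)
      have hrs : 0 < r - s * m := by
        by_contra hcon
        nlinarith [mul_pos hs hm]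
      have heq : (s * m - r) ^ 2 * (s * m + r) / (σ * r * s)
          = (((s ^ 2 * m ^ 2 - r ^ 2) * m / (σ * r)) ^ 2) ^ 2 * ((r ^ 2) ^ 2 * σ ^ 3
            / (s * (m ^ 2) ^ 2 * (r ^ 2 - s ^ 2 * m ^ 2) ^ 2 * (s * m * r + r ^ 2))) := by
        have f1 : r ^ 2 - s ^ 2 * m ^ 2 = (r - s * m) * (r + s * m) := by ring
        have f2 : s ^ 2 * m ^ 2 - r ^ 2 = -((r - s * m) * (r + s * m)) := by ring
        have f3 : s * m * r + r ^ 2 = r * (r + s * m) := by ring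
        have f4 : s * m - r = -(r - s * m) := by ring
        have f5 : s * m + r = r + s * m := by ring
        rw [f1, f2, f3, f4, f5]
        have : 0 < r + s * m := by positivity
        generalize r - s * m = x at *
        generalize r + s * m = y at *
        field_simp
      have hc : 16 / (Real.exp 1 ^ 2 * √(2 * π)) = (√(2 * π))⁻¹ * (16 / Real.exp 1 ^ 2) := by
        field_simp
      rw [hc, mul_assoc (√(2 * π))⁻¹, heq, ← mul_assoc (Real.exp _)]
      gcongr
end

section
/- For every z > 2, every i ∈ {1, …, n} and all real s ≤ t ≤ 1, E[(W̄⁽ⁱ⁾ + t) f_z(W̄⁽ⁱ⁾ + t) − (W̄⁽ⁱ⁾ + s) f_z(W̄⁽ⁱ⁾ + s)] ≤ (25.8 + 20 e^{e² − 2}/√(2π)) · e^{−z/2} · min(1, |s| + |t|). -/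
open MeasureTheory ProbabilityTheory Real

noncomputable def QQ (v : ℝ) : ℝ := ∫ u in Set.Ioi v, Real.exp (-u ^ 2 / 2)
noncomputable def GG (v : ℝ) : ℝ := ∫ u in Set.Iic v, Real.exp (-u ^ 2 / 2)

lemma gint : Integrable (fun u : ℝ => Real.exp (-u ^ 2 / 2)) := by
  have := integrable_exp_neg_mul_sq (b := 1/2) (by norm_num)
  refine this.congr (Filter.Eventually.of_forall fun u => ?_)
  simp only; congr 1; ring

lemma GG_add_QQ (v : ℝ) : GG v + QQ v = Real.sqrt (2 * Real.pi) := by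
  have h1 := integral_gaussian (1/2)
  have h2 := intervalIntegral.integral_Iic_add_Ioi (b := v) gint.integrableOn gint.integrableOn
  unfold GG QQ
  rw [h2]
  have : (fun u : ℝ => Real.exp (-u ^ 2 / 2)) = fun u : ℝ => Real.exp (-(1/2) * u ^ 2) := by
    ext u; congr 1; ring
  rw [this, h1]; congr 1; ring

lemma GG_neg (v : ℝ) : GG v = QQ (-v) := by
  unfold GG QQ
  have h := integral_comp_neg_Ioi (-v) (fun u : ℝ => Real.exp (-u ^ 2 / 2))
  simpa using h.symm

lemma QQ_nonneg (v : ℝ) : 0 ≤ QQ v := by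
  unfold QQ; positivity

lemma GG_nonneg (v : ℝ) : 0 ≤ GG v := by
  unfold GG; positivity

lemma sq2pi_pos : 0 < Real.sqrt (2 * Real.pi) := by positivity

lemma sq2pi_ge : 1 ≤ Real.sqrt (2 * Real.pi) := by
  rw [Real.one_le_sqrt]; linarith [Real.pi_gt_three]

lemma sq2pi_le : Real.sqrt (2 * Real.pi) ≤ 3 := by
  rw [Real.sqrt_le_left (by norm_num)]; linarith [Real.pi_lt_four]

lemma mills (v : ℝ) : v * QQ v ≤ Real.exp (-v ^ 2 / 2) := by
  rcases le_or_gt v 0 with hv | hv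
  · exact (mul_nonpos_of_nonpos_of_nonneg hv (QQ_nonneg v)).trans (Real.exp_pos _).le
  have hd : ∀ x ∈ Set.Ici v, HasDerivAt (fun u : ℝ => -Real.exp (-u ^ 2 / 2))
      (x * Real.exp (-x ^ 2 / 2)) x := by
    intro x _
    have h := ((((hasDerivAt_id x).pow 2).neg.div_const 2).exp).neg
    refine (h.congr_deriv ?_)
    simp; ring
  have ht : Filter.Tendsto (fun u : ℝ => -Real.exp (-u ^ 2 / 2)) Filter.atTop (nhds 0) := by
    rw [← neg_zero]
    refine Filter.Tendsto.neg (Real.tendsto_exp_atBot.comp ?_)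
    have : Filter.Tendsto (fun u : ℝ => u ^ 2 * (-1/2)) Filter.atTop Filter.atBot :=
      (Filter.tendsto_pow_atTop (by norm_num)).atTop_mul_const_of_neg (by norm_num)
    refine this.congr fun u => by ring
  have hp : ∀ x ∈ Set.Ioi v, 0 ≤ x * Real.exp (-x ^ 2 / 2) := fun x hx =>
    mul_nonneg (hv.le.trans (le_of_lt hx)) (Real.exp_pos _).le
  have hi := MeasureTheory.integrableOn_Ioi_deriv_of_nonneg' hd hp ht
  have he := MeasureTheory.integral_Ioi_of_hasDerivAt_of_nonneg' hd hp ht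
  have : v * QQ v = ∫ u in Set.Ioi v, v * Real.exp (-u ^ 2 / 2) := by
    unfold QQ; rw [integral_const_mul]
  rw [this]
  calc _ ≤ ∫ u in Set.Ioi v, u * Real.exp (-u ^ 2 / 2) := by
        refine setIntegral_mono_on (gint.integrableOn.const_mul v) hi measurableSet_Ioi ?_
        intro x hx
        exact mul_le_mul_of_nonneg_right (le_of_lt hx) (Real.exp_pos _).le
    _ = _ := by rw [he]; ring

lemma hasDerivAt_GG (w : ℝ) : HasDerivAt GG (Real.exp (-w ^ 2 / 2)) w := by
  have hc : Continuous (fun u : ℝ => Real.exp (-u ^ 2 / 2)) := by fun_prop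
  have h := intervalIntegral.integral_hasDerivAt_right (hc.intervalIntegrable 0 w)
    (hc.stronglyMeasurableAtFilter _ _) hc.continuousAt
  have h2 := h.const_add (GG 0)
  refine h2.congr_of_eventuallyEq (Filter.Eventually.of_forall fun x => ?_)
  simp only [GG]
  rw [← intervalIntegral.integral_Iic_sub_Iic gint.integrableOn gint.integrableOn]; ring

lemma hasDerivAt_QQ (w : ℝ) : HasDerivAt QQ (-Real.exp (-w ^ 2 / 2)) w := by
  have h := (hasDerivAt_GG w).const_sub (Real.sqrt (2 * Real.pi))
  refine h.congr_of_eventuallyEq (Filter.Eventually.of_forall fun x => ?_)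
  simp only; linarith [GG_add_QQ x]

lemma Phi_eq_s3 (w : ℝ) : Phi w = GG w / Real.sqrt (2 * Real.pi) := by
  unfold Phi GG; field_simp

lemma one_sub_Phi (w : ℝ) : 1 - Phi w = QQ w / Real.sqrt (2 * Real.pi) := by
  rw [Phi_eq_s3, eq_div_iff sq2pi_pos.ne']
  have := sq2pi_pos.ne'
  field_simp; linarith [GG_add_QQ w]

noncomputable def gl (z w : ℝ) : ℝ := w * Real.exp (w ^ 2 / 2) * GG w * (QQ z / Real.sqrt (2 * Real.pi))
noncomputable def gr (z w : ℝ) : ℝ := w * Real.exp (w ^ 2 / 2) * QQ w * (GG z / Real.sqrt (2 * Real.pi))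

lemma g_left {z w : ℝ} (h : w ≤ z) : w * fz z w = gl z w := by
  unfold fz gl; rw [if_pos h, one_sub_Phi, Phi_eq_s3]
  have := sq2pi_pos.ne'
  field_simp

lemma g_right {z w : ℝ} (h : z ≤ w) : w * fz z w = gr z w := by
  rcases h.eq_or_lt with rfl | h
  · rw [g_left le_rfl]; unfold gl gr; ring
  unfold fz gr; rw [if_neg (not_le.2 h), one_sub_Phi, Phi_eq_s3]
  have := sq2pi_pos.ne'
  field_simp

lemma ee (w : ℝ) : Real.exp (w ^ 2 / 2) * Real.exp (-w ^ 2 / 2) = 1 := by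
  rw [← Real.exp_add, ← Real.exp_zero]; congr 1; ring

lemma hasDerivAt_gl (z w : ℝ) : HasDerivAt (gl z)
    (((1 + w ^ 2) * Real.exp (w ^ 2 / 2) * GG w + w) * (QQ z / Real.sqrt (2 * Real.pi))) w := by
  have h := (((hasDerivAt_id w).mul (((hasDerivAt_id w).pow 2).div_const 2).exp).mul
    (hasDerivAt_GG w)).mul_const (QQ z / Real.sqrt (2 * Real.pi))
  refine h.congr_deriv ?_
  simp
  left
  linear_combination w * ee w

lemma hasDerivAt_gr (z w : ℝ) : HasDerivAt (gr z)
    (((1 + w ^ 2) * Real.exp (w ^ 2 / 2) * QQ w - w) * (GG z / Real.sqrt (2 * Real.pi))) w := by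
  have h := (((hasDerivAt_id w).mul (((hasDerivAt_id w).pow 2).div_const 2).exp).mul
    (hasDerivAt_QQ w)).mul_const (GG z / Real.sqrt (2 * Real.pi))
  refine h.congr_deriv ?_
  simp
  left
  linear_combination (-w) * ee w

lemma mills' (v : ℝ) : v * (Real.exp (v ^ 2 / 2) * QQ v) ≤ 1 := by
  have := mul_le_mul_of_nonneg_left (mills v) (Real.exp_pos (v ^ 2 / 2)).le
  rw [ee] at this; linarith

lemma frac_le (z : ℝ) : GG z / Real.sqrt (2 * Real.pi) ≤ 1 := by
  rw [div_le_one sq2pi_pos]; linarith [GG_add_QQ z, QQ_nonneg z]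

lemma QQ_le {z : ℝ} (hz : 2 < z) : z * (QQ z / Real.sqrt (2 * Real.pi)) ≤ Real.exp (-z ^ 2 / 2) := by
  refine le_trans ?_ (mills z)
  refine mul_le_mul_of_nonneg_left (div_le_self (QQ_nonneg z) sq2pi_ge) (by linarith)

lemma exp_cmp {z w : ℝ} (hz : 2 < z) (h0 : 0 ≤ w) (h : w ≤ z) :
    Real.exp (-z ^ 2 / 2) * Real.exp (w ^ 2 / 2) ≤ Real.exp (w - z) := by
  rw [← Real.exp_add]; apply Real.exp_le_exp.2; nlinarith

/-- derivative bound on the left -/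
lemma dl_bound {z w : ℝ} (hz : 2 < z) (h : w ≤ z) :
    ((1 + w ^ 2) * Real.exp (w ^ 2 / 2) * GG w + w) * (QQ z / Real.sqrt (2 * Real.pi))
     ≤ Real.exp (-z / 2) * (8 * Real.exp w + 9) := by
  have hq := QQ_le hz
  have hs := sq2pi_pos
  set q := QQ z / Real.sqrt (2 * Real.pi) with hqd
  have hq0 : 0 ≤ q := div_nonneg (QQ_nonneg z) hs.le
  have hq1 : 2 * q ≤ Real.exp (-z ^ 2 / 2) := by nlinarith
  have hG0 := GG_nonneg w
  have hG : GG w ≤ 3 := by linarith [GG_add_QQ w, QQ_nonneg w, sq2pi_le]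
  have hez : Real.exp (-z ^ 2 / 2) ≤ Real.exp (-z / 2) := by
    apply Real.exp_le_exp.2; nlinarith
  rcases le_or_gt w 0 with hw | hw
  · have key : (1 + w ^ 2) * Real.exp (w ^ 2 / 2) * GG w + w ≤ 12 := by
      rcases le_or_gt w (-1) with h1 | h1
      · have m := mills' (-w)
        rw [← GG_neg, neg_sq] at m
        set y := Real.exp (w ^ 2 / 2) * GG w
        have hy : 0 ≤ y := by positivity
        nlinarith
      · have : Real.exp (w ^ 2 / 2) ≤ 2 := by
          have : Real.exp (w ^ 2 / 2) ≤ Real.exp (1/2) := by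
            apply Real.exp_le_exp.2; nlinarith
          have h2 : Real.exp (1/2) * Real.exp (1/2) = Real.exp 1 := by
            rw [← Real.exp_add]; norm_num
          have := Real.exp_one_lt_d9
          nlinarith [Real.exp_pos (1/2)]
        have hw2 : w ^ 2 ≤ 1 := by nlinarith
        have : (1 + w ^ 2) * Real.exp (w ^ 2 / 2) * GG w ≤ 2 * 2 * 3 := by gcongr; linarith
        linarith
    calc _ ≤ 12 * q := mul_le_mul_of_nonneg_right key hq0
      _ ≤ Real.exp (-z / 2) * 9 := by linarith [Real.exp_pos (-z/2)]
      _ ≤ _ := by gcongr; linarith [Real.exp_pos w]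
  · have c1 := exp_cmp hz hw.le h
    have c2 : Real.exp (-z ^ 2 / 2) ≤ Real.exp (w - z) := by
      apply Real.exp_le_exp.2; nlinarith
    have hQ : q * GG w ≤ Real.exp (-z ^ 2 / 2) := by
      have e1 : q * GG w = QQ z * (GG w / Real.sqrt (2 * Real.pi)) := by rw [hqd]; ring
      have e2 := mul_le_mul_of_nonneg_left (frac_le w) (QQ_nonneg z)
      have e3 := mills z
      nlinarith [QQ_nonneg z]
    have hsplit : Real.exp (w - z) = Real.exp (-z/2) * Real.exp w * Real.exp (-z/2) := by
      rw [← Real.exp_add, ← Real.exp_add]; congr 1; ring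
    have hz2 : (1 + z + z ^ 2) * Real.exp (-z/2) ≤ 8 := by
      have := Real.quadratic_le_exp_of_nonneg (x := z/2) (by linarith)
      have h1 : Real.exp (z/2) * Real.exp (-z/2) = 1 := by
        rw [← Real.exp_add, ← Real.exp_zero]; congr 1; ring
      have : 1 + z + z ^ 2 ≤ 8 * Real.exp (z/2) := by nlinarith
      nlinarith [Real.exp_pos (-z/2)]
    calc _ = (1 + w ^ 2) * (Real.exp (w ^ 2 / 2) * (q * GG w)) + w * q := by ring
      _ ≤ (1 + z ^ 2) * Real.exp (w - z) + z * Real.exp (w - z) := by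
          have a1 : Real.exp (w ^ 2 / 2) * (q * GG w) ≤ Real.exp (w - z) := by
            refine le_trans ?_ c1
            rw [mul_comm]; gcongr
          have a0 : 0 ≤ Real.exp (w ^ 2 / 2) * (q * GG w) := by positivity
          have : q ≤ Real.exp (w - z) := by linarith
          gcongr
      _ = Real.exp (-z/2) * Real.exp w * ((1 + z + z ^ 2) * Real.exp (-z/2)) := by
          rw [hsplit]; ring
      _ ≤ Real.exp (-z/2) * Real.exp w * 8 := by gcongr
      _ ≤ _ := by nlinarith [Real.exp_pos (-z/2)]

lemma dr_bound {z w : ℝ} (hz : 2 < z) (h : z ≤ w) :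
    ((1 + w ^ 2) * Real.exp (w ^ 2 / 2) * QQ w - w) * (GG z / Real.sqrt (2 * Real.pi))
     ≤ Real.exp (-z / 2) * (8 * Real.exp w + 9) := by
  have m := mills' w
  have hy : 0 ≤ Real.exp (w ^ 2 / 2) * QQ w := mul_nonneg (Real.exp_pos _).le (QQ_nonneg w)
  have h1 : (1 + w ^ 2) * Real.exp (w ^ 2 / 2) * QQ w - w ≤ 1 := by
    set y := Real.exp (w ^ 2 / 2) * QQ w
    nlinarith
  have hf := frac_le z
  have hf0 : 0 ≤ GG z / Real.sqrt (2 * Real.pi) := div_nonneg (GG_nonneg z) sq2pi_pos.le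
  have : 1 ≤ Real.exp (-z / 2) * Real.exp w := by
    rw [← Real.exp_add]; apply Real.one_le_exp; linarith
  have := Real.exp_pos (-z/2)
  calc _ ≤ 1 * (GG z / Real.sqrt (2 * Real.pi)) := mul_le_mul_of_nonneg_right h1 hf0
    _ ≤ _ := by nlinarith

noncomputable def MM (z w : ℝ) : ℝ := Real.exp (-z / 2) * (8 * Real.exp w + 9 * w)

lemma hasDerivAt_MM (z w : ℝ) : HasDerivAt (MM z) (Real.exp (-z / 2) * (8 * Real.exp w + 9)) w := by
  have h := (((Real.hasDerivAt_exp w).const_mul 8).add ((hasDerivAt_id w).const_mul 9)).const_mul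
    (Real.exp (-z / 2))
  refine h.congr_deriv ?_
  simp

lemma mono_l {z : ℝ} (hz : 2 < z) : MonotoneOn (fun w => MM z w - gl z w) (Set.Iic z) := by
  have hd := fun w => (hasDerivAt_MM z w).sub (hasDerivAt_gl z w)
  refine monotoneOn_of_deriv_nonneg (convex_Iic z)
    (fun w _ => (hd w).continuousAt.continuousWithinAt)
    (fun w _ => (hd w).differentiableAt.differentiableWithinAt) ?_
  intro w hw
  rw [interior_Iic] at hw
  have := dl_bound hz (le_of_lt hw)
  change 0 ≤ deriv (MM z - gl z) w
  rw [(hd w).deriv]; linarith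

lemma mono_r {z : ℝ} (hz : 2 < z) : MonotoneOn (fun w => MM z w - gr z w) (Set.Ici z) := by
  have hd := fun w => (hasDerivAt_MM z w).sub (hasDerivAt_gr z w)
  refine monotoneOn_of_deriv_nonneg (convex_Ici z)
    (fun w _ => (hd w).continuousAt.continuousWithinAt)
    (fun w _ => (hd w).differentiableAt.differentiableWithinAt) ?_
  intro w hw
  rw [interior_Ici] at hw
  have := dr_bound hz (le_of_lt hw)
  change 0 ≤ deriv (MM z - gr z) w
  rw [(hd w).deriv]; linarith

lemma mono_all {z : ℝ} (hz : 2 < z) : Monotone (fun w => MM z w - w * fz z w) := by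
  refine MonotoneOn.Iic_union_Ici (a := z) ?_ ?_
  · refine (mono_l hz).congr fun w hw => ?_
    simp only [g_left hw]
  · refine (mono_r hz).congr fun w hw => ?_
    simp only [g_right hw]

lemma g_upper {z : ℝ} (hz : 2 < z) (b : ℝ) : b * fz z b ≤ Real.exp (-z/2) * Real.exp b := by
  have hs := sq2pi_pos
  have hq0 : 0 ≤ QQ z / Real.sqrt (2 * Real.pi) := div_nonneg (QQ_nonneg z) hs.le
  rcases le_or_gt b z with h | h
  · rw [g_left h]; unfold gl
    rcases le_or_gt b 0 with h0 | h0
    · have : b * (Real.exp (b ^ 2 / 2) * GG b * (QQ z / Real.sqrt (2 * Real.pi))) ≤ 0 :=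
        mul_nonpos_of_nonpos_of_nonneg h0
          (mul_nonneg (mul_nonneg (Real.exp_pos _).le (GG_nonneg b)) hq0)
      have := mul_pos (Real.exp_pos (-z/2)) (Real.exp_pos b)
      linarith
    · have hm := mills z
      have hf := frac_le b
      have hf0 : 0 ≤ GG b / Real.sqrt (2 * Real.pi) := div_nonneg (GG_nonneg b) hs.le
      have hQ := QQ_nonneg z
      calc _ = Real.exp (b ^ 2 / 2) * (b * QQ z * (GG b / Real.sqrt (2 * Real.pi))) := by ring
        _ ≤ Real.exp (b ^ 2 / 2) * (z * QQ z * 1) := by gcongr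
        _ ≤ Real.exp (b ^ 2 / 2) * Real.exp (-z ^ 2 / 2) := by gcongr; linarith
        _ ≤ Real.exp (b - z) := by rw [mul_comm]; exact exp_cmp hz h0.le h
        _ ≤ _ := by rw [← Real.exp_add]; apply Real.exp_le_exp.2; linarith
  · rw [g_right h.le]; unfold gr
    have m := mills' b
    have : 1 ≤ Real.exp (-z / 2) * Real.exp b := by
      rw [← Real.exp_add]; apply Real.one_le_exp; linarith
    have hf := frac_le z
    have hf0 : 0 ≤ GG z / Real.sqrt (2 * Real.pi) := div_nonneg (GG_nonneg z) hs.le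
    calc _ = b * (Real.exp (b ^ 2 / 2) * QQ b) * (GG z / Real.sqrt (2 * Real.pi)) := by ring
      _ ≤ 1 * 1 := mul_le_mul m hf hf0 (by norm_num)
      _ ≤ _ := by linarith

lemma g_lower {z : ℝ} (hz : 2 < z) (a : ℝ) : -(a * fz z a) ≤ Real.exp (-z/2) := by
  have hs := sq2pi_pos
  have hq0 : 0 ≤ QQ z / Real.sqrt (2 * Real.pi) := div_nonneg (QQ_nonneg z) hs.le
  have hf0 : 0 ≤ GG z / Real.sqrt (2 * Real.pi) := div_nonneg (GG_nonneg z) hs.le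
  have hE := Real.exp_pos (-z/2)
  rcases le_or_gt a z with h | h
  · rw [g_left h]; unfold gl
    rcases le_or_gt a 0 with h0 | h0
    · have m := mills' (-a)
      rw [← GG_neg, neg_sq] at m
      have hez : Real.exp (-z ^ 2 / 2) ≤ Real.exp (-z / 2) := by
        apply Real.exp_le_exp.2; nlinarith
      have hq := QQ_le hz
      calc _ = -a * (Real.exp (a ^ 2 / 2) * GG a) * (QQ z / Real.sqrt (2 * Real.pi)) := by ring
        _ ≤ 1 * (QQ z / Real.sqrt (2 * Real.pi)) := mul_le_mul_of_nonneg_right m hq0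
        _ ≤ _ := by nlinarith
    · have := GG_nonneg a
      have : 0 ≤ a * Real.exp (a ^ 2 / 2) * GG a * (QQ z / Real.sqrt (2 * Real.pi)) := by positivity
      linarith
  · rw [g_right h.le]; unfold gr
    have := QQ_nonneg a
    have ha : 0 < a := by linarith
    have : 0 ≤ a * Real.exp (a ^ 2 / 2) * QQ a * (GG z / Real.sqrt (2 * Real.pi)) := by positivity
    linarith

lemma g_diff_s3 {z : ℝ} (hz : 2 < z) {a b : ℝ} (hab : a ≤ b) :
    b * fz z b - a * fz z a ≤ Real.exp (-z/2) * (8 * Real.exp b + 9) * min 1 (b - a) := by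
  have hE := Real.exp_pos (-z/2)
  have hb := Real.exp_pos b
  rcases min_choice 1 (b - a) with h | h <;> rw [h]
  · have := g_upper hz b
    have := g_lower hz a
    nlinarith
  · have := mono_all hz hab
    simp only [MM] at this
    have h2 : Real.exp b - Real.exp a ≤ Real.exp b * (b - a) := by
      have h3 : Real.exp a = Real.exp b * Real.exp (a - b) := by
        rw [← Real.exp_add]; congr 1; ring
      have := Real.add_one_le_exp (a - b)
      rw [h3]; nlinarith
    have h4 := mul_le_mul_of_nonneg_left h2 hE.le
    nlinarith

lemma exp_le_quad {x : ℝ} (hx : x ≤ 1) : Real.exp x ≤ 1 + x + x ^ 2 := by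
  rcases le_or_gt (-1) x with h | h
  · have := Real.abs_exp_sub_one_sub_id_le (x := x) (abs_le.2 ⟨h, hx⟩)
    linarith [(abs_le.1 this).2]
  · have : Real.exp x ≤ 1 := Real.exp_le_one_iff.2 (by linarith)
    nlinarith

lemma const_bound : 8 * Real.exp 1 ^ 2 + 9 ≤
    25.8 + 20 * Real.exp (Real.exp 1 ^ 2 - 2) / Real.sqrt (2 * Real.pi) := by
  have h1 := Real.exp_one_lt_d9
  have h2 := Real.exp_one_gt_d9
  have h3 : 5 ≤ Real.exp 1 ^ 2 - 2 := by nlinarith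
  have h4 := Real.quadratic_le_exp_of_nonneg (x := Real.exp 1 ^ 2 - 2) (by linarith)
  have h5 : 18 ≤ Real.exp (Real.exp 1 ^ 2 - 2) := by nlinarith
  have h6 : 20 * 18 / 3 ≤ 20 * Real.exp (Real.exp 1 ^ 2 - 2) / Real.sqrt (2 * Real.pi) := by
    gcongr; exact sq2pi_le
  nlinarith

lemma mgf_bound {Ω : Type*} [MeasureSpace Ω] [IsProbabilityMeasure (ℙ : Measure Ω)]
    {n : ℕ} (ξ : Fin n → Ω → ℝ)
    (hmeas : ∀ i, Measurable (ξ i))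
    (hindep : iIndepFun ξ ℙ)
    (hL2 : ∀ i, MemLp (ξ i) 2 ℙ)
    (hmean : ∀ i, ∫ ω, ξ i ω = 0)
    (hvar : ∑ i, ∫ ω, (ξ i ω) ^ 2 = 1) (i : Fin n) :
    Integrable (fun ω => Real.exp (Wbari ξ i ω)) ∧ ∫ ω, Real.exp (Wbari ξ i ω) ≤ Real.exp 1 := by
  let φ : ℝ → ℝ := fun x => if x ≤ 1 then x else 0
  have hφ : Measurable φ := Measurable.ite measurableSet_Iic measurable_id measurable_const
  have hxm : ∀ j, Measurable (xbar ξ j) := fun j => hφ.comp (hmeas j)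
  have hx1 : ∀ j ω, xbar ξ j ω ≤ 1 := by
    intro j ω; unfold xbar; split_ifs with h <;> linarith
  have hx2 : ∀ j ω, xbar ξ j ω ≤ ξ j ω := by
    intro j ω; unfold xbar; split_ifs with h <;> linarith
  have hx3 : ∀ j ω, xbar ξ j ω ^ 2 ≤ ξ j ω ^ 2 := by
    intro j ω; unfold xbar; split_ifs with h
    · exact le_rfl
    · simp; positivity
  have hind : iIndepFun (fun j => xbar ξ j) ℙ := hindep.comp (fun _ => φ) (fun _ => hφ)
  have hW : ∀ ω, Wbari ξ i ω = (∑ j ∈ Finset.univ.erase i, xbar ξ j) ω := by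
    intro ω
    rw [Finset.sum_apply, Finset.sum_erase_eq_sub (Finset.mem_univ i)]; rfl
  have hbd : ∀ j, ∫ ω, Real.exp (xbar ξ j ω) ≤ Real.exp (∫ ω, ξ j ω ^ 2) := by
    intro j
    have i1 : Integrable (ξ j) := (hL2 j).integrable (by norm_num)
    have i2 : Integrable (fun ω => ξ j ω ^ 2) := (hL2 j).integrable_sq
    have ie : Integrable (fun ω => Real.exp (xbar ξ j ω)) := by
      refine Integrable.of_bound ((hxm j).exp.aestronglyMeasurable) (Real.exp 1)
        (Filter.Eventually.of_forall fun ω => ?_)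
      rw [Real.norm_eq_abs, Real.abs_exp]
      exact Real.exp_le_exp.2 (hx1 j ω)
    calc _ ≤ ∫ ω, (1 + ξ j ω + ξ j ω ^ 2) := by
          refine integral_mono ie (((integrable_const 1).add i1).add i2) fun ω => ?_
          have := exp_le_quad (hx1 j ω)
          have := hx2 j ω
          have := hx3 j ω
          simp only; linarith
      _ = 1 + ∫ ω, ξ j ω ^ 2 := by
          have i3 : Integrable (fun ω => 1 + ξ j ω) := (integrable_const 1).add i1
          rw [integral_add i3 i2,
            integral_add (integrable_const 1) i1, hmean j]; simp
      _ ≤ _ := by linarith [Real.add_one_le_exp (∫ ω, ξ j ω ^ 2)]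
  constructor
  · refine Integrable.of_bound (C := Real.exp (n : ℝ)) ?_ (Filter.Eventually.of_forall fun ω => ?_)
    · refine Measurable.aestronglyMeasurable (Measurable.exp ?_)
      unfold Wbari Wbar
      exact (Finset.measurable_sum _ fun j _ => hxm j).sub (hxm i)
    · rw [Real.norm_eq_abs, Real.abs_exp]
      apply Real.exp_le_exp.2
      rw [hW, Finset.sum_apply]
      calc _ ≤ ∑ j ∈ Finset.univ.erase i, (1 : ℝ) := Finset.sum_le_sum fun j _ => hx1 j ω
        _ ≤ ∑ j : Fin n, (1 : ℝ) := Finset.sum_le_sum_of_subset_of_nonneg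
            (Finset.erase_subset _ _) (fun _ _ _ => by norm_num)
        _ = n := by simp
  · have hm := hind.mgf_sum (t := 1) (fun j => (hxm j)) (Finset.univ.erase i)
    simp only [mgf, one_mul] at hm
    simp only [hW]
    rw [hm]
    calc _ ≤ ∏ j ∈ Finset.univ.erase i, Real.exp (∫ ω, ξ j ω ^ 2) :=
          Finset.prod_le_prod (fun j _ => integral_nonneg fun ω => (Real.exp_pos _).le)
            fun j _ => hbd j
      _ = Real.exp (∑ j ∈ Finset.univ.erase i, ∫ ω, ξ j ω ^ 2) := (Real.exp_sum _ _).symm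
      _ ≤ Real.exp 1 := by
          apply Real.exp_le_exp.2
          rw [← hvar]
          exact Finset.sum_le_sum_of_subset_of_nonneg (Finset.erase_subset _ _)
            (fun _ _ _ => integral_nonneg fun ω => sq_nonneg _)

/-- Lemma 8.4 with explicit constants (Lemma 4.1). -/
theorem lemma84_explicit
    {Ω : Type*} [MeasureSpace Ω] [IsProbabilityMeasure (ℙ : Measure Ω)]
    {n : ℕ} (ξ : Fin n → Ω → ℝ)
    (hmeas : ∀ i, Measurable (ξ i))
    (hindep : iIndepFun ξ ℙ)
    (hL2 : ∀ i, MemLp (ξ i) 2 ℙ)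
    (hmean : ∀ i, ∫ ω, ξ i ω = 0)
    (hvar : ∑ i, ∫ ω, (ξ i ω) ^ 2 = 1)
    (z : ℝ) (hz : 2 < z) (i : Fin n) (s t : ℝ) (hst : s ≤ t) (ht1 : t ≤ 1) :
    (∫ ω, ((Wbari ξ i ω + t) * fz z (Wbari ξ i ω + t)
        - (Wbari ξ i ω + s) * fz z (Wbari ξ i ω + s)))
      ≤ (25.8 + 20 * Real.exp (Real.exp 1 ^ 2 - 2) / Real.sqrt (2 * Real.pi))
          * Real.exp (-z / 2) * min 1 (|s| + |t|) := by
  obtain ⟨hI, hB⟩ := mgf_bound ξ hmeas hindep hL2 hmean hvar i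
  have hE := Real.exp_pos (-z/2)
  have hm0 : 0 ≤ min 1 (|s| + |t|) := le_min zero_le_one (by positivity)
  have hc := const_bound
  have hRHS : Real.exp (-z/2) * (8 * Real.exp 1 ^ 2 + 9) * min 1 (|s| + |t|) ≤
      (25.8 + 20 * Real.exp (Real.exp 1 ^ 2 - 2) / Real.sqrt (2 * Real.pi))
          * Real.exp (-z / 2) * min 1 (|s| + |t|) := by
    rw [mul_comm (Real.exp (-z/2))]; gcongr
  refine le_trans ?_ hRHS
  by_cases hInteg : Integrable (fun ω => ((Wbari ξ i ω + t) * fz z (Wbari ξ i ω + t)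
        - (Wbari ξ i ω + s) * fz z (Wbari ξ i ω + s)))
  swap
  · rw [integral_undef hInteg]; positivity
  have hI2 : Integrable (fun ω => Real.exp (-z/2) *
      (8 * (Real.exp 1 * Real.exp (Wbari ξ i ω)) + 9) * min 1 (|s| + |t|)) :=
    ((((hI.const_mul _).const_mul _).add (integrable_const _)).const_mul _).mul_const _
  calc _ ≤ ∫ ω, Real.exp (-z/2) *
      (8 * (Real.exp 1 * Real.exp (Wbari ξ i ω)) + 9) * min 1 (|s| + |t|) := by
        refine integral_mono hInteg hI2 fun ω => ?_
        refine (g_diff_s3 hz (by linarith : Wbari ξ i ω + s ≤ Wbari ξ i ω + t)).trans ?_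
        have h1 : Real.exp (Wbari ξ i ω + t) ≤ Real.exp 1 * Real.exp (Wbari ξ i ω) := by
          rw [← Real.exp_add]; apply Real.exp_le_exp.2; linarith
        have h2 : Wbari ξ i ω + t - (Wbari ξ i ω + s) ≤ |s| + |t| := by
          linarith [neg_abs_le s, le_abs_self t]
        have h3 : (0:ℝ) ≤ min 1 (Wbari ξ i ω + t - (Wbari ξ i ω + s)) :=
          le_min zero_le_one (by linarith)
        gcongr
    _ = Real.exp (-z/2) * (8 * (Real.exp 1 * ∫ ω, Real.exp (Wbari ξ i ω)) + 9)
          * min 1 (|s| + |t|) := by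
        rw [integral_mul_const, integral_const_mul,
          integral_add ((hI.const_mul _).const_mul _) (integrable_const _),
          integral_const_mul, integral_const_mul]
        simp
    _ ≤ _ := by
        rw [sq]; gcongr
end
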